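/- Spatial Hölder continuity with L¹ initial data (Theorem 1.3, inequality (1.11)): For every real μ ≥ 1 there exist constants C > 0 and β ∈ (0,1) such that the following holds: for every choice of continuous ν, a : ℝ → ℝ with 1/μ ≤ ν(x) ≤ μ and 1/μ ≤ a(x) ≤ μ for all x, every real W ≥ 0, every corrector T, every fundamental solution P of the canonical equation, and every p₀ ∈ L¹(ℝ) ∩ L∞(ℝ), the function p(t,x) := ∫_ℝ ν(y)P(t,x,y)p₀(y)dy satisfies |p(t,x) − p(t,x')| ≤ (C/t^{(1+β)/2})·‖p₀‖_{L¹(ℝ)}·|x − x'|^β for all t > 0 and all x, x' ∈ ℝ. -/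

import Mathlib

open MeasureTheory Filter

/-- Two-sided ellipticity bounds `1/μ ≤ f ≤ μ`. -/
def Elliptic (μ : ℝ) (f : ℝ → ℝ) : Prop := ∀ x : ℝ, 1 / μ ≤ f x ∧ f x ≤ μ

/-- A classical solution of the canonical equation
`ν(x)∂ₜp − ∂ₓ(ν(x)a(x)∂ₓp) + W∂ₓp = 0` for every time `t ∈ s` and every `x ∈ ℝ`. -/
def IsCanonicalSolOn (ν a : ℝ → ℝ) (W : ℝ) (u : ℝ → ℝ → ℝ) (s : Set ℝ) : Prop :=
  ∃ ut ux q : ℝ → ℝ → ℝ, ∀ t ∈ s, ∀ x : ℝ,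
    HasDerivAt (fun τ => u τ x) (ut t x) t ∧
    HasDerivAt (fun ξ => u t ξ) (ux t x) x ∧
    HasDerivAt (fun ξ => ν ξ * a ξ * ux t ξ) (q t x) x ∧
    ν x * ut t x - q t x + W * ux t x = 0

/-- A corrector: `T(0) = 0`, `−(aνT')' + WT' = Wν` and `1/μ⁵ ≤ T' ≤ μ⁵`. -/
def IsCorrector (μ : ℝ) (ν a : ℝ → ℝ) (W : ℝ) (T : ℝ → ℝ) : Prop :=
  T 0 = 0 ∧ ∃ T' : ℝ → ℝ,
    (∀ x, HasDerivAt T (T' x) x) ∧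
    (∀ x, HasDerivAt (fun y => a y * ν y * T' y) (W * T' x - W * ν x) x) ∧
    (∀ x, 1 / μ ^ 5 ≤ T' x ∧ T' x ≤ μ ^ 5)

/-- An adjoint corrector: `T̃(0) = 0`, `(aνT̃')' + WT̃' = Wν` and `1/μ⁵ ≤ T̃' ≤ μ⁵`. -/
def IsAdjointCorrector (μ : ℝ) (ν a : ℝ → ℝ) (W : ℝ) (T : ℝ → ℝ) : Prop :=
  T 0 = 0 ∧ ∃ T' : ℝ → ℝ,
    (∀ x, HasDerivAt T (T' x) x) ∧
    (∀ x, HasDerivAt (fun y => a y * ν y * T' y) (W * ν x - W * T' x) x) ∧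
    (∀ x, 1 / μ ^ 5 ≤ T' x ∧ T' x ≤ μ ^ 5)

/-- A fundamental solution of the canonical equation. -/
def IsFundSol (ν a : ℝ → ℝ) (W : ℝ) (P : ℝ → ℝ → ℝ → ℝ) : Prop :=
  (∀ y : ℝ, IsCanonicalSolOn ν a W (fun t x => P t x y) (Set.Ioi 0)) ∧
  (∀ y : ℝ, ∀ t : ℝ, 0 < t → ∀ x : ℝ, 0 ≤ P t x y) ∧
  (∀ y : ℝ, ∀ t : ℝ, 0 < t → ∫ x : ℝ, ν x * P t x y = 1) ∧
  (∀ y : ℝ, ∀ φ : ℝ → ℝ, Continuous φ → (∃ B : ℝ, ∀ x, |φ x| ≤ B) →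
    Tendsto (fun t => ∫ x : ℝ, ν x * P t x y * φ x)
      (nhdsWithin 0 (Set.Ioi 0)) (nhds (φ y))) ∧
  (∀ s t : ℝ, 0 < s → 0 < t → ∀ x y : ℝ,
    P (t + s) x y = ∫ z : ℝ, ν z * P t x z * P s z y)


open scoped Topology

noncomputable def scl (κ : ℝ → ℝ) (x : ℝ) : ℝ := ∫ z in (0:ℝ)..x, 1 / κ z

lemma scl_hasDeriv {κ : ℝ → ℝ} (hκ : Continuous κ) (hp : ∀ x, 0 < κ x) (x : ℝ) :
    HasDerivAt (scl κ) (1 / κ x) x := by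
  have hc : Continuous (fun z => 1 / κ z) := continuous_const.div hκ (fun x => (hp x).ne')
  exact intervalIntegral.integral_hasDerivAt_right (hc.intervalIntegrable _ _)
    hc.stronglyMeasurable.stronglyMeasurableAtFilter hc.continuousAt

lemma scl_continuous {κ : ℝ → ℝ} (hκ : Continuous κ) (hp : ∀ x, 0 < κ x) : Continuous (scl κ) :=
  continuous_iff_continuousAt.2 fun x => (scl_hasDeriv hκ hp x).continuousAt

lemma scl_strictMono {κ : ℝ → ℝ} (hκ : Continuous κ) (hp : ∀ x, 0 < κ x) : StrictMono (scl κ) :=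
  strictMono_of_hasDerivAt_pos (fun x => scl_hasDeriv hκ hp x) (fun x => one_div_pos.2 (hp x))

noncomputable def lamc (κ : ℝ → ℝ) (y1 y2 x : ℝ) : ℝ :=
  (scl κ x - scl κ y1) / (scl κ y2 - scl κ y1)

noncomputable def Lam (κ : ℝ → ℝ) (y1 y2 x : ℝ) (g : ℝ → ℝ) : ℝ :=
  (1 - lamc κ y1 y2 x) * g y1 + lamc κ y1 y2 x * g y2 - g x

noncomputable def grn (κ : ℝ → ℝ) (y1 y2 x z : ℝ) : ℝ :=
  lamc κ y1 y2 x * (scl κ y2 - scl κ z) - max (scl κ x - scl κ z) 0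

noncomputable def Thf (κ : ℝ → ℝ) (y1 y2 x : ℝ) (f : ℝ → ℝ) : ℝ :=
  ∫ z in y1..y2, grn κ y1 y2 x z * f z

noncomputable def Zf (κ : ℝ → ℝ) (y1 : ℝ) (f : ℝ → ℝ) (x : ℝ) : ℝ :=
  scl κ x * (∫ z in y1..x, f z) - ∫ z in y1..x, scl κ z * f z

lemma grn_continuous {κ : ℝ → ℝ} (hκ : Continuous κ) (hp : ∀ x, 0 < κ x) (y1 y2 x : ℝ) :
    Continuous (grn κ y1 y2 x) := by
  have := scl_continuous hκ hp
  unfold grn; fun_prop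

lemma lamc_mem {κ : ℝ → ℝ} (hκ : Continuous κ) (hp : ∀ x, 0 < κ x) {y1 y2 x : ℝ} (h : y1 < y2)
    (hx : x ∈ Set.Icc y1 y2) : 0 ≤ lamc κ y1 y2 x ∧ lamc κ y1 y2 x ≤ 1 := by
  have hm := scl_strictMono hκ hp
  have h1 := hm h
  have h2 := hm.monotone hx.1
  have h3 := hm.monotone hx.2
  unfold lamc
  constructor
  · apply div_nonneg <;> linarith
  · rw [div_le_one (by linarith)]; linarith

lemma grn_nonneg {κ : ℝ → ℝ} (hκ : Continuous κ) (hp : ∀ x, 0 < κ x) {y1 y2 x z : ℝ} (h : y1 < y2)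
    (hx : x ∈ Set.Icc y1 y2) (hz : z ∈ Set.Icc y1 y2) : 0 ≤ grn κ y1 y2 x z := by
  have hm := scl_strictMono hκ hp
  have h1 := hm h
  have h2 := hm.monotone hz.1
  have h3 := hm.monotone hz.2
  obtain ⟨l0, l1⟩ := lamc_mem hκ hp h hx
  have e : scl κ x - scl κ y1 = lamc κ y1 y2 x * (scl κ y2 - scl κ y1) := by
    unfold lamc; field_simp [(sub_pos.2 h1).ne']
  unfold grn
  rcases le_total (scl κ x - scl κ z) 0 with h4 | h4
  · rw [max_eq_right h4]; nlinarith
  · rw [max_eq_left h4]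
    have : lamc κ y1 y2 x * (scl κ y2 - scl κ z) - (scl κ x - scl κ z)
      = (1 - lamc κ y1 y2 x) * (scl κ z - scl κ y1) := by linarith
    rw [this]; apply mul_nonneg <;> linarith

lemma Lam_Zf {κ : ℝ → ℝ} (hκ : Continuous κ) (hp : ∀ x, 0 < κ x) {y1 y2 x : ℝ} (h : y1 < y2)
    (hx : x ∈ Set.Icc y1 y2) {f : ℝ → ℝ} (hf : Continuous f) :
    Lam κ y1 y2 x (Zf κ y1 f) = Thf κ y1 y2 x f := by
  have hs := scl_continuous hκ hp
  have hsm := scl_strictMono hκ hp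
  have i1 : ∀ a b, IntervalIntegrable f volume a b := fun a b => hf.intervalIntegrable _ _
  have i2 : ∀ a b, IntervalIntegrable (fun z => scl κ z * f z) volume a b :=
    fun a b => (hs.mul hf).intervalIntegrable _ _
  have i3 : ∀ a b, IntervalIntegrable (fun z => max (scl κ x - scl κ z) 0 * f z) volume a b :=
    fun a b => Continuous.intervalIntegrable (by fun_prop) _ _
  have e1 : ∫ z in y1..y2, max (scl κ x - scl κ z) 0 * f z
      = scl κ x * (∫ z in y1..x, f z) - ∫ z in y1..x, scl κ z * f z := by
    rw [← intervalIntegral.integral_add_adjacent_intervals (i3 y1 x) (i3 x y2)]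
    have : ∫ z in x..y2, max (scl κ x - scl κ z) 0 * f z = 0 := by
      rw [intervalIntegral.integral_congr (g := fun _ => 0)]
      · simp
      · intro z hz
        rw [Set.uIcc_of_le hx.2] at hz
        have := hsm.monotone hz.1
        simp only
        rw [max_eq_right (by linarith)]; simp
    rw [this, add_zero, ← intervalIntegral.integral_const_mul,
      ← intervalIntegral.integral_sub ((i1 _ _).const_mul _) (i2 _ _)]
    apply intervalIntegral.integral_congr
    intro z hz
    rw [Set.uIcc_of_le hx.1] at hz
    have := hsm.monotone hz.2
    simp only
    rw [max_eq_left (by linarith)]; ring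
  have e2 : Thf κ y1 y2 x f = lamc κ y1 y2 x * (scl κ y2 * (∫ z in y1..y2, f z)
      - ∫ z in y1..y2, scl κ z * f z) - ∫ z in y1..y2, max (scl κ x - scl κ z) 0 * f z := by
    rw [← intervalIntegral.integral_const_mul, ← intervalIntegral.integral_sub
      ((i1 _ _).const_mul _) (i2 _ _), ← intervalIntegral.integral_const_mul,
      ← intervalIntegral.integral_sub _ (i3 _ _)]
    · apply intervalIntegral.integral_congr
      intro z _
      simp only [grn]; ring
    · exact (((i1 _ _).const_mul _).sub (i2 _ _)).const_mul _
  rw [e2, e1]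
  simp [Lam, Zf]

lemma Zf_hasDeriv {κ : ℝ → ℝ} (hκ : Continuous κ) (hp : ∀ x, 0 < κ x) (y1 : ℝ)
    {f : ℝ → ℝ} (hf : Continuous f) (x : ℝ) :
    HasDerivAt (Zf κ y1 f) (1 / κ x * ∫ z in y1..x, f z) x := by
  have hs := scl_continuous hκ hp
  have d1 : HasDerivAt (fun x => ∫ z in y1..x, f z) (f x) x :=
    intervalIntegral.integral_hasDerivAt_right (hf.intervalIntegrable _ _)
      hf.stronglyMeasurable.stronglyMeasurableAtFilter hf.continuousAt
  have d2 : HasDerivAt (fun x => ∫ z in y1..x, scl κ z * f z) (scl κ x * f x) x :=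
    intervalIntegral.integral_hasDerivAt_right ((hs.mul hf).intervalIntegrable _ _)
      (hs.mul hf).stronglyMeasurable.stronglyMeasurableAtFilter (hs.mul hf).continuousAt
  have := ((scl_hasDeriv hκ hp x).mul d1).sub d2
  exact this.congr_deriv (by ring)

lemma no_max {κ φ φ' : ℝ → ℝ} (hp : ∀ x, 0 < κ x) {x0 c : ℝ} (hmax : IsLocalMax φ x0)
    (hd : ∀ᶠ z in 𝓝 x0, HasDerivAt φ (φ' z) z)
    (hJ : HasDerivAt (fun z => κ z * φ' z) c x0) (hc : 0 < c) : False := by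
  have h0 : φ' x0 = 0 := hmax.hasDerivAt_eq_zero hd.self_of_nhds
  have hJ0 : κ x0 * φ' x0 = 0 := by rw [h0, mul_zero]
  have hs := hJ.tendsto_slope
  have hev : ∀ᶠ z in 𝓝[≠] x0, 0 < slope (fun z => κ z * φ' z) x0 z :=
    hs.eventually (lt_mem_nhds hc)
  rw [eventually_nhdsWithin_iff] at hev
  obtain ⟨r, hr, hb⟩ := Metric.eventually_nhds_iff.1 ((hev.and hd).and hmax)
  have hin : ∀ z, x0 ≤ z → z < x0 + r → dist z x0 < r := by
    intro z h1 h2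
    rw [Real.dist_eq, abs_of_nonneg (by linarith)]; linarith
  have hpos : ∀ z, x0 < z → z < x0 + r → 0 < φ' z := by
    intro z h1 h2
    have := (hb (hin z h1.le h2)).1.1 h1.ne'
    rw [slope_def_field, hJ0, sub_zero] at this
    have h3 : 0 < κ z * φ' z := by
      have := mul_pos this (sub_pos.2 h1)
      rwa [div_mul_cancel₀ _ (sub_pos.2 h1).ne'] at this
    exact (mul_pos_iff_of_pos_left (hp z)).1 h3
  obtain ⟨ξ, hξ, he⟩ := exists_hasDerivAt_eq_slope φ φ' (show x0 < x0 + r / 2 by linarith)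
    (fun z hz => (hb (hin z hz.1 (by linarith [hz.2]))).1.2.continuousAt.continuousWithinAt)
    (fun z hz => (hb (hin z hz.1.le (by linarith [hz.2]))).1.2)
  have h1 := hpos ξ hξ.1 (by linarith [hξ.2])
  have h2 := (hb (hin (x0 + r/2) (by linarith) (by linarith))).2
  rw [he] at h1
  have : 0 < φ (x0 + r/2) - φ x0 := by
    have := mul_pos h1 (show 0 < x0 + r/2 - x0 by linarith)
    rwa [div_mul_cancel₀ _ (by linarith)] at this
  linarith

lemma schwarz {κ : ℝ → ℝ} (hκ : Continuous κ) (hp : ∀ x, 0 < κ x) {y1 y2 : ℝ} (h : y1 < y2)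
    {f g : ℝ → ℝ} (hf : Continuous f) (hg : Continuous g)
    (H : ∀ x0 ∈ Set.Ioo y1 y2, ∃ (ψ ψ' : ℝ → ℝ) (c : ℝ), (∀ᶠ z in 𝓝 x0, ψ z ≤ g z) ∧
      ψ x0 = g x0 ∧ (∀ᶠ z in 𝓝 x0, HasDerivAt ψ (ψ' z) z) ∧
      HasDerivAt (fun z => κ z * ψ' z) c x0 ∧ f x0 ≤ c)
    {x : ℝ} (hx : x ∈ Set.Icc y1 y2) : Thf κ y1 y2 x f ≤ Lam κ y1 y2 x g := by
  rw [← Lam_Zf hκ hp h hx hf]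
  have hs := scl_continuous hκ hp
  have hsm := scl_strictMono hκ hp
  have h12 := hsm h
  set A1 := g y1 - Zf κ y1 f y1 with hA1
  set A2 := g y2 - Zf κ y1 f y2 with hA2
  have hZc : Continuous (Zf κ y1 f) :=
    continuous_iff_continuousAt.2 fun x => (Zf_hasDeriv hκ hp y1 hf x).continuousAt
  set B := (A2 - A1) / (scl κ y2 - scl κ y1) with hB
  have key : ∀ δ > 0, ∀ x ∈ Set.Icc y1 y2, g x - Zf κ y1 f x - (A1 + B * (scl κ x - scl κ y1))
      + δ * ((scl κ x - scl κ y1) * (scl κ x - scl κ y2)) ≤ 0 := by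
    intro δ hδ
    set Q : ℝ → ℝ := fun x => g x - Zf κ y1 f x - (A1 + B * (scl κ x - scl κ y1))
      + δ * ((scl κ x - scl κ y1) * (scl κ x - scl κ y2)) with hQ
    have hQc : Continuous Q := by fun_prop
    obtain ⟨x0, hx0, hmx⟩ := isCompact_Icc.exists_isMaxOn (Set.nonempty_Icc.2 h.le) hQc.continuousOn
    intro x hx
    refine (hmx hx).trans ?_
    by_contra hcon
    push Not at hcon
    have hQ1 : Q y1 = 0 := by simp [hQ, hA1]
    have hQ2 : Q y2 = 0 := by
      simp only [hQ, hB, sub_self, mul_zero, add_zero]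
      rw [div_mul_cancel₀ _ (sub_pos.2 h12).ne']
      simp [hA2]
    have hx0' : x0 ∈ Set.Ioo y1 y2 := by
      refine ⟨lt_of_le_of_ne hx0.1 ?_, lt_of_le_of_ne hx0.2 ?_⟩
      · rintro rfl; linarith
      · rintro rfl; linarith
    obtain ⟨ψ, ψ', c, hle, heq, hder, hJ, hfc⟩ := H x0 hx0'
    have hev : ∀ᶠ z in 𝓝 x0, z ∈ Set.Icc y1 y2 := Icc_mem_nhds hx0'.1 hx0'.2
    refine no_max (κ := κ) (φ := fun x => ψ x - Zf κ y1 f x - (A1 + B * (scl κ x - scl κ y1))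
      + δ * ((scl κ x - scl κ y1) * (scl κ x - scl κ y2)))
      (φ' := fun x => ψ' x - 1 / κ x * (∫ z in y1..x, f z) - (B * (1 / κ x))
        + δ * (1 / κ x * (scl κ x - scl κ y2) + (scl κ x - scl κ y1) * (1 / κ x)))
      (c := c - f x0 + δ * (1 / κ x0 + 1 / κ x0)) (x0 := x0) hp ?_ ?_ ?_ ?_
    · filter_upwards [hle, hev] with z h1 h2
      have h3 : Q z ≤ Q x0 := hmx h2
      simp only [hQ] at h3
      rw [heq]; linarith
    · filter_upwards [hder] with z hz
      have d := scl_hasDeriv hκ hp z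
      exact ((hz.sub (Zf_hasDeriv hκ hp y1 hf z)).sub (((d.sub_const _).const_mul B).const_add A1)).add
        (((d.sub_const _).mul (d.sub_const _)).const_mul δ)
    · have d1 : HasDerivAt (fun x => ∫ z in y1..x, f z) (f x0) x0 :=
        intervalIntegral.integral_hasDerivAt_right (hf.intervalIntegrable _ _)
          hf.stronglyMeasurable.stronglyMeasurableAtFilter hf.continuousAt
      have d := scl_hasDeriv hκ hp x0
      have := ((hJ.sub d1).sub_const B).add (((d.sub_const (scl κ y2)).add
        (d.sub_const (scl κ y1))).const_mul δ)
      refine this.congr_of_eventuallyEq (Eventually.of_forall fun z => ?_)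
      have := (hp z).ne'
      simp only [Pi.add_apply, Pi.sub_apply]
      field_simp
    · have := one_div_pos.2 (hp x0)
      have : 0 < δ * (1 / κ x0 + 1 / κ x0) := by positivity
      linarith
  have hfin : g x - Zf κ y1 f x - (A1 + B * (scl κ x - scl κ y1)) ≤ 0 := by
    apply le_of_forall_pos_le_add
    intro e he
    set M := (scl κ x - scl κ y1) * (scl κ y2 - scl κ x) with hM
    have hM0 : 0 ≤ M := mul_nonneg (sub_nonneg.2 (hsm.monotone hx.1)) (sub_nonneg.2 (hsm.monotone hx.2))
    have := key (e / (M + 1)) (by positivity) x hx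
    have h2 : e / (M + 1) * M ≤ e := by
      rw [div_mul_eq_mul_div, div_le_iff₀ (by positivity)]; nlinarith
    have h3 : e / (M + 1) * ((scl κ x - scl κ y1) * (scl κ x - scl κ y2)) = - (e / (M+1) * M) := by
      rw [hM]; ring
    linarith
  have e1 : B * (scl κ x - scl κ y1) = lamc κ y1 y2 x * (A2 - A1) := by
    rw [hB]; unfold lamc; ring
  simp only [Lam]
  rw [e1, hA1, hA2] at hfin
  linarith

def TSat (κ m : ℝ → ℝ) (w : ℝ → ℝ → ℝ) (s x : ℝ) : Prop :=
  ∀ p A : ℝ, (∀ᶠ s' in 𝓝 s, w s' x ≤ w s x + p * (s' - s) + A * (s' - s) ^ 2) →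
    ∃ (ψ ψ' : ℝ → ℝ) (c : ℝ), (∀ᶠ z in 𝓝 x, ψ z ≤ w s z) ∧ ψ x = w s x ∧
      (∀ᶠ z in 𝓝 x, HasDerivAt ψ (ψ' z) z) ∧ HasDerivAt (fun z => κ z * ψ' z) c x ∧ m x * p ≤ c

noncomputable def supc (a b ε : ℝ) (w : ℝ → ℝ → ℝ) (t x : ℝ) : ℝ :=
  sSup ((fun s => w s x - (t - s) ^ 2 / (2 * ε)) '' Set.Icc a b)

lemma supc_continuous {a b ε : ℝ} {w : ℝ → ℝ → ℝ} (hw : Continuous (Function.uncurry w)) :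
    Continuous (Function.uncurry (supc a b ε w)) := by
  have := IsCompact.continuous_sSup (K := Set.Icc a b) isCompact_Icc
    (f := fun (q : ℝ × ℝ) s => w s q.2 - (q.1 - s) ^ 2 / (2 * ε)) (by
      have : Continuous (fun r : (ℝ × ℝ) × ℝ => Function.uncurry w (r.2, r.1.2)) := by fun_prop
      have h2 : Continuous (fun r : (ℝ × ℝ) × ℝ => Function.uncurry w (r.2, r.1.2)
        - (r.1.1 - r.2) ^ 2 / (2 * ε)) := by fun_prop
      exact h2)
  exact this

lemma supc_le {a b ε : ℝ} {w : ℝ → ℝ → ℝ} (hw : Continuous (Function.uncurry w)) {t x s : ℝ}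
    (hs : s ∈ Set.Icc a b) : w s x - (t - s) ^ 2 / (2 * ε) ≤ supc a b ε w t x := by
  have hc : Continuous (fun s => w s x - (t - s) ^ 2 / (2 * ε)) := by
    have : Continuous (fun s => Function.uncurry w (s, x)) := by fun_prop
    have h2 : Continuous (fun s => Function.uncurry w (s, x) - (t - s) ^ 2 / (2 * ε)) := by fun_prop
    exact h2
  exact le_csSup (isCompact_Icc.image hc).bddAbove ⟨s, hs, rfl⟩

lemma supc_max {a b ε : ℝ} (hab : a ≤ b) {w : ℝ → ℝ → ℝ} (hw : Continuous (Function.uncurry w))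
    (t x : ℝ) : ∃ s ∈ Set.Icc a b, supc a b ε w t x = w s x - (t - s) ^ 2 / (2 * ε) := by
  have hc : Continuous (fun s => w s x - (t - s) ^ 2 / (2 * ε)) := by
    have : Continuous (fun s => Function.uncurry w (s, x)) := by fun_prop
    have h2 : Continuous (fun s => Function.uncurry w (s, x) - (t - s) ^ 2 / (2 * ε)) := by fun_prop
    exact h2
  obtain ⟨s, hs, h⟩ := (isCompact_Icc (a := a) (b := b)).exists_sSup_image_eq
    (Set.nonempty_Icc.2 hab) hc.continuousOn
  exact ⟨s, hs, h⟩

lemma supc_approx {a b y1 y2 t1 t2 : ℝ} (h1 : a < t1) (h12 : t1 ≤ t2) (h2 : t2 < b)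
    {w : ℝ → ℝ → ℝ} (hw : Continuous (Function.uncurry w)) {ω : ℝ} (hω : 0 < ω) :
    ∃ ε > 0, ∀ t ∈ Set.Icc t1 t2, ∀ x ∈ Set.Icc y1 y2,
      w t x ≤ supc a b ε w t x ∧ supc a b ε w t x ≤ w t x + ω ∧
      ∃ s ∈ Set.Ioo a b, supc a b ε w t x = w s x - (t - s) ^ 2 / (2 * ε) := by
  have hK : IsCompact (Set.Icc a b ×ˢ Set.Icc y1 y2) := isCompact_Icc.prod isCompact_Icc
  obtain ⟨M, hM⟩ := hK.exists_bound_of_continuousOn hw.continuousOn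
  have huc := hK.uniformContinuousOn_of_continuous hw.continuousOn
  rw [Metric.uniformContinuousOn_iff] at huc
  obtain ⟨δ0, hδ0, huc⟩ := huc ω hω
  set δ := min δ0 (min (t1 - a) (b - t2)) with hδ
  have hδp : 0 < δ := lt_min hδ0 (lt_min (by linarith) (by linarith))
  have hδ1 : δ ≤ δ0 := min_le_left _ _
  have hδ2 : δ ≤ t1 - a := (min_le_right _ _).trans (min_le_left _ _)
  have hδ3 : δ ≤ b - t2 := (min_le_right _ _).trans (min_le_right _ _)
  have hMp : 0 < |M| + 1 := by positivity
  refine ⟨δ ^ 2 / (4 * (|M| + 1)), by positivity, ?_⟩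
  intro t ht x hx
  set ε := δ ^ 2 / (4 * (|M| + 1)) with hε
  have hεp : 0 < ε := by positivity
  have htab : t ∈ Set.Icc a b := ⟨by linarith [ht.1], by linarith [ht.2]⟩
  have l1 : w t x ≤ supc a b ε w t x := by
    have := supc_le (ε := ε) (x := x) (t := t) hw htab
    simpa using this
  obtain ⟨s, hs, he⟩ := supc_max (ε := ε) (show a ≤ b by linarith) hw t x
  have b1 := hM (s, x) ⟨hs, hx⟩
  have b2 := hM (t, x) ⟨htab, hx⟩
  simp only [Function.uncurry, Real.norm_eq_abs] at b1 b2
  have hMM := le_abs_self M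
  have q : (t - s) ^ 2 / (2 * ε) ≤ 2 * |M| := by
    have := abs_le.1 b1; have := abs_le.1 b2
    linarith
  have q2 : (t - s) ^ 2 < δ ^ 2 := by
    rw [div_le_iff₀ (by positivity)] at q
    have : 4 * (|M| + 1) * ε = δ ^ 2 := by rw [hε]; field_simp
    nlinarith
  have q3 : |t - s| < δ := abs_lt_of_sq_lt_sq q2 hδp.le
  have q4 := abs_lt.1 q3
  refine ⟨l1, ?_, s, ⟨by linarith [ht.1], by linarith [ht.2]⟩, he⟩
  have := huc (s, x) ⟨hs, hx⟩ (t, x) ⟨htab, hx⟩ (by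
    rw [Prod.dist_eq]; simp only [dist_self]
    rw [max_eq_left dist_nonneg, Real.dist_eq, abs_sub_comm]; linarith)
  rw [Real.dist_eq] at this
  have := (abs_lt.1 this).2
  simp only [Function.uncurry] at this
  have : 0 ≤ (t - s) ^ 2 / (2 * ε) := by positivity
  linarith

lemma Thf_mono {κ : ℝ → ℝ} (hκ : Continuous κ) (hp : ∀ x, 0 < κ x) {y1 y2 x : ℝ} (h : y1 < y2)
    (hx : x ∈ Set.Icc y1 y2) {f g : ℝ → ℝ} (hf : Continuous f) (hg : Continuous g)
    (hfg : ∀ z ∈ Set.Icc y1 y2, f z ≤ g z) : Thf κ y1 y2 x f ≤ Thf κ y1 y2 x g := by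
  have hc := grn_continuous hκ hp y1 y2 x
  apply intervalIntegral.integral_mono_on h.le ((hc.mul hf).intervalIntegrable _ _)
    ((hc.mul hg).intervalIntegrable _ _)
  intro z hz
  exact mul_le_mul_of_nonneg_left (hfg z hz) (grn_nonneg hκ hp h hx hz)

lemma Thf_sub_smul {κ : ℝ → ℝ} (hκ : Continuous κ) (hp : ∀ x, 0 < κ x) {y1 y2 x : ℝ}
    {f g : ℝ → ℝ} (hf : Continuous f) (hg : Continuous g) (k : ℝ) :
    Thf κ y1 y2 x (fun z => f z + k * g z) = Thf κ y1 y2 x f + k * Thf κ y1 y2 x g := by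
  have hc := grn_continuous hκ hp y1 y2 x
  unfold Thf
  have i1 : IntervalIntegrable (fun z => grn κ y1 y2 x z * f z) volume y1 y2 :=
    Continuous.intervalIntegrable (by fun_prop) _ _
  have i2 : IntervalIntegrable (fun z => k * (grn κ y1 y2 x z * g z)) volume y1 y2 :=
    Continuous.intervalIntegrable (by fun_prop) _ _
  rw [← intervalIntegral.integral_const_mul, ← intervalIntegral.integral_add i1 i2]
  congr 1; ext z; ring

lemma Thf_cont {κ : ℝ → ℝ} (hκ : Continuous κ) (hp : ∀ x, 0 < κ x) {y1 y2 x : ℝ}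
    {f : ℝ → ℝ → ℝ} (hf : Continuous (Function.uncurry f)) :
    Continuous (fun t => Thf κ y1 y2 x (f t)) := by
  have hc := grn_continuous hκ hp y1 y2 x
  unfold Thf
  refine intervalIntegral.continuous_parametric_intervalIntegral_of_continuous' ?_ _ _
  have : Continuous (fun q : ℝ × ℝ => grn κ y1 y2 x q.2 * Function.uncurry f q) := by fun_prop
  exact this

lemma avg_ineq {Θ Λ : ℝ → ℝ} (hΘ : Continuous Θ) (hΛ : Continuous Λ) {t1 t2 C : ℝ} (h12 : t1 ≤ t2)
    (H : ∀ t ∈ Set.Icc t1 t2, ∀ h > 0, (Θ t - Θ (t - h)) / h ≤ Λ t + C * h) :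
    Θ t2 - Θ t1 ≤ ∫ t in t1..t2, Λ t := by
  have dG : ∀ c, HasDerivAt (fun r => ∫ t in (0:ℝ)..(c + r), Θ t) (Θ c) 0 := by
    intro c
    have : HasDerivAt (fun r => ∫ t in (0:ℝ)..r, Θ t) (Θ c) (c + 0) := by
      rw [add_zero]
      exact intervalIntegral.integral_hasDerivAt_right (hΘ.intervalIntegrable _ _)
        hΘ.stronglyMeasurable.stronglyMeasurableAtFilter hΘ.continuousAt
    exact HasDerivAt.comp_const_add c 0 this
  have dD := (dG t2).sub (dG t1)
  have hs := dD.tendsto_slope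
  have hs' := hs.mono_left (nhdsWithin_mono (0:ℝ) (s := Set.Iio 0) (fun x hx => ne_of_lt hx))
  have hr : Tendsto (fun r : ℝ => (∫ t in t1..t2, Λ t) + C * (-r) * (t2 - t1)) (𝓝[<] 0)
      (𝓝 ((∫ t in t1..t2, Λ t) + C * (-0) * (t2 - t1))) := by
    apply Tendsto.mono_left _ nhdsWithin_le_nhds
    apply Continuous.tendsto; fun_prop
  have key := le_of_tendsto_of_tendsto hs' hr ?_
  · simpa using key
  filter_upwards [self_mem_nhdsWithin] with r hr
  have hr0 : 0 < -r := by simpa using hr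
  have i1 : ∀ a b, IntervalIntegrable Θ volume a b := fun a b => hΘ.intervalIntegrable _ _
  have hI : ∫ t in t1..t2, (Θ t - Θ (t - (-r))) / (-r) ≤ ∫ t in t1..t2, (Λ t + C * (-r)) := by
    apply intervalIntegral.integral_mono_on h12
    · apply Continuous.intervalIntegrable; fun_prop
    · apply Continuous.intervalIntegrable; fun_prop
    · intro t ht; exact H t ht _ hr0
  rw [intervalIntegral.integral_add (hΛ.intervalIntegrable _ _) (by simp),
    intervalIntegral.integral_const, intervalIntegral.integral_div, intervalIntegral.integral_sub
      (i1 _ _) (Continuous.intervalIntegrable (by fun_prop) _ _),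
    intervalIntegral.integral_comp_sub_right (fun t => Θ t)] at hI
  rw [slope_def_field]
  simp only [Pi.sub_apply, add_zero, sub_zero, sub_neg_eq_add, smul_eq_mul] at hI ⊢
  have e : ∀ p q, (∫ t in p..q, Θ t) = (∫ t in (0:ℝ)..q, Θ t) - ∫ t in (0:ℝ)..p, Θ t := by
    intro p q; rw [intervalIntegral.integral_interval_sub_left (i1 _ _) (i1 _ _)]
  rw [e t1 t2, e (t1 + r)] at hI
  have e3 : ((∫ t in (0:ℝ)..t2 + r, Θ t) - (∫ t in (0:ℝ)..t1 + r, Θ t)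
    - ((∫ t in (0:ℝ)..t2, Θ t) - ∫ t in (0:ℝ)..t1, Θ t)) / r = 
    ((∫ t in (0:ℝ)..t2, Θ t) - (∫ t in (0:ℝ)..t1, Θ t)
    - ((∫ t in (0:ℝ)..t2 + r, Θ t) - ∫ t in (0:ℝ)..t1 + r, Θ t)) / (-r) := by
    rw [div_neg, ← neg_div]; congr 1; ring
  rw [e3]; linarith

lemma lemS0 {κ m : ℝ → ℝ} (hκ : Continuous κ) (hp : ∀ x, 0 < κ x) (hm : Continuous m)
    (hmp : ∀ x, 0 < m x) {a b y1 y2 t1 t2 x : ℝ}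
    (h : y1 < y2) (hx : x ∈ Set.Icc y1 y2) (h1 : a < t1) (h12 : t1 ≤ t2) (h2 : t2 < b)
    {w : ℝ → ℝ → ℝ} (hw : Continuous (Function.uncurry w))
    (hT : ∀ s ∈ Set.Ioo a b, ∀ x ∈ Set.Ioo y1 y2, TSat κ m w s x) :
    Thf κ y1 y2 x (fun z => m z * w t2 z) - Thf κ y1 y2 x (fun z => m z * w t1 z)
      ≤ ∫ t in t1..t2, Lam κ y1 y2 x (w t) := by
  have cw : ∀ {w : ℝ → ℝ → ℝ}, Continuous (Function.uncurry w) → ∀ t, Continuous (w t) := by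
    intro w hw t
    have : Continuous (fun s => Function.uncurry w (t, s)) := by fun_prop
    exact this
  have cL : ∀ {w : ℝ → ℝ → ℝ}, Continuous (Function.uncurry w) →
      Continuous (fun t => Lam κ y1 y2 x (w t)) := by
    intro w hw
    have : ∀ x, Continuous (fun t => w t x) := by
      intro x
      have : Continuous (fun s => Function.uncurry w (s, x)) := by fun_prop
      exact this
    have a1 := this y1
    have a2 := this y2
    have a3 := this x
    unfold Lam; fun_prop
  set Cm := Thf κ y1 y2 x m with hCm
  apply le_of_forall_pos_le_add
  intro e he
  set ω := e / (|Cm| + (t2 - t1) + 1) with hω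
  have hωp : 0 < ω := by apply div_pos he; have := abs_nonneg Cm; linarith
  obtain ⟨ε, hε, happ⟩ := supc_approx (y1 := y1) (y2 := y2) h1 h12 h2 hw hωp
  set v := supc a b ε w with hv
  have hvc : Continuous (Function.uncurry v) := supc_continuous hw
  have main : Thf κ y1 y2 x (fun z => m z * v t2 z) - Thf κ y1 y2 x (fun z => m z * v t1 z)
      ≤ ∫ t in t1..t2, Lam κ y1 y2 x (v t) := by
    refine avg_ineq (Θ := fun t => Thf κ y1 y2 x (fun z => m z * v t z))
      (Λ := fun t => Lam κ y1 y2 x (v t)) (C := Cm / (2 * ε)) ?_ (cL hvc) h12 ?_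
    · apply Thf_cont hκ hp
      have : Continuous (fun q : ℝ × ℝ => m q.2 * Function.uncurry v q) := by fun_prop
      exact this
    · intro t ht k hk
      have cvt := cw hvc t
      have cvk := cw hvc (t - k)
      have := schwarz hκ hp h (f := fun z => m z * ((v t z - v (t - k) z) / k - k / (2 * ε)))
        (by fun_prop) cvt (fun x0 hx0 => by
          obtain ⟨-, -, s, hs, hse⟩ := happ t ht x0 ⟨hx0.1.le, hx0.2.le⟩
          have hsm : ∀ r ∈ Set.Icc a b, w r x0 - (t - r) ^ 2 / (2 * ε) ≤ v t x0 :=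
            fun r hr => supc_le hw hr
          obtain ⟨ψ, ψ', c, p1, p2, p3, p4, p5⟩ := hT s hs x0 hx0 ((s - t) / ε) (1 / (2 * ε)) (by
            filter_upwards [Icc_mem_nhds hs.1 hs.2] with r hr
            have := hsm r hr
            rw [hse] at this
            have e1 : (t - r) ^ 2 / (2 * ε) = (t - s) ^ 2 / (2 * ε)
              + (s - t) / ε * (r - s) + 1 / (2 * ε) * (r - s) ^ 2 := by
              field_simp; ring
            linarith)
          refine ⟨fun z => ψ z - (t - s) ^ 2 / (2 * ε), ψ', c, ?_, ?_, ?_, p4, ?_⟩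
          · filter_upwards [p1] with z hz
            have : w s z - (t - s) ^ 2 / (2 * ε) ≤ v t z := supc_le hw ⟨hs.1.le, hs.2.le⟩
            linarith
          · simp only [p2]; exact hse.symm
          · filter_upwards [p3] with z hz
            exact hz.sub_const _
          · refine le_trans (mul_le_mul_of_nonneg_left ?_ (hmp x0).le) p5
            have : w s x0 - (t - k - s) ^ 2 / (2 * ε) ≤ v (t - k) x0 :=
              supc_le hw ⟨hs.1.le, hs.2.le⟩
            have e1 : (t - k - s) ^ 2 / (2 * ε) = (t - s) ^ 2 / (2 * ε)
              + k * ((s - t) / ε + k / (2 * ε)) := by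
              field_simp; ring
            have : (v t x0 - v (t - k) x0) / k ≤ (s - t) / ε + k / (2 * ε) := by
              rw [div_le_iff₀ hk]
              linarith
            linarith) hx
      have e2 : Thf κ y1 y2 x (fun z => m z * ((v t z - v (t - k) z) / k - k / (2 * ε)))
        = (Thf κ y1 y2 x (fun z => m z * v t z) - Thf κ y1 y2 x (fun z => m z * v (t - k) z)) / k
          - Cm / (2 * ε) * k := by
        have a1 := Thf_sub_smul hκ hp (y1 := y1) (y2 := y2) (x := x)
          (f := fun z => (1 / k) * (m z * v t z) + (- 1 / k) * (m z * v (t - k) z)) (g := m)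
          (by fun_prop) hm (-(k / (2 * ε)))
        have a2 := Thf_sub_smul hκ hp (y1 := y1) (y2 := y2) (x := x)
          (f := fun z => (1 / k) * (m z * v t z)) (g := fun z => m z * v (t - k) z)
          (by fun_prop) (by fun_prop) (-1 / k)
        have a3 := Thf_sub_smul hκ hp (y1 := y1) (y2 := y2) (x := x)
          (f := fun z => 0) (g := fun z => m z * v t z)
          (by fun_prop) (by fun_prop) (1 / k)
        have a4 : Thf κ y1 y2 x (fun z => 0) = 0 := by simp [Thf]
        simp only [zero_add] at a3
        rw [a2, a3, a4] at a1
        calc _ = Thf κ y1 y2 x (fun z => 1 / k * (m z * v t z) + -1 / k * (m z * v (t - k) z)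
            + -(k / (2 * ε)) * m z) := by congr 1; ext z; ring
          _ = _ := by rw [a1]; ring
      rw [e2] at this
      linarith
  have b1 : Thf κ y1 y2 x (fun z => m z * w t2 z) ≤ Thf κ y1 y2 x (fun z => m z * v t2 z) :=
    Thf_mono hκ hp h hx (hm.mul (cw hw _)) (hm.mul (cw hvc _)) (fun z hz =>
      mul_le_mul_of_nonneg_left (happ t2 ⟨h12, le_rfl⟩ z hz).1 (hmp z).le)
  have b2 : Thf κ y1 y2 x (fun z => m z * v t1 z) ≤ Thf κ y1 y2 x (fun z => m z * w t1 z)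
      + ω * Cm := by
    have := Thf_sub_smul hκ hp (y1 := y1) (y2 := y2) (x := x) (f := fun z => m z * w t1 z)
      (hm.mul (cw hw _)) hm ω
    rw [← this]
    refine Thf_mono hκ hp h hx (hm.mul (cw hvc _)) ((hm.mul (cw hw _)).add (continuous_const.mul hm)) (fun z hz => ?_)
    have := mul_le_mul_of_nonneg_left (happ t1 ⟨le_rfl, h12⟩ z hz).2.1 (hmp z).le
    linarith
  have b3 : ∫ t in t1..t2, Lam κ y1 y2 x (v t) ≤ ∫ t in t1..t2, (Lam κ y1 y2 x (w t) + ω) := by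
    apply intervalIntegral.integral_mono_on h12 ((cL hvc).intervalIntegrable _ _)
      (((cL hw).add continuous_const).intervalIntegrable _ _)
    intro t ht
    change Lam κ y1 y2 x (v t) ≤ Lam κ y1 y2 x (w t) + ω
    obtain ⟨l0, l1⟩ := lamc_mem hκ hp h hx
    have c1 := (happ t ht y1 ⟨le_rfl, h.le⟩).2.1
    have c2 := (happ t ht y2 ⟨h.le, le_rfl⟩).2.1
    have c3 := (happ t ht x hx).1
    unfold Lam
    have := mul_le_mul_of_nonneg_left c1 (sub_nonneg.2 l1)
    have := mul_le_mul_of_nonneg_left c2 l0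
    linarith
  rw [intervalIntegral.integral_add ((cL hw).intervalIntegrable _ _) (by simp),
    intervalIntegral.integral_const, smul_eq_mul] at b3
  have b4 : ω * Cm + (t2 - t1) * ω ≤ e := by
    have : ω * (|Cm| + (t2 - t1) + 1) = e := by
      rw [hω]; apply div_mul_cancel₀; have := abs_nonneg Cm; linarith
    have := le_abs_self Cm
    nlinarith
  linarith

def LSubAt (κ m : ℝ → ℝ) (d : ℝ → ℝ → ℝ) (t x : ℝ) : Prop :=
  ∃ (dt : ℝ) (dx : ℝ → ℝ) (c : ℝ), HasDerivAt (fun s => d s x) dt t ∧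
    (∀ᶠ z in 𝓝 x, HasDerivAt (d t) (dx z) z) ∧ HasDerivAt (fun z => κ z * dx z) c x ∧ m x * dt ≤ c

lemma touch_eq {f : ℝ → ℝ} {s p A dt : ℝ} (hf : HasDerivAt f dt s)
    (h : ∀ᶠ s' in 𝓝 s, f s' ≤ f s + p * (s' - s) + A * (s' - s) ^ 2) : p = dt := by
  have hm : IsLocalMax (fun r => f r - (p * (r - s) + A * (r - s) ^ 2)) s := by
    filter_upwards [h] with r hr
    simp only [sub_self]
    linarith
  have hd : HasDerivAt (fun r => f r - (p * (r - s) + A * (r - s) ^ 2)) (dt - p) s := by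
    have h1 : HasDerivAt (fun r : ℝ => r - s) 1 s := (hasDerivAt_id s).sub_const s
    have := hf.sub ((h1.const_mul p).add ((h1.pow 2).const_mul A))
    refine this.congr_deriv ?_
    simp
  have := hm.hasDerivAt_eq_zero hd
  linarith

lemma LSubAt.tsat {κ m : ℝ → ℝ} {d : ℝ → ℝ → ℝ} {t x : ℝ} (h : LSubAt κ m d t x) :
    TSat κ m d t x := by
  obtain ⟨dt, dx, c, h1, h2, h3, h4⟩ := h
  intro p A hp
  have := touch_eq h1 hp
  subst this
  exact ⟨d t, dx, c, Eventually.of_forall fun z => le_rfl, rfl, h2, h3, h4⟩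

lemma LSubAt.tsat_max {κ m : ℝ → ℝ} {d : ℝ → ℝ → ℝ} {t x : ℝ} (h : LSubAt κ m d t x) :
    TSat κ m (fun t x => max (d t x) 0) t x := by
  obtain ⟨dt, dx, c, h1, h2, h3, h4⟩ := h
  intro p A hp
  by_cases hd : 0 < d t x
  · have e1 : ∀ᶠ s in 𝓝 t, 0 < d s x := h1.continuousAt.eventually (lt_mem_nhds hd)
    have := touch_eq (p := p) (A := A) h1 (by
      filter_upwards [hp, e1] with s hs h0
      rwa [max_eq_left h0.le, max_eq_left hd.le] at hs)
    subst this
    exact ⟨d t, dx, c, Eventually.of_forall fun z => le_max_left _ _, (max_eq_left hd.le).symm,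
      h2, h3, h4⟩
  · push Not at hd
    have := touch_eq (f := fun _ => (0:ℝ)) (p := p) (A := A) (hasDerivAt_const t (0:ℝ)) (by
      filter_upwards [hp] with s hs
      rw [max_eq_right hd] at hs
      exact (le_max_right _ _).trans hs)
    subst this
    refine ⟨fun _ => 0, fun _ => 0, 0, Eventually.of_forall fun z => le_max_right _ _,
      (max_eq_right hd).symm, Eventually.of_forall fun z => hasDerivAt_const _ _, ?_, by simp⟩
    simpa using hasDerivAt_const x (0:ℝ)

lemma lemS {κ m : ℝ → ℝ} (hκ : Continuous κ) (hp : ∀ x, 0 < κ x) (hm : Continuous m)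
    (hmp : ∀ x, 0 < m x) {a b y1 y2 t1 t2 x : ℝ}
    (h : y1 < y2) (hx : x ∈ Set.Icc y1 y2) (h1 : a < t1) (h12 : t1 ≤ t2) (h2 : t2 < b)
    {w : ℝ → ℝ → ℝ} (hw : ContinuousOn (Function.uncurry w) (Set.Icc a b ×ˢ Set.Icc y1 y2))
    (hT : ∀ s ∈ Set.Ioo a b, ∀ x ∈ Set.Ioo y1 y2, TSat κ m w s x) :
    Thf κ y1 y2 x (fun z => m z * w t2 z) - Thf κ y1 y2 x (fun z => m z * w t1 z)
      ≤ ∫ t in t1..t2, Lam κ y1 y2 x (w t) := by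
  set cl : ℝ → ℝ → ℝ → ℝ := fun p q t => max p (min q t) with hcl
  have clm : ∀ p q t, p ≤ q → cl p q t ∈ Set.Icc p q := by
    intro p q t h; exact ⟨le_max_left _ _, max_le h (min_le_left _ _)⟩
  have cle : ∀ p q t, t ∈ Set.Icc p q → cl p q t = t := by
    intro p q t h; simp only [hcl]; rw [min_eq_right h.2, max_eq_right h.1]
  have hab : a ≤ b := by linarith
  have key := lemS0 hκ hp hm hmp h hx h1 h12 h2 (w := fun t x => w (cl a b t) (cl y1 y2 x)) ?_ ?_
  · have e1 : ∀ t ∈ Set.Icc a b, ∀ z ∈ Set.Icc y1 y2, w (cl a b t) (cl y1 y2 z) = w t z := by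
      intro t ht z hz; rw [cle _ _ _ ht, cle _ _ _ hz]
    have e2 : ∀ t ∈ Set.Icc a b, Thf κ y1 y2 x (fun z => m z * w (cl a b t) (cl y1 y2 z))
        = Thf κ y1 y2 x (fun z => m z * w t z) := by
      intro t ht
      apply intervalIntegral.integral_congr
      intro z hz
      rw [Set.uIcc_of_le h.le] at hz
      simp only [e1 t ht z hz]
    rw [e2 t2 ⟨by linarith, by linarith⟩, e2 t1 ⟨by linarith, by linarith⟩] at key
    refine key.trans (le_of_eq ?_)
    apply intervalIntegral.integral_congr
    intro t ht
    rw [Set.uIcc_of_le h12] at ht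
    have htab : t ∈ Set.Icc a b := ⟨by linarith [ht.1], by linarith [ht.2]⟩
    simp only [Lam]
    rw [e1 t htab _ ⟨le_rfl, h.le⟩, e1 t htab _ ⟨h.le, le_rfl⟩, e1 t htab _ hx]
  · have : Continuous (fun q : ℝ × ℝ => (cl a b q.1, cl y1 y2 q.2)) := by
      simp only [hcl]; fun_prop
    exact hw.comp_continuous this (fun q => ⟨clm _ _ _ hab, clm _ _ _ h.le⟩)
  · intro s hs z hz p A hpA
    have es := cle _ _ _ (Set.Ioo_subset_Icc_self hs)
    have ez := cle _ _ _ (Set.Ioo_subset_Icc_self hz)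
    obtain ⟨ψ, ψ', c, p1, p2, p3, p4, p5⟩ := hT s hs z hz p A (by
      filter_upwards [hpA, Icc_mem_nhds hs.1 hs.2] with r hr hr2
      rwa [cle _ _ _ hr2, es, ez] at hr)
    refine ⟨ψ, ψ', c, ?_, ?_, p3, p4, p5⟩
    · filter_upwards [p1, Icc_mem_nhds hz.1 hz.2] with r hr hr2
      rwa [es, cle _ _ _ hr2]
    · simp only [es, ez]; exact p2

lemma lemC {κ m : ℝ → ℝ} (hκ : Continuous κ) (hp : ∀ x, 0 < κ x) (hm : Continuous m)
    (hmp : ∀ x, 0 < m x) {α β y1 y2 : ℝ} (h : y1 < y2)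
    {d : ℝ → ℝ → ℝ} (hd : ContinuousOn (Function.uncurry d) (Set.Ioo α β ×ˢ Set.Icc y1 y2))
    (hL : ∀ s ∈ Set.Ioo α β, ∀ x ∈ Set.Ioo y1 y2, LSubAt κ m d s x)
    (hb1 : ∀ s ∈ Set.Ioo α β, d s y1 ≤ 0) (hb2 : ∀ s ∈ Set.Ioo α β, d s y2 ≤ 0)
    (h0 : Tendsto (fun t => ∫ z in y1..y2, max (d t z) 0) (𝓝[>] α) (𝓝 0))
    {t x : ℝ} (ht : t ∈ Set.Ioo α β) (hx : x ∈ Set.Icc y1 y2) : d t x ≤ 0 := by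
  by_contra hcon
  push Not at hcon
  set w : ℝ → ℝ → ℝ := fun t x => max (d t x) 0 with hw
  have hwc : ContinuousOn (Function.uncurry w) (Set.Ioo α β ×ˢ Set.Icc y1 y2) :=
    hd.sup continuousOn_const
  have hwx : ContinuousOn (fun t => w t x) (Set.Ioo α β) := by
    have : ContinuousOn (fun t => Function.uncurry w (t, x)) (Set.Ioo α β) :=
      hwc.comp (by fun_prop) (fun s hs => ⟨hs, hx⟩)
    exact this
  have hwt : ∀ t ∈ Set.Ioo α β, ContinuousOn (w t) (Set.Icc y1 y2) := by
    intro t ht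
    have : ContinuousOn (fun z => Function.uncurry w (t, z)) (Set.Icc y1 y2) :=
      hwc.comp (by fun_prop) (fun s hs => ⟨ht, hs⟩)
    exact this
  have hgm : Continuous (fun z => grn κ y1 y2 x z * m z) := (grn_continuous hκ hp y1 y2 x).mul hm
  obtain ⟨C, hC⟩ := isCompact_Icc.exists_bound_of_continuousOn (s := Set.Icc y1 y2) hgm.continuousOn
  -- main inequality
  have main : ∀ t1 t2, α < t1 → t1 ≤ t2 → t2 < β →
      ∫ s in t1..t2, w s x ≤ C * ∫ z in y1..y2, w t1 z := by
    intro t1 t2 h1 h12 h2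
    have hsub : Set.Icc ((α + t1) / 2) ((t2 + β) / 2) ⊆ Set.Ioo α β := by
      intro s hs; exact ⟨by linarith [hs.1], by linarith [hs.2]⟩
    have key := lemS hκ hp hm hmp (a := (α + t1) / 2) (b := (t2 + β) / 2) h hx (by linarith) h12
      (by linarith) (w := w) (hwc.mono (Set.prod_mono hsub subset_rfl))
      (fun s hs z hz => (hL s (hsub (Set.Ioo_subset_Icc_self hs)) z hz).tsat_max)
    have e1 : ∫ s in t1..t2, Lam κ y1 y2 x (w s) = - ∫ s in t1..t2, w s x := by
      rw [← intervalIntegral.integral_neg]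
      apply intervalIntegral.integral_congr
      intro s hs
      rw [Set.uIcc_of_le h12] at hs
      have hs' : s ∈ Set.Ioo α β := ⟨by linarith [hs.1], by linarith [hs.2]⟩
      simp only [Lam, hw]
      rw [max_eq_right (hb1 s hs'), max_eq_right (hb2 s hs')]; ring
    have e2 : 0 ≤ Thf κ y1 y2 x (fun z => m z * w t2 z) := by
      apply intervalIntegral.integral_nonneg h.le
      intro z hz
      exact mul_nonneg (grn_nonneg hκ hp h hx hz) (mul_nonneg (hmp z).le (le_max_right _ _))
    have ht1 : t1 ∈ Set.Ioo α β := ⟨h1, by linarith⟩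
    have e3 : Thf κ y1 y2 x (fun z => m z * w t1 z) ≤ C * ∫ z in y1..y2, w t1 z := by
      rw [← intervalIntegral.integral_const_mul]
      have hu : Set.uIcc y1 y2 = Set.Icc y1 y2 := Set.uIcc_of_le h.le
      apply intervalIntegral.integral_mono_on h.le
      · apply ContinuousOn.intervalIntegrable
        rw [hu]
        exact (grn_continuous hκ hp y1 y2 x).continuousOn.mul (hm.continuousOn.mul (hwt t1 ht1))
      · apply ContinuousOn.intervalIntegrable
        rw [hu]
        exact continuousOn_const.mul (hwt t1 ht1)
      · intro z hz
        rw [← mul_assoc]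
        apply mul_le_mul_of_nonneg_right _ (le_max_right _ _)
        exact (le_abs_self _).trans (hC z hz)
    linarith
  -- pick interval
  set t0 := (α + t) / 2 with ht0
  have ht0' : α < t0 := by rw [ht0]; linarith [ht.1]
  have ht0t : t0 < t := by rw [ht0]; linarith [ht.1]
  have hpos : 0 < ∫ s in t0..t, w s x := by
    apply intervalIntegral.integral_pos ht0t
    · exact hwx.mono (fun s hs => ⟨by linarith [hs.1], by linarith [hs.2, ht.2]⟩)
    · intro s hs; exact le_max_right _ _
    · exact ⟨t, ⟨ht0t.le, le_rfl⟩, lt_max_of_lt_left hcon⟩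
  have hlim : Tendsto (fun t1 => C * ∫ z in y1..y2, w t1 z) (𝓝[>] α) (𝓝 (C * 0)) :=
    h0.const_mul C
  have := ge_of_tendsto hlim (b := ∫ s in t0..t, w s x) (by
    filter_upwards [Ioo_mem_nhdsGT ht0'] with t1 ht1
    refine le_trans ?_ (main t1 t ht1.1 (by linarith [ht1.2]) ht.2)
    have i : ∀ p q, α < p → p ≤ q → q < β → IntervalIntegrable (fun s => w s x) volume p q := by
      intro p q h1 h2 h3
      apply ContinuousOn.intervalIntegrable
      rw [Set.uIcc_of_le h2]
      exact hwx.mono (fun s hs => ⟨by linarith [hs.1], by linarith [hs.2]⟩)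
    rw [← intervalIntegral.integral_add_adjacent_intervals (i t1 t0 ht1.1 ht1.2.le (ht0t.trans ht.2))
      (i t0 t ht0' ht0t.le ht.2)]
    have : 0 ≤ ∫ s in t1..t0, w s x :=
      intervalIntegral.integral_nonneg ht1.2.le (fun s hs => le_max_right _ _)
    linarith)
  linarith

def Sol (κ m : ℝ → ℝ) (u : ℝ → ℝ → ℝ) : Prop :=
  ∃ ut ux : ℝ → ℝ → ℝ, ∀ t, 0 < t → ∀ x, HasDerivAt (fun s => u s x) (ut t x) t ∧
    HasDerivAt (u t) (ux t x) x ∧ HasDerivAt (fun z => κ z * ux t z) (m x * ut t x) x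

def LC (u : ℝ → ℝ → ℝ) : Prop := ∀ t0, 0 < t0 → ∀ y1 y2, y1 < y2 →
  Tendsto (fun t => ∫ z in y1..y2, |u t z - u t0 z|) (𝓝 t0) (𝓝 0)

lemma Sol.neg {κ m : ℝ → ℝ} {u : ℝ → ℝ → ℝ} (h : Sol κ m u) : Sol κ m (fun t x => - u t x) := by
  obtain ⟨ut, ux, h⟩ := h
  refine ⟨fun t x => - ut t x, fun t x => - ux t x, fun t ht x => ?_⟩
  obtain ⟨h1, h2, h3⟩ := h t ht x
  refine ⟨h1.neg, h2.neg, ?_⟩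
  have := h3.neg
  simp only [mul_neg]
  exact this

lemma LC.neg {u : ℝ → ℝ → ℝ} (h : LC u) : LC (fun t x => - u t x) := by
  intro t0 ht0 y1 y2 hy
  have := h t0 ht0 y1 y2 hy
  refine this.congr (fun t => ?_)
  congr 1; ext z
  rw [← abs_neg]; congr 1; ring

lemma Sol.cx {κ m : ℝ → ℝ} {u : ℝ → ℝ → ℝ} (h : Sol κ m u) {t : ℝ} (ht : 0 < t) :
    Continuous (u t) := by
  obtain ⟨ut, ux, h⟩ := h
  exact continuous_iff_continuousAt.2 fun x => (h t ht x).2.1.continuousAt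

lemma Sol.ct {κ m : ℝ → ℝ} {u : ℝ → ℝ → ℝ} (h : Sol κ m u) {t : ℝ} (ht : 0 < t) (x : ℝ) :
    ContinuousAt (fun s => u s x) t := by
  obtain ⟨ut, ux, h⟩ := h
  exact (h t ht x).1.continuousAt

/-- initial condition for the comparison principle out of local `L¹` continuity -/
lemma init_of_le {y1 y2 α : ℝ} {d : ℝ → ℝ → ℝ} {g : ℝ → ℝ} (hy : y1 < y2)
    (hd : ∀ᶠ t in 𝓝[>] α, ContinuousOn (d t) (Set.Icc y1 y2))
    {b : ℝ → ℝ → ℝ} (hb : ∀ᶠ t in 𝓝[>] α, ContinuousOn (b t) (Set.Icc y1 y2))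
    (hle : ∀ᶠ t in 𝓝[>] α, ∀ z ∈ Set.Icc y1 y2, max (d t z) 0 ≤ b t z)
    (hg : ∀ᶠ t in 𝓝[>] α, ∫ z in y1..y2, b t z ≤ g t)
    (h0 : Tendsto g (𝓝[>] α) (𝓝 0)) :
    Tendsto (fun t => ∫ z in y1..y2, max (d t z) 0) (𝓝[>] α) (𝓝 0) := by
  refine squeeze_zero' ?_ ?_ h0
  · exact Eventually.of_forall fun t =>
      intervalIntegral.integral_nonneg hy.le (fun z hz => le_max_right _ _)
  · filter_upwards [hd, hb, hle, hg] with t h1 h2 h3 h4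
    refine le_trans ?_ h4
    have hu : Set.uIcc y1 y2 = Set.Icc y1 y2 := Set.uIcc_of_le hy.le
    apply intervalIntegral.integral_mono_on hy.le
    · apply ContinuousOn.intervalIntegrable; rw [hu]; exact h1.sup continuousOn_const
    · apply ContinuousOn.intervalIntegrable; rw [hu]; exact h2
    · exact h3

lemma barrier {κ m : ℝ → ℝ} (hκ : Continuous κ) (hp : ∀ x, 0 < κ x) (hm : Continuous m)
    (hmp : ∀ x, 0 < m x) {u : ℝ → ℝ → ℝ} (hu : Sol κ m u) (hl : LC u) {s x0 r n ε : ℝ}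
    (hs : 0 < s) (hr : 0 < r) (hε : 0 < ε) (hn : 0 ≤ n) :
    ∃ η > 0, ∃ ρ > 0, ∀ α t, |α - s| ≤ η → |t - s| ≤ η → α < t →
      (∀ x ∈ Set.Icc (x0 - r) (x0 + r), |u α x - u α x0| ≤ n * |x - x0|) →
      (∃ β > t, ∀ t' ∈ Set.Ioo α β, ∀ x ∈ Set.Icc (x0 - r) (x0 + r),
        ContinuousAt (Function.uncurry u) (t', x)) →
      ∀ x, |x - x0| < ρ → u t x ≤ u s x0 + ε := by
  have hSc := scl_continuous hκ hp
  have hSd := scl_hasDeriv hκ hp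
  -- constants
  obtain ⟨kκ, hkκ⟩ := isCompact_Icc.exists_bound_of_continuousOn (s := Set.Icc (x0 - r) (x0 + r))
    hκ.continuousOn
  have hkpos : 0 < kκ := lt_of_lt_of_le (hp x0) (by
    have := hkκ x0 ⟨by linarith, by linarith⟩
    exact (le_abs_self _).trans this)
  obtain ⟨cp, hcp⟩ := isCompact_Icc.exists_bound_of_continuousOn (s := Set.Icc (x0 - r) (x0 + r))
    (f := fun x => 1 / (m x * κ x)) (by
      apply Continuous.continuousOn
      exact continuous_const.div (hm.mul hκ) (fun x => (mul_pos (hmp x) (hp x)).ne'))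
  have hcpos : 0 ≤ cp := (norm_nonneg _).trans (hcp x0 ⟨by linarith, by linarith⟩)
  have hcomp : IsCompact (Set.Icc (s / 2) (2 * s)) := isCompact_Icc
  have hctl : ∀ y, ContinuousOn (fun t => u t y) (Set.Icc (s / 2) (2 * s)) := fun y t ht =>
    (hu.ct (by linarith [ht.1]) y).continuousWithinAt
  obtain ⟨B1, hB1⟩ := hcomp.exists_bound_of_continuousOn (hctl (x0 - r))
  obtain ⟨B2, hB2⟩ := hcomp.exists_bound_of_continuousOn (hctl (x0 + r))
  set B := |u s x0| + |B1| + |B2| with hB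
  have hB0 : 0 ≤ B := by positivity
  set C1 := (n ^ 2 / ε + B / r ^ 2) * kκ ^ 2 with hC1
  have hC10 : 0 ≤ C1 := by positivity
  set C2 := 2 * C1 * cp with hC2
  have hC20 : 0 ≤ C2 := by positivity
  -- lower bound for S
  have hSlow : ∀ x ∈ Set.Icc (x0 - r) (x0 + r), (x - x0) ^ 2 / kκ ^ 2 ≤ (scl κ x - scl κ x0) ^ 2 := by
    have hpos : ∀ p q, p ∈ Set.Icc (x0 - r) (x0 + r) → q ∈ Set.Icc (x0 - r) (x0 + r) → p ≤ q →
        (q - p) / kκ ≤ scl κ q - scl κ p := by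
      intro p q hp' hq' hpq
      rcases eq_or_lt_of_le hpq with rfl | hpq
      · simp
      obtain ⟨ξ, hξ, he⟩ := exists_hasDerivAt_eq_slope (scl κ) (fun x => 1 / κ x) hpq
        hSc.continuousOn (fun z _ => hSd z)
      have h1 : κ ξ ≤ kκ := (le_abs_self _).trans
        (hkκ ξ ⟨by linarith [hp'.1, hξ.1], by linarith [hq'.2, hξ.2]⟩)
      have h2 : 1 / kκ ≤ 1 / κ ξ := one_div_le_one_div_of_le (hp ξ) h1
      rw [he, div_le_div_iff₀ hkpos (by linarith)] at h2
      rw [div_le_iff₀ hkpos]; linarith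
    intro x hx
    rw [← div_pow]
    have hx0 : x0 ∈ Set.Icc (x0 - r) (x0 + r) := ⟨by linarith, by linarith⟩
    rcases le_total x0 x with h | h
    · have := hpos x0 x hx0 hx h
      have h0 : 0 ≤ (x - x0) / kκ := div_nonneg (by linarith) hkpos.le
      exact pow_le_pow_left₀ h0 this 2
    · have := hpos x x0 hx hx0 h
      have h0 : 0 ≤ (x0 - x) / kκ := div_nonneg (by linarith) hkpos.le
      have := pow_le_pow_left₀ h0 this 2
      calc _ = ((x0 - x) / kκ) ^ 2 := by rw [div_pow, div_pow]; congr 1; ring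
        _ ≤ _ := this
        _ = _ := by ring
  have hbar : ∀ x ∈ Set.Icc (x0 - r) (x0 + r),
      (n ^ 2 / ε + B / r ^ 2) * (x - x0) ^ 2 ≤ C1 * (scl κ x - scl κ x0) ^ 2 := by
    intro x hx
    have := mul_le_mul_of_nonneg_left (hSlow x hx) hC10
    refine le_trans (le_of_eq ?_) this
    rw [hC1]; field_simp
  -- time continuity at x0
  have hev : ∀ᶠ t in 𝓝 s, |u t x0 - u s x0| < ε / 4 := by
    have := (hu.ct hs x0).eventually (Metric.ball_mem_nhds (u s x0) (by positivity : 0 < ε / 4))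
    filter_upwards [this] with t ht
    simpa [Real.dist_eq] using ht
  obtain ⟨η0, hη0, hev⟩ := Metric.eventually_nhds_iff.1 hev
  have hex : ∀ᶠ x in 𝓝 x0, C1 * (scl κ x - scl κ x0) ^ 2 < ε / 4 := by
    have : Continuous (fun x => C1 * (scl κ x - scl κ x0) ^ 2) := by fun_prop
    have h2 := this.tendsto x0
    simp only [sub_self, ne_eq, OfNat.ofNat_ne_zero, not_false_eq_true, zero_pow, mul_zero] at h2
    exact h2.eventually (gt_mem_nhds (by positivity))
  obtain ⟨ρ0, hρ0, hex⟩ := Metric.eventually_nhds_iff.1 hex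
  set η := min (η0 / 2) (min (s / 2) (ε / (8 * (C2 + 1)))) with hη
  have hηp : 0 < η := by
    refine lt_min (by positivity) (lt_min (by positivity) (by positivity))
  have hη1 : η ≤ η0 / 2 := min_le_left _ _
  have hη2 : η ≤ s / 2 := (min_le_right _ _).trans (min_le_left _ _)
  have hη3 : C2 * (2 * η) ≤ ε / 4 := by
    have : η ≤ ε / (8 * (C2 + 1)) := (min_le_right _ _).trans (min_le_right _ _)
    rw [le_div_iff₀ (by positivity)] at this
    nlinarith
  refine ⟨η, hηp, min ρ0 r, lt_min hρ0 hr, ?_⟩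
  intro α t hα ht hαt hLip ⟨β, hβ, hcont⟩ x hx
  have hα' := abs_le.1 hα
  have ht' := abs_le.1 ht
  have hxr : |x - x0| < r := lt_of_lt_of_le hx (min_le_right _ _)
  have hxr' := abs_lt.1 hxr
  have hαpos : 0 < α := by linarith
  set β' := min β (2 * s) with hβ'
  have hβ1 : β' ≤ β := min_le_left _ _
  have hβ2 : β' ≤ 2 * s := min_le_right _ _
  have hβ3 : t < β' := by
    by_cases h : t < 2 * s
    · exact lt_min hβ h
    · linarith
  have hαx : |u α x0 - u s x0| < ε / 4 := hev (by rw [Real.dist_eq]; linarith)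
  have hαx' := (abs_lt.1 hαx).2
  set v : ℝ → ℝ → ℝ := fun t x => u s x0 + ε / 2 + C1 * (scl κ x - scl κ x0) ^ 2 + C2 * (t - α) with hv
  have hvc : Continuous (Function.uncurry v) := by
    simp only [hv, Function.uncurry_def]; fun_prop
  have hinit : ∀ z ∈ Set.Icc (x0 - r) (x0 + r), u α z ≤ v α z := by
    intro z hz
    have h1 := (abs_le.1 (hLip z hz)).2
    have h2 := hbar z hz
    have h3 : n * |z - x0| ≤ ε / 4 + n ^ 2 / ε * (z - x0) ^ 2 := by
      have : 0 ≤ (ε / 2 - n * |z - x0|) ^ 2 / ε := by positivity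
      have e : (ε / 2 - n * |z - x0|) ^ 2 / ε = ε / 4 - n * |z - x0| + n ^ 2 / ε * (z - x0) ^ 2 := by
        rw [← sq_abs (z - x0)]; field_simp; ring
      linarith
    have h4 : 0 ≤ B / r ^ 2 * (z - x0) ^ 2 := by positivity
    simp only [hv, sub_self, mul_zero, add_zero]
    linarith
  have hlat : ∀ y, (y = x0 - r ∨ y = x0 + r) → ∀ t ∈ Set.Ioo α β', u t y - v t y ≤ 0 := by
    intro y hy t ht
    have htm : t ∈ Set.Icc (s / 2) (2 * s) := ⟨by linarith [ht.1], by linarith [ht.2]⟩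
    have hub : u t y ≤ |B1| + |B2| := by
      rcases hy with rfl | rfl
      · have := (le_abs_self _).trans (hB1 t htm)
        linarith [le_abs_self B1, abs_nonneg B2]
      · have := (le_abs_self _).trans (hB2 t htm)
        linarith [le_abs_self B2, abs_nonneg B1]
    have hym : y ∈ Set.Icc (x0 - r) (x0 + r) := by
      rcases hy with rfl | rfl <;> constructor <;> linarith
    have hyr : (y - x0) ^ 2 = r ^ 2 := by rcases hy with rfl | rfl <;> ring
    have h2 := hbar y hym
    rw [hyr] at h2
    have h3 : (n ^ 2 / ε + B / r ^ 2) * r ^ 2 = n ^ 2 / ε * r ^ 2 + B := by field_simp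
    have h4 : 0 ≤ n ^ 2 / ε * r ^ 2 := by positivity
    have h5 : 0 ≤ C2 * (t - α) := mul_nonneg hC20 (by linarith [ht.1])
    have h6 := neg_abs_le (u s x0)
    simp only [hv]
    linarith
  have key := lemC hκ hp hm hmp (α := α) (β := β') (y1 := x0 - r) (y2 := x0 + r) (by linarith)
    (d := fun t x => u t x - v t x) ?_ ?_ (hlat _ (Or.inl rfl)) (hlat _ (Or.inr rfl)) ?_
    (t := t) (x := x) ⟨hαt, hβ3⟩ ⟨by linarith, by linarith⟩
  · have h1 : C1 * (scl κ x - scl κ x0) ^ 2 < ε / 4 := hex (by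
      rw [Real.dist_eq]; exact lt_of_lt_of_le hx (min_le_left _ _))
    have h2 : C2 * (t - α) ≤ C2 * (2 * η) := mul_le_mul_of_nonneg_left (by linarith) hC20
    simp only [hv] at key
    linarith
  · intro q hq
    have h1 := hcont q.1 ⟨hq.1.1, by linarith [hq.1.2]⟩ q.2 hq.2
    exact (h1.sub hvc.continuousAt).continuousWithinAt
  · intro t' ht' z hz
    obtain ⟨ut, ux, hsol⟩ := hu
    have ht0 : 0 < t' := by linarith [ht'.1]
    refine ⟨ut t' z - C2, fun z => ux t' z - C1 * (2 * (scl κ z - scl κ x0) * (1 / κ z)),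
      m z * ut t' z - C1 * (2 * (1 / κ z)), ?_, ?_, ?_, ?_⟩
    · have h1 : HasDerivAt (fun r : ℝ => v r z) C2 t' := by
        have := (((hasDerivAt_id t').sub_const α).const_mul C2).const_add
          (u s x0 + ε / 2 + C1 * (scl κ z - scl κ x0) ^ 2)
        exact this.congr_deriv (by simp)
      exact (hsol t' ht0 z).1.sub h1
    · refine Eventually.of_forall fun z => ?_
      have h1 : HasDerivAt (v t') (C1 * (2 * (scl κ z - scl κ x0) * (1 / κ z))) z := by
        have := ((((hSd z).sub_const (scl κ x0)).pow 2).const_mul C1).const_add (u s x0 + ε / 2)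
        have := this.add_const (C2 * (t' - α))
        refine this.congr_deriv ?_
        simp
      exact (hsol t' ht0 z).2.1.sub h1
    · have h1 := ((((hSd z).sub_const (scl κ x0)).const_mul 2)).const_mul C1
      have := (hsol t' ht0 z).2.2.sub h1
      refine this.congr_of_eventuallyEq (Eventually.of_forall fun y => ?_)
      have := (hp y).ne'
      simp only [Pi.sub_apply]
      field_simp
    · have h1 := (le_abs_self _).trans (hcp z ⟨hz.1.le, hz.2.le⟩)
      have hmk := mul_pos (hmp z) (hp z)
      have h2 : 1 / κ z ≤ m z * cp := by
        have : 1 / κ z = m z * (1 / (m z * κ z)) := by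
          have := (hp z).ne'; have := (hmp z).ne'; field_simp
        rw [this]; exact mul_le_mul_of_nonneg_left h1 (hmp z).le
      have h3 := mul_le_mul_of_nonneg_left h2 hC10
      rw [hC2]; linarith
  · have hnear : ∀ᶠ t' in 𝓝[>] α, t' ∈ Set.Ioo α β' := Ioo_mem_nhdsGT (by linarith)
    refine init_of_le (by linarith) ?_ (b := fun t' z => |u t' z - u α z|) ?_ ?_ ?_
      ((hl α hαpos (x0 - r) (x0 + r) (by linarith)).mono_left nhdsWithin_le_nhds)
    · filter_upwards [hnear] with t' ht'
      have : Continuous (v t') := by simp only [hv]; fun_prop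
      exact ((hu.cx (by linarith [ht'.1])).sub this).continuousOn
    · filter_upwards [hnear] with t' ht'
      exact ((hu.cx (by linarith [ht'.1])).sub (hu.cx hαpos)).abs.continuousOn
    · filter_upwards [hnear] with t' ht' z hz
      have h1 := hinit z hz
      have h2 : v α z ≤ v t' z := by
        have : 0 ≤ C2 * (t' - α) := mul_nonneg hC20 (by linarith [ht'.1])
        simp only [hv, sub_self, mul_zero]; linarith
      refine max_le ?_ (abs_nonneg _)
      refine le_trans ?_ (le_abs_self _)
      linarith
    · exact Eventually.of_forall fun t' => le_rfl

lemma leftlim {κ m : ℝ → ℝ} (hκ : Continuous κ) (hp : ∀ x, 0 < κ x) (hm : Continuous m)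
    (hmp : ∀ x, 0 < m x) {u : ℝ → ℝ → ℝ} (hu : Sol κ m u) (hl : LC u) {a s x0 r ε : ℝ}
    (ha : 0 < a) (has : a < s) (hr : 0 < r) (hε : 0 < ε)
    (hcont : ∀ t ∈ Set.Ico a s, ∀ x ∈ Set.Icc (x0 - r) (x0 + r),
        ContinuousAt (Function.uncurry u) (t, x)) :
    ∀ᶠ q : ℝ × ℝ in 𝓝 (s, x0), q.1 < s → u q.1 q.2 ≤ u s x0 + ε := by
  set ω := ε / 3 with hω
  have hωp : 0 < ω := by positivity
  set t0 := (a + s) / 2 with ht0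
  have hcomp : IsCompact (Set.Icc a s) := isCompact_Icc
  have huc : ∀ y, ∃ δ > 0, ∀ t ∈ Set.Icc a s, ∀ t' ∈ Set.Icc a s, |t - t'| < δ →
      |u t y - u t' y| < ω := by
    intro y
    have hc : ContinuousOn (fun t => u t y) (Set.Icc a s) := fun t ht =>
      (hu.ct (by linarith [ht.1]) y).continuousWithinAt
    have := Metric.uniformContinuousOn_iff.1 (hcomp.uniformContinuousOn_of_continuous hc) ω hωp
    obtain ⟨δ, hδ, h⟩ := this
    exact ⟨δ, hδ, fun t ht t' ht' h' => h t ht t' ht' h'⟩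
  obtain ⟨δ1, hδ1, h1⟩ := huc (x0 - r)
  obtain ⟨δ2, hδ2, h2⟩ := huc (x0 + r)
  obtain ⟨δ3, hδ3, h3⟩ := huc x0
  have hK : IsCompact (Set.Icc a t0 ×ˢ Set.Icc (x0 - r) (x0 + r)) := isCompact_Icc.prod isCompact_Icc
  have hKc : ContinuousOn (Function.uncurry u) (Set.Icc a t0 ×ˢ Set.Icc (x0 - r) (x0 + r)) := by
    intro q hq
    exact (hcont q.1 ⟨hq.1.1, by linarith [hq.1.2]⟩ q.2 hq.2).continuousWithinAt
  obtain ⟨δ4, hδ4, h4⟩ := Metric.uniformContinuousOn_iff.1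
    (hK.uniformContinuousOn_of_continuous hKc) ω hωp
  set h := min (min δ1 δ2) (min (min δ3 δ4) (s - a)) / 4 with hh
  have hmin : 0 < min (min δ1 δ2) (min (min δ3 δ4) (s - a)) :=
    lt_min (lt_min hδ1 hδ2) (lt_min (lt_min hδ3 hδ4) (by linarith))
  have hh0 : 0 < h := by positivity
  have e0 : 4 * h = min (min δ1 δ2) (min (min δ3 δ4) (s - a)) := by rw [hh]; ring
  have g1 : 4 * h ≤ δ1 := e0.le.trans ((min_le_left _ _).trans (min_le_left _ _))
  have g2 : 4 * h ≤ δ2 := e0.le.trans ((min_le_left _ _).trans (min_le_right _ _))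
  have g3 : 4 * h ≤ δ3 :=
    e0.le.trans ((min_le_right _ _).trans ((min_le_left _ _).trans (min_le_left _ _)))
  have g4 : 4 * h ≤ δ4 :=
    e0.le.trans ((min_le_right _ _).trans ((min_le_left _ _).trans (min_le_right _ _)))
  have g5 : 4 * h ≤ s - a := e0.le.trans ((min_le_right _ _).trans (min_le_right _ _))
  have habs : |h| = h := abs_of_pos hh0
  have hx0m : x0 ∈ Set.Icc (x0 - r) (x0 + r) := ⟨by linarith, by linarith⟩
  have key : ∀ t ∈ Set.Ioo t0 s, ∀ x ∈ Set.Icc (x0 - r) (x0 + r), u t x - u (t - h) x - ω ≤ 0 := by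
    intro t ht x hx
    have hlat : ∀ y δ, (∀ t ∈ Set.Icc a s, ∀ t' ∈ Set.Icc a s, |t - t'| < δ →
      |u t y - u t' y| < ω) → 4 * h ≤ δ → ∀ t ∈ Set.Ioo t0 s, u t y - u (t - h) y - ω ≤ 0 := by
      intro y δ hy hδ t ht
      have := hy t ⟨by linarith [ht.1], ht.2.le⟩ (t - h) ⟨by linarith [ht.1], by linarith [ht.2]⟩
        (by rw [sub_sub_cancel, habs]; linarith)
      linarith [(abs_lt.1 this).2]
    refine lemC hκ hp hm hmp (α := t0) (β := s) (y1 := x0 - r) (y2 := x0 + r) (by linarith)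
      (d := fun t x => u t x - u (t - h) x - ω) ?_ ?_ (hlat _ _ h1 g1) (hlat _ _ h2 g2) ?_ ht hx
    · intro q hq
      have c1 := hcont q.1 ⟨by linarith [hq.1.1], hq.1.2⟩ q.2 hq.2
      have c2 := hcont (q.1 - h) ⟨by linarith [hq.1.1], by linarith [hq.1.2]⟩ q.2 hq.2
      have c3 : ContinuousAt (fun q : ℝ × ℝ => Function.uncurry u (q.1 - h, q.2)) q :=
        ContinuousAt.comp (f := fun q : ℝ × ℝ => (q.1 - h, q.2)) c2 (by fun_prop)
      exact ((c1.sub c3).sub continuousAt_const).continuousWithinAt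
    · intro t' ht' z hz
      obtain ⟨ut, ux, hsol⟩ := hu
      have p1 : 0 < t' := by linarith [ht'.1]
      have p2 : 0 < t' - h := by linarith [ht'.1]
      refine ⟨ut t' z - ut (t' - h) z, fun z => ux t' z - ux (t' - h) z,
        m z * ut t' z - m z * ut (t' - h) z, ?_, ?_, ?_, le_of_eq (by ring)⟩
      · exact ((hsol t' p1 z).1.sub (HasDerivAt.comp_sub_const t' h (hsol (t' - h) p2 z).1)).sub_const ω
      · exact Eventually.of_forall fun z =>
          ((hsol t' p1 z).2.1.sub (hsol (t' - h) p2 z).2.1).sub_const ω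
      · have := (hsol t' p1 z).2.2.sub (hsol (t' - h) p2 z).2.2
        simp only [mul_sub]
        exact this
    · have hnear : ∀ᶠ t' in 𝓝[>] t0, t' ∈ Set.Ioo t0 s := Ioo_mem_nhdsGT (by linarith)
      have l1 := (hl t0 (by linarith) (x0 - r) (x0 + r) (by linarith))
      have l2 := (hl (t0 - h) (by linarith) (x0 - r) (x0 + r) (by linarith)).comp
        (show Tendsto (fun t => t - h) (𝓝 t0) (𝓝 (t0 - h)) from by
          apply Continuous.tendsto; fun_prop)
      have l3 := l1.add l2
      rw [add_zero] at l3
      refine init_of_le (by linarith) ?_ (b := fun t' z => |u t' z - u t0 z|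
        + |u (t' - h) z - u (t0 - h) z|) ?_ ?_ ?_ (l3.mono_left nhdsWithin_le_nhds)
      · filter_upwards [hnear] with t' ht'
        have c1 := hu.cx (show 0 < t' by linarith [ht'.1])
        have c2 := hu.cx (show 0 < t' - h by linarith [ht'.1])
        exact ((c1.sub c2).sub continuous_const).continuousOn
      · filter_upwards [hnear] with t' ht'
        have c1 := hu.cx (show 0 < t' by linarith [ht'.1])
        have c2 := hu.cx (show 0 < t' - h by linarith [ht'.1])
        have c3 := hu.cx (show 0 < t0 by linarith [ht'.1])
        have c4 := hu.cx (show 0 < t0 - h by linarith [ht'.1])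
        exact ((c1.sub c3).abs.add (c2.sub c4).abs).continuousOn
      · filter_upwards [hnear] with t' ht' z hz
        have := h4 (t0, z) ⟨⟨by linarith, le_rfl⟩, hz⟩ (t0 - h, z) ⟨⟨by linarith, by linarith⟩, hz⟩ (by
          rw [Prod.dist_eq]; simp only [dist_self]
          rw [max_eq_left dist_nonneg, Real.dist_eq, sub_sub_cancel, habs]; linarith)
        rw [Real.dist_eq] at this
        have := (abs_lt.1 this).2
        simp only [Function.uncurry] at this
        refine max_le ?_ (by positivity)
        have := le_abs_self (u t' z - u t0 z)
        have := neg_abs_le (u (t' - h) z - u (t0 - h) z)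
        linarith
      · filter_upwards [hnear] with t' ht'
        have c1 := hu.cx (show 0 < t' by linarith [ht'.1])
        have c2 := hu.cx (show 0 < t' - h by linarith [ht'.1])
        have c3 := hu.cx (show 0 < t0 by linarith [ht'.1])
        have c4 := hu.cx (show 0 < t0 - h by linarith [ht'.1])
        rw [intervalIntegral.integral_add]
        · rfl
        · exact (c1.sub c3).abs.intervalIntegrable _ _
        · exact (c2.sub c4).abs.intervalIntegrable _ _
  have c2 := hcont (s - h) ⟨by linarith, by linarith⟩ x0 hx0m
  have c3 : ContinuousAt (fun q : ℝ × ℝ => Function.uncurry u (q.1 - h, q.2)) (s, x0) :=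
    ContinuousAt.comp (g := Function.uncurry u) (x := ((s, x0) : ℝ × ℝ))
      (f := fun q : ℝ × ℝ => (q.1 - h, q.2)) c2 (by fun_prop)
  have e3 : ∀ᶠ q : ℝ × ℝ in 𝓝 (s, x0), u (q.1 - h) q.2 < u (s - h) x0 + ω :=
    c3.eventually (gt_mem_nhds (show Function.uncurry u (s - h, x0) < u (s - h) x0 + ω by
      simp only [Function.uncurry]; linarith))
  have e4 : ∀ᶠ q : ℝ × ℝ in 𝓝 (s, x0), q.1 ∈ Set.Ioi t0 :=
    (continuous_fst.tendsto (s, x0)).eventually (Ioi_mem_nhds (by simp only; linarith))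
  have e5 : ∀ᶠ q : ℝ × ℝ in 𝓝 (s, x0), q.2 ∈ Set.Icc (x0 - r) (x0 + r) :=
    (continuous_snd.tendsto (s, x0)).eventually (Icc_mem_nhds (by simp only; linarith)
      (by simp only; linarith))
  filter_upwards [e3, e4, e5] with q q3 q4 q5 q6
  have k := key q.1 ⟨q4, q6⟩ q.2 q5
  have := h3 s ⟨has.le, le_rfl⟩ (s - h) ⟨by linarith, by linarith⟩ (by
    rw [sub_sub_cancel, habs]; linarith)
  have := (abs_lt.1 this).1
  have : ε = 3 * ω := by rw [hω]; ring
  linarith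

lemma usc_at {κ m : ℝ → ℝ} (hκ : Continuous κ) (hp : ∀ x, 0 < κ x) (hm : Continuous m)
    (hmp : ∀ x, 0 < m x) {u : ℝ → ℝ → ℝ} (hu : Sol κ m u) (hl : LC u) {K : Set ℝ}
    {s x0 r n η1 : ℝ} (hs : s ∈ K) (hr : 0 < r) (hn : 0 ≤ n) (hη1 : 0 < η1) (hηs1 : η1 < s)
    (hKc : IsClosed (K ∩ Set.Icc (s - η1) (s + η1)))
    (hlip : ∀ k ∈ K, |k - s| ≤ η1 → ∀ x ∈ Set.Icc (x0 - r) (x0 + r),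
      |u k x - u k x0| ≤ n * |x - x0|)
    (hgood : ∀ t, 0 < t → t ∉ K → ∃ δ > 0, ∀ t' ∈ Set.Ioo (t - δ) (t + δ),
      ∀ x ∈ Set.Icc (x0 - r) (x0 + r), ContinuousAt (Function.uncurry u) (t', x))
    {ε : ℝ} (hε : 0 < ε) : ∀ᶠ q : ℝ × ℝ in 𝓝 (s, x0), u q.1 q.2 ≤ u s x0 + ε := by
  have hs0 : 0 < s := by linarith
  obtain ⟨η0, hη0, ρ, hρ, hbar⟩ := barrier hκ hp hm hmp hu hl (x0 := x0) (n := n) hs0 hr hε hn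
  set η := min η0 η1 with hη
  have hηp : 0 < η := lt_min hη0 hη1
  have l0 : η ≤ η0 := min_le_left _ _
  have l1 : η ≤ η1 := min_le_right _ _
  -- filter facts
  have f1 : ∀ᶠ q : ℝ × ℝ in 𝓝 (s, x0), q.1 ∈ Set.Ioo (s - η) (s + η) :=
    (continuous_fst.tendsto (s, x0)).eventually (Ioo_mem_nhds (by simp only; linarith)
      (by simp only; linarith))
  have f2 : ∀ᶠ q : ℝ × ℝ in 𝓝 (s, x0), |q.2 - x0| < ρ := by
    have : Continuous (fun q : ℝ × ℝ => |q.2 - x0|) := by fun_prop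
    have := this.tendsto (s, x0)
    simp only [sub_self, abs_zero] at this
    exact this.eventually (gt_mem_nhds hρ)
  have f3 : ∀ᶠ q : ℝ × ℝ in 𝓝 (s, x0), q.2 ∈ Set.Icc (x0 - r) (x0 + r) :=
    (continuous_snd.tendsto (s, x0)).eventually (Icc_mem_nhds (by simp only; linarith)
      (by simp only; linarith))
  have f4 : ∀ᶠ q : ℝ × ℝ in 𝓝 (s, x0), n * |q.2 - x0| < ε / 2 := by
    have : Continuous (fun q : ℝ × ℝ => n * |q.2 - x0|) := by fun_prop
    have := this.tendsto (s, x0)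
    simp only [sub_self, abs_zero, mul_zero] at this
    exact this.eventually (gt_mem_nhds (by positivity))
  have f5 : ∀ᶠ q : ℝ × ℝ in 𝓝 (s, x0), u q.1 x0 < u s x0 + ε / 2 := by
    have h1 : ∀ᶠ t in 𝓝 s, u t x0 < u s x0 + ε / 2 :=
      (hu.ct hs0 x0).eventually (gt_mem_nhds (by linarith))
    exact (continuous_fst.tendsto (s, x0)).eventually h1
  have P : ∀ k0 ∈ K, |k0 - s| ≤ η → ∀ t x, k0 ≤ t → |t - s| ≤ η → t ∉ K → |x - x0| < ρ →
      u t x ≤ u s x0 + ε := by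
    intro k0 hk0 hk0s t x hk0t hts htK hx
    have a1 := abs_le.1 hk0s
    have a2 := abs_le.1 hts
    have hcl : IsClosed (K ∩ Set.Icc k0 t) := by
      have : K ∩ Set.Icc k0 t = (K ∩ Set.Icc (s - η1) (s + η1)) ∩ Set.Icc k0 t := by
        ext z; simp only [Set.mem_inter_iff, Set.mem_Icc]
        constructor
        · rintro ⟨h1, h2, h3⟩; exact ⟨⟨h1, by linarith, by linarith⟩, h2, h3⟩
        · rintro ⟨⟨h1, -⟩, h2⟩; exact ⟨h1, h2⟩
      rw [this]; exact hKc.inter isClosed_Icc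
    have hne : (K ∩ Set.Icc k0 t).Nonempty := ⟨k0, hk0, le_rfl, hk0t⟩
    have hbd : BddAbove (K ∩ Set.Icc k0 t) := ⟨t, fun z hz => hz.2.2⟩
    set α := sSup (K ∩ Set.Icc k0 t) with hα
    have hαm : α ∈ K ∩ Set.Icc k0 t := hcl.csSup_mem hne hbd
    have hαt : α < t := lt_of_le_of_ne hαm.2.2 (by rintro h; rw [h] at hαm; exact htK hαm.1)
    have hαs : |α - s| ≤ η := abs_le.2 ⟨by linarith [hαm.2.1], by linarith⟩
    obtain ⟨δ, hδ, hc⟩ := hgood t (by linarith) htK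
    refine hbar α t (hαs.trans l0) (hts.trans l0) hαt (hlip α hαm.1 (hαs.trans l1))
      ⟨t + δ, by linarith, ?_⟩ x hx
    intro t' ht' z hz
    rcases le_or_gt t' t with h | h
    · have hnot : t' ∉ K := by
        intro hK
        have : t' ≤ α := le_csSup hbd ⟨hK, by linarith [hαm.2.1, ht'.1], h⟩
        linarith [ht'.1]
      obtain ⟨δ', hδ', hc'⟩ := hgood t' (by linarith [ht'.1, hαm.2.1]) hnot
      exact hc' t' ⟨by linarith, by linarith⟩ z hz
    · exact hc t' ⟨by linarith, ht'.2⟩ z hz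
  have PK : ∀ q : ℝ × ℝ, q.1 ∈ K → q.1 ∈ Set.Ioo (s - η) (s + η) → q.2 ∈ Set.Icc (x0 - r) (x0 + r) →
      n * |q.2 - x0| < ε / 2 → u q.1 x0 < u s x0 + ε / 2 → u q.1 q.2 ≤ u s x0 + ε := by
    intro q h1 h2 h3 h4 h5
    have := (abs_le.1 (hlip q.1 h1 (abs_le.2 ⟨by linarith [h2.1], by linarith [h2.2]⟩) q.2 h3)).2
    linarith
  by_cases hA : ∃ k0 ∈ K, s - η ≤ k0 ∧ k0 < s
  · obtain ⟨k0, hk0, hk1, hk2⟩ := hA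
    have f6 : ∀ᶠ q : ℝ × ℝ in 𝓝 (s, x0), q.1 ∈ Set.Ioi k0 :=
      (continuous_fst.tendsto (s, x0)).eventually (Ioi_mem_nhds hk2)
    filter_upwards [f1, f2, f3, f4, f5, f6] with q q1 q2 q3 q4 q5 q6
    by_cases hqK : q.1 ∈ K
    · exact PK q hqK q1 q3 q4 q5
    · exact P k0 hk0 (abs_le.2 ⟨by linarith, by linarith⟩) q.1 q.2 (le_of_lt q6)
        (abs_le.2 ⟨by linarith [q1.1], by linarith [q1.2]⟩) hqK q2
  · push Not at hA
    have f6 := leftlim hκ hp hm hmp hu hl (a := s - η) (s := s) (x0 := x0) (by linarith) (by linarith)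
      hr hε (by
        intro t ht x hx
        have hnot : t ∉ K := fun hK => by
          have := hA t hK ht.1
          linarith [ht.2]
        obtain ⟨δ', hδ', hc'⟩ := hgood t (by linarith [ht.1]) hnot
        exact hc' t ⟨by linarith, by linarith⟩ x hx)
    filter_upwards [f1, f2, f3, f4, f5, f6] with q q1 q2 q3 q4 q5 q6
    rcases lt_or_ge q.1 s with h | h
    · exact q6 h
    by_cases hqK : q.1 ∈ K
    · exact PK q hqK q1 q3 q4 q5
    · exact P s hs (by simp [hηp.le]) q.1 q.2 h
        (abs_le.2 ⟨by linarith [q1.1], by linarith [q1.2]⟩) hqK q2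

lemma Sol.lip {κ m : ℝ → ℝ} (hκ : Continuous κ) (hp : ∀ x, 0 < κ x) {u : ℝ → ℝ → ℝ}
    (hu : Sol κ m u) {t R : ℝ} (ht : 0 < t) :
    ∃ n : ℕ, ∀ x ∈ Set.Icc (-R) R, ∀ y ∈ Set.Icc (-R) R, |u t x - u t y| ≤ n * |x - y| := by
  obtain ⟨ut, ux, h⟩ := hu
  have hc : Continuous (ux t) := by
    have h1 : Continuous (fun z => κ z * ux t z) :=
      continuous_iff_continuousAt.2 fun x => (h t ht x).2.2.continuousAt
    have h2 : ux t = fun z => (κ z * ux t z) / κ z := by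
      ext z; have := (hp z).ne'; field_simp
    rw [h2]; exact h1.div hκ (fun x => (hp x).ne')
  obtain ⟨M, hM⟩ := isCompact_Icc.exists_bound_of_continuousOn (s := Set.Icc (-R) R) hc.continuousOn
  obtain ⟨n, hn⟩ := exists_nat_ge M
  refine ⟨n, fun x hx y hy => ?_⟩
  have := (convex_Icc (-R) R).norm_image_sub_le_of_norm_hasDerivWithin_le (f := u t) (f' := ux t)
    (C := n) (fun z hz => (h t ht z).2.1.hasDerivWithinAt) (fun z hz => (hM z hz).trans hn) hy hx
  simpa [Real.norm_eq_abs] using this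

theorem jointcont {κ m : ℝ → ℝ} (hκ : Continuous κ) (hp : ∀ x, 0 < κ x) (hm : Continuous m)
    (hmp : ∀ x, 0 < m x) {u : ℝ → ℝ → ℝ} (hu : Sol κ m u) (hl : LC u) {t x : ℝ} (ht : 0 < t) :
    ContinuousAt (Function.uncurry u) (t, x) := by
  set R := |x| + 1 with hR
  set Good : Set ℝ := {t | ∃ δ > 0, ∀ s ∈ Set.Ioo (t - δ) (t + δ), ∀ x ∈ Set.Ioo (-R) R,
    ContinuousAt (Function.uncurry u) (s, x)} with hGood
  have hGo : IsOpen Good := by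
    rw [Metric.isOpen_iff]
    rintro t ⟨δ, hδ, h⟩
    refine ⟨δ / 2, by positivity, fun s hs => ⟨δ / 2, by positivity, fun s' hs' => h s' ?_⟩⟩
    rw [Metric.mem_ball, Real.dist_eq, abs_lt] at hs
    exact ⟨by linarith [hs.1, hs'.1], by linarith [hs.2, hs'.2]⟩
  set K : Set ℝ := Set.Ioi 0 ∩ Goodᶜ with hK
  suffices hKe : K = ∅ by
    have : t ∈ Good := by
      by_contra hcon
      have : t ∈ K := ⟨ht, hcon⟩
      rw [hKe] at this; exact this
    obtain ⟨δ, hδ, h⟩ := this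
    have hx := abs_lt.1 (show |x| < R by linarith)
    exact h t ⟨by linarith, by linarith⟩ x hx
  by_contra hne
  have hne : K.Nonempty := Set.nonempty_iff_ne_empty.2 hne
  have hlc : IsLocallyClosed K := ⟨Set.Ioi 0, Goodᶜ, isOpen_Ioi, hGo.isClosed_compl, rfl⟩
  have : LocallyCompactSpace K := hlc.locallyCompactSpace
  have : Nonempty K := hne.to_subtype
  set E : ℕ → Set K := fun n => {k | ∀ x ∈ Set.Icc (-R) R, ∀ y ∈ Set.Icc (-R) R,
    |u k x - u k y| ≤ n * |x - y|} with hE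
  have hcK : ∀ x, Continuous (fun k : K => u k x) := by
    intro x
    rw [continuous_iff_continuousAt]
    intro k
    exact (hu.ct k.2.1 x).comp continuousAt_subtype_val
  have hEc : ∀ n, IsClosed (E n) := by
    intro n
    have : E n = ⋂ x ∈ Set.Icc (-R) R, ⋂ y ∈ Set.Icc (-R) R,
        {k : K | |u k x - u k y| ≤ n * |x - y|} := by
      ext k; simp only [hE, Set.mem_setOf_eq, Set.mem_iInter]
    rw [this]
    refine isClosed_biInter fun x _ => isClosed_biInter fun y _ => ?_
    exact isClosed_le ((hcK x).sub (hcK y)).abs continuous_const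
  have hEu : ⋃ n, E n = Set.univ := by
    rw [Set.eq_univ_iff_forall]
    intro k
    obtain ⟨n, hn⟩ := hu.lip hκ hp (R := R) (show 0 < (k : ℝ) from k.2.1)
    exact Set.mem_iUnion.2 ⟨n, hn⟩
  obtain ⟨n, k, hk⟩ := nonempty_interior_of_iUnion_of_closed hEc hEu
  rw [mem_interior_iff_mem_nhds, nhds_subtype_eq_comap, mem_comap] at hk
  obtain ⟨U, hU, hUE⟩ := hk
  obtain ⟨η, hη, hball⟩ := Metric.mem_nhds_iff.1 hU
  have hk0 : 0 < (k : ℝ) := k.2.1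
  have hlipK : ∀ k' ∈ K, |k' - k| < η → ∀ x ∈ Set.Icc (-R) R, ∀ y ∈ Set.Icc (-R) R,
      |u k' x - u k' y| ≤ n * |x - y| := by
    intro k' hk' hd
    exact hUE (show (⟨k', hk'⟩ : K) ∈ Subtype.val ⁻¹' U from hball hd)
  apply k.2.2
  set δ := min η k with hδ
  have hδp : 0 < δ := lt_min hη hk0
  have hδ1 : δ ≤ η := min_le_left _ _
  have hδ2 : δ ≤ k := min_le_right _ _
  refine ⟨δ, hδp, fun s hs x0 hx0 => ?_⟩
  have hs0 : 0 < s := by linarith [hs.1]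
  by_cases hsK : s ∈ K
  swap
  · have : s ∈ Good := by
      by_contra hcon; exact hsK ⟨hs0, hcon⟩
    obtain ⟨δ', hδ', h⟩ := this
    exact h s ⟨by linarith, by linarith⟩ x0 hx0
  set r := min (x0 + R) (R - x0) / 2 with hr
  have hrp : 0 < r := by
    have := lt_min (show 0 < x0 + R by linarith [hx0.1]) (show 0 < R - x0 by linarith [hx0.2])
    positivity
  have hr1 : 2 * r ≤ x0 + R := by rw [hr]; linarith [min_le_left (x0 + R) (R - x0)]
  have hr2 : 2 * r ≤ R - x0 := by rw [hr]; linarith [min_le_right (x0 + R) (R - x0)]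
  set η1 := min (s - (k - δ)) ((k + δ) - s) / 2 with hη1
  have hηp1 : 0 < η1 := by
    have := lt_min (show 0 < s - (k - δ) by linarith [hs.1]) (show 0 < (k + δ) - s by linarith [hs.2])
    positivity
  have he1 : 2 * η1 ≤ s - (k - δ) := by
    rw [hη1]; linarith [min_le_left (s - (k - δ)) ((k + δ) - s)]
  have he2 : 2 * η1 ≤ (k + δ) - s := by
    rw [hη1]; linarith [min_le_right (s - (k - δ)) ((k + δ) - s)]
  have hKc : IsClosed (K ∩ Set.Icc (s - η1) (s + η1)) := by
    have : K ∩ Set.Icc (s - η1) (s + η1) = Goodᶜ ∩ Set.Icc (s - η1) (s + η1) := by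
      ext z; simp only [hK, Set.mem_inter_iff, Set.mem_Ioi, Set.mem_Icc]
      constructor
      · rintro ⟨⟨h1, h2⟩, h3⟩; exact ⟨h2, h3⟩
      · rintro ⟨h1, h2, h3⟩; exact ⟨⟨by linarith, h1⟩, h2, h3⟩
    rw [this]; exact hGo.isClosed_compl.inter isClosed_Icc
  have hwin : ∀ x ∈ Set.Icc (x0 - r) (x0 + r), x ∈ Set.Ioo (-R) R := fun x hx =>
    ⟨by linarith [hx.1], by linarith [hx.2]⟩
  have hg : ∀ t, 0 < t → t ∉ K → ∃ δ > 0, ∀ t' ∈ Set.Ioo (t - δ) (t + δ),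
      ∀ x ∈ Set.Icc (x0 - r) (x0 + r), ContinuousAt (Function.uncurry u) (t', x) := by
    intro t ht htK
    have : t ∈ Good := by
      by_contra hcon; exact htK ⟨ht, hcon⟩
    obtain ⟨δ', hδ', h⟩ := this
    exact ⟨δ', hδ', fun t' ht' x hx => h t' ht' x (hwin x hx)⟩
  have hlp : ∀ k ∈ K, |k - s| ≤ η1 → ∀ x ∈ Set.Icc (x0 - r) (x0 + r),
      |u k x - u k x0| ≤ n * |x - x0| := by
    intro k' hk' hd x hx
    have := abs_le.1 hd
    refine hlipK k' hk' (abs_lt.2 ⟨by linarith, by linarith⟩) x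
      (Set.Ioo_subset_Icc_self (hwin x hx)) x0 (Set.Ioo_subset_Icc_self hx0)
  rw [Metric.continuousAt_iff']
  intro ε hε
  have U1 := usc_at hκ hp hm hmp hu hl (K := K) hsK hrp (Nat.cast_nonneg n) hηp1 (by linarith)
    hKc hlp hg (half_pos hε)
  have U2 := usc_at hκ hp hm hmp hu.neg hl.neg (K := K) (x0 := x0) hsK hrp (Nat.cast_nonneg n)
    hηp1 (by linarith) hKc (by
      intro k' hk' hd x hx
      have := hlp k' hk' hd x hx
      rw [← abs_neg]; convert this using 2; ring) (by
      intro t ht htK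
      obtain ⟨δ', hδ', h⟩ := hg t ht htK
      exact ⟨δ', hδ', fun t' ht' x hx => (h t' ht' x hx).neg⟩) (half_pos hε)
  filter_upwards [U1, U2] with q q1 q2
  rw [Real.dist_eq, abs_lt]
  simp only [Function.uncurry]
  constructor <;> linarith

def JC (u : ℝ → ℝ → ℝ) : Prop := ∀ t, 0 < t → ∀ x, ContinuousAt (Function.uncurry u) (t, x)

lemma Sol.lsub {κ m : ℝ → ℝ} {u : ℝ → ℝ → ℝ} (h : Sol κ m u) {t : ℝ} (ht : 0 < t) (x : ℝ) :
    LSubAt κ m u t x := by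
  obtain ⟨ut, ux, h⟩ := h
  exact ⟨ut t x, ux t, m x * ut t x, (h t ht x).1,
    Eventually.of_forall fun z => (h t ht z).2.1, (h t ht x).2.2, le_rfl⟩

lemma Lam_int {κ : ℝ → ℝ} {y1 y2 x t1 t2 : ℝ} {u : ℝ → ℝ → ℝ}
    (hi : ∀ x, IntervalIntegrable (fun t => u t x) volume t1 t2) :
    ∫ t in t1..t2, Lam κ y1 y2 x (u t) = Lam κ y1 y2 x (fun x => ∫ t in t1..t2, u t x) := by
  unfold Lam
  have i1 : IntervalIntegrable (fun t => (1 - lamc κ y1 y2 x) * u t y1) volume t1 t2 :=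
    (hi y1).const_mul _
  have i2 : IntervalIntegrable (fun t => lamc κ y1 y2 x * u t y2) volume t1 t2 :=
    (hi y2).const_mul _
  rw [intervalIntegral.integral_sub (i1.add i2) (hi x)]
  rw [← intervalIntegral.integral_const_mul, ← intervalIntegral.integral_const_mul,
    ← intervalIntegral.integral_add i1 i2]

lemma Thf_neg {κ : ℝ → ℝ} {y1 y2 x : ℝ} {f : ℝ → ℝ} :
    Thf κ y1 y2 x (fun z => - f z) = - Thf κ y1 y2 x f := by
  unfold Thf
  rw [← intervalIntegral.integral_neg]; congr 1; ext z; ring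

lemma lemIE {κ m : ℝ → ℝ} (hκ : Continuous κ) (hp : ∀ x, 0 < κ x) (hm : Continuous m)
    (hmp : ∀ x, 0 < m x) {u : ℝ → ℝ → ℝ} (hu : Sol κ m u) (hc : JC u) {t1 t2 : ℝ} (ht1 : 0 < t1)
    (h12 : t1 ≤ t2) : ∃ V' : ℝ → ℝ, ∀ x,
      HasDerivAt (fun x => ∫ t in t1..t2, u t x) (V' x) x ∧
      HasDerivAt (fun z => κ z * V' z) (m x * (u t2 x - u t1 x)) x := by
  have c1 := hu.cx ht1
  have c2 := hu.cx (show 0 < t2 by linarith)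
  set f : ℝ → ℝ := fun z => m z * (u t2 z - u t1 z) with hf
  have hfc : Continuous f := by fun_prop
  set V : ℝ → ℝ := fun x => ∫ t in t1..t2, u t x with hV
  have hi : ∀ x, IntervalIntegrable (fun t => u t x) volume t1 t2 := by
    intro x
    apply ContinuousOn.intervalIntegrable
    intro t ht
    rw [Set.uIcc_of_le h12] at ht
    exact (hu.ct (by linarith [ht.1]) x).continuousWithinAt
  have key : ∀ y1 y2, y1 < y2 → ∀ x ∈ Set.Icc y1 y2, Thf κ y1 y2 x f = Lam κ y1 y2 x V := by
    intro y1 y2 hy x hx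
    have hcl : ∀ u : ℝ → ℝ → ℝ, JC u →
        ContinuousOn (Function.uncurry u) (Set.Icc (t1 / 2) (t2 + 1) ×ˢ Set.Icc y1 y2) := by
      intro u hc q hq
      exact (hc q.1 (by linarith [hq.1.1]) q.2).continuousWithinAt
    have a1 := lemS hκ hp hm hmp (a := t1 / 2) (b := t2 + 1) hy hx (by linarith) h12 (by linarith)
      (hcl u hc) (fun s hs x _ => (hu.lsub (by linarith [hs.1]) x).tsat)
    have a2 := lemS hκ hp hm hmp (a := t1 / 2) (b := t2 + 1) hy hx (by linarith) h12 (by linarith)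
      (hcl (fun t x => - u t x) (fun t ht x => (hc t ht x).neg))
      (fun s hs x _ => (hu.neg.lsub (by linarith [hs.1]) x).tsat)
    rw [Lam_int hi] at a1
    rw [Lam_int (u := fun t x => - u t x) (fun x => (hi x).neg)] at a2
    simp only [mul_neg, Thf_neg, intervalIntegral.integral_neg] at a2
    have e1 : Lam κ y1 y2 x (fun x => - ∫ t in t1..t2, u t x) = - Lam κ y1 y2 x V := by
      simp only [Lam, hV]; ring
    rw [e1] at a2
    have e2 : Thf κ y1 y2 x f = Thf κ y1 y2 x (fun z => m z * u t2 z)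
        - Thf κ y1 y2 x (fun z => m z * u t1 z) := by
      have := Thf_sub_smul hκ hp (y1 := y1) (y2 := y2) (x := x) (f := fun z => m z * u t2 z)
        (g := fun z => m z * u t1 z) (by fun_prop) (by fun_prop) (-1)
      rw [sub_eq_add_neg, ← neg_one_mul, ← this]
      congr 1; ext z; simp only [hf]; ring
    rw [e2]; linarith
  have loc : ∀ x0, ∃ B, ∀ z ∈ Set.Ioo (x0 - 1) (x0 + 1),
      HasDerivAt V ((B + ∫ y in (x0 - 1)..z, f y) * (1 / κ z)) z := by
    intro x0
    set y1 := x0 - 1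
    set y2 := x0 + 1
    have hy : y1 < y2 := by simp only [y1, y2]; linarith
    have hS := scl_strictMono hκ hp hy
    set g : ℝ → ℝ := fun x => V x - Zf κ y1 f x with hg
    set B := (g y2 - g y1) / (scl κ y2 - scl κ y1) with hB
    refine ⟨B, fun z hz => ?_⟩
    have haff : ∀ x ∈ Set.Icc y1 y2, V x = Zf κ y1 f x + (g y1 + B * (scl κ x - scl κ y1)) := by
      intro x hx
      have := key y1 y2 hy x hx
      rw [← Lam_Zf hκ hp hy hx hfc] at this
      have e : B * (scl κ x - scl κ y1) = lamc κ y1 y2 x * (g y2 - g y1) := by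
        rw [hB]; unfold lamc; ring
      rw [e]
      simp only [Lam, hg] at this ⊢
      linarith
    have hd : HasDerivAt (fun x => Zf κ y1 f x + (g y1 + B * (scl κ x - scl κ y1)))
        ((B + ∫ y in y1..z, f y) * (1 / κ z)) z := by
      refine ((Zf_hasDeriv hκ hp y1 hfc z).add
        ((((scl_hasDeriv hκ hp z).sub_const (scl κ y1)).const_mul B).const_add (g y1))).congr_deriv ?_
      ring
    refine hd.congr_of_eventuallyEq ?_
    filter_upwards [Icc_mem_nhds hz.1 hz.2] with x hx using haff x hx
  refine ⟨deriv V, fun x => ?_⟩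
  obtain ⟨B, hB⟩ := loc x
  have hx : x ∈ Set.Ioo (x - 1) (x + 1) := ⟨by linarith, by linarith⟩
  refine ⟨(hB x hx).differentiableAt.hasDerivAt, ?_⟩
  have hd : HasDerivAt (fun z => B + ∫ y in (x - 1)..z, f y) (f x) x :=
    (intervalIntegral.integral_hasDerivAt_right (hfc.intervalIntegrable _ _)
      hfc.stronglyMeasurable.stronglyMeasurableAtFilter hfc.continuousAt).const_add B
  refine hd.congr_of_eventuallyEq ?_
  filter_upwards [Ioo_mem_nhds hx.1 hx.2] with z hz
  rw [(hB z hz).deriv]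
  have := (hp z).ne'
  field_simp

structure NS (μ : ℝ) (ν κ m : ℝ → ℝ) (u : ℝ → ℝ → ℝ) : Prop where
  sol : Sol κ m u
  nn : ∀ t, 0 < t → ∀ x, 0 ≤ u t x
  mass : ∀ t, 0 < t → ∫ x, ν x * u t x = 1

structure WT (μ : ℝ) (ν κ m : ℝ → ℝ) : Prop where
  hμ : 1 ≤ μ
  cν : Continuous ν
  ν1 : ∀ x, 1 / μ ≤ ν x
  ν2 : ∀ x, ν x ≤ μ
  cκ : Continuous κ
  pκ : ∀ x, 0 < κ x
  cm : Continuous m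
  pm : ∀ x, 0 < m x

lemma WT.pν {μ : ℝ} {ν κ m : ℝ → ℝ} (w : WT μ ν κ m) (x : ℝ) : 0 < ν x :=
  lt_of_lt_of_le (one_div_pos.2 (by linarith [w.hμ])) (w.ν1 x)

lemma WT.le_mul {μ : ℝ} {ν κ m : ℝ → ℝ} (w : WT μ ν κ m) (x : ℝ) {a : ℝ} (ha : 0 ≤ a) :
    a ≤ μ * (ν x * a) := by
  have h1 := w.ν1 x
  have hμ := w.hμ
  rw [div_le_iff₀ (by linarith)] at h1
  nlinarith

lemma NS.int {μ : ℝ} {ν κ m : ℝ → ℝ} {u : ℝ → ℝ → ℝ} (h : NS μ ν κ m u) {t : ℝ} (ht : 0 < t) :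
    Integrable (fun x => ν x * u t x) := by
  by_contra hcon
  have := h.mass t ht
  rw [integral_undef hcon] at this
  exact zero_ne_one this

lemma NS.lc {μ : ℝ} {ν κ m : ℝ → ℝ} (w : WT μ ν κ m) {u : ℝ → ℝ → ℝ} (h : NS μ ν κ m u) :
    LC u := by
  intro t0 ht0 y1 y2 hy
  have hpos : ∀ᶠ t in 𝓝 t0, 0 < t := lt_mem_nhds ht0
  have hlim : Tendsto (fun t => ∫ x, ν x * min (u t x) (u t0 x)) (𝓝 t0)
      (𝓝 (∫ x, ν x * u t0 x)) := by
    apply tendsto_integral_filter_of_dominated_convergence (fun x => ν x * u t0 x)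
    · filter_upwards [hpos] with t ht
      exact (w.cν.mul ((h.sol.cx ht).min (h.sol.cx ht0))).aestronglyMeasurable
    · filter_upwards [hpos] with t ht
      refine Eventually.of_forall fun x => ?_
      have h1 := h.nn t ht x
      have h2 := h.nn t0 ht0 x
      have h3 := w.pν x
      rw [Real.norm_eq_abs, abs_of_nonneg (mul_nonneg h3.le (le_min h1 h2))]
      exact mul_le_mul_of_nonneg_left (min_le_right _ _) h3.le
    · exact h.int ht0
    · refine Eventually.of_forall fun x => ?_
      have h1 : Tendsto (fun t => u t x) (𝓝 t0) (𝓝 (u t0 x)) := h.sol.ct ht0 x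
      have := (h1.min (tendsto_const_nhds (x := u t0 x))).const_mul (ν x)
      simpa using this
  have himin : ∀ t, 0 < t → Integrable (fun x => ν x * min (u t x) (u t0 x)) := by
    intro t ht
    refine (h.int ht0).mono' (w.cν.mul ((h.sol.cx ht).min (h.sol.cx ht0))).aestronglyMeasurable ?_
    refine Eventually.of_forall fun x => ?_
    have h1 := h.nn t ht x
    have h2 := h.nn t0 ht0 x
    have h3 := w.pν x
    rw [Real.norm_eq_abs, abs_of_nonneg (mul_nonneg h3.le (le_min h1 h2))]
    exact mul_le_mul_of_nonneg_left (min_le_right _ _) h3.le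
  have hlim2 : Tendsto (fun t => μ * (2 - 2 * ∫ x, ν x * min (u t x) (u t0 x))) (𝓝 t0) (𝓝 0) := by
    have := ((hlim.const_mul 2).const_sub 2).const_mul μ
    rw [h.mass t0 ht0] at this
    simpa using this
  refine squeeze_zero' (Eventually.of_forall fun t => ?_) ?_ hlim2
  · exact intervalIntegral.integral_nonneg hy.le fun z _ => abs_nonneg _
  · filter_upwards [hpos] with t ht
    have e : (fun x => ν x * |u t x - u t0 x|)
        = fun x => (ν x * u t x + ν x * u t0 x) - 2 * (ν x * min (u t x) (u t0 x)) := by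
      ext x
      rcases le_total (u t x) (u t0 x) with hle | hle
      · rw [min_eq_left hle, abs_of_nonpos (by linarith)]; ring
      · rw [min_eq_right hle, abs_of_nonneg (by linarith)]; ring
    have i1 : Integrable (fun x => ν x * u t x + ν x * u t0 x) := (h.int ht).add (h.int ht0)
    have i2 : Integrable (fun x => 2 * (ν x * min (u t x) (u t0 x))) := (himin t ht).const_mul 2
    have hi : Integrable (fun x => ν x * |u t x - u t0 x|) := by
      rw [e]; exact i1.sub i2
    have hI : ∫ x, ν x * |u t x - u t0 x| = 2 - 2 * ∫ x, ν x * min (u t x) (u t0 x) := by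
      rw [e, integral_sub i1 i2, integral_add (h.int ht) (h.int ht0), h.mass t ht, h.mass t0 ht0,
        integral_const_mul]
      norm_num
    rw [← hI, ← integral_const_mul, intervalIntegral.integral_of_le hy.le]
    have hi2 : Integrable (fun x => μ * (ν x * |u t x - u t0 x|)) := hi.const_mul μ
    have hmu : 0 ≤ μ := by linarith [w.hμ]
    have c := ((h.sol.cx ht).sub (h.sol.cx ht0)).abs
    calc ∫ z in Set.Ioc y1 y2, |u t z - u t0 z|
        ≤ ∫ z in Set.Ioc y1 y2, μ * (ν z * |u t z - u t0 z|) := by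
          apply setIntegral_mono_on
          · exact (c.integrableOn_Icc (a := y1) (b := y2)).mono_set Set.Ioc_subset_Icc_self
          · exact hi2.integrableOn
          · exact measurableSet_Ioc
          · intro z _; exact w.le_mul z (abs_nonneg _)
      _ ≤ _ := setIntegral_le_integral hi2 (Eventually.of_forall fun z =>
          mul_nonneg hmu (mul_nonneg (w.pν z).le (abs_nonneg _)))

lemma NS.jc {μ : ℝ} {ν κ m : ℝ → ℝ} (w : WT μ ν κ m) {u : ℝ → ℝ → ℝ} (h : NS μ ν κ m u) :
    JC u := fun _ ht _ => jointcont w.cκ w.pκ w.cm w.pm h.sol (h.lc w) ht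

lemma NS.mass_int {μ : ℝ} {ν κ m : ℝ → ℝ} (w : WT μ ν κ m) {u : ℝ → ℝ → ℝ} (h : NS μ ν κ m u)
    {s s' : ℝ} (hs : 0 < s) (hss : s ≤ s') :
    Integrable (fun x => ν x * ∫ t in s..s', u t x) ∧ ∫ x, ν x * (∫ t in s..s', u t x) = s' - s := by
  have hjc := h.jc w
  set f : ℝ → ℝ → ℝ := fun t x => ν x * u t x with hf
  have hco : ContinuousOn (Function.uncurry f) (Set.Ioc s s' ×ˢ Set.univ) := by
    intro q hq
    have h1 := hjc q.1 (by linarith [hq.1.1]) q.2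
    have h2 : ContinuousAt (fun q : ℝ × ℝ => ν q.2) q := (w.cν.comp continuous_snd).continuousAt
    exact (h2.mul h1).continuousWithinAt
  have hms : AEStronglyMeasurable (Function.uncurry f)
      ((volume.restrict (Set.Ioc s s')).prod (volume : Measure ℝ)) := by
    have : (volume.restrict (Set.Ioc s s')).prod (volume : Measure ℝ)
        = (volume.prod volume).restrict (Set.Ioc s s' ×ˢ Set.univ) := by
      rw [← Measure.prod_restrict, Measure.restrict_univ]
    rw [this]
    exact hco.aestronglyMeasurable (measurableSet_Ioc.prod MeasurableSet.univ)
  have hhint : Integrable (Function.uncurry f)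
      ((volume.restrict (Set.Ioc s s')).prod (volume : Measure ℝ)) := by
    rw [integrable_prod_iff hms]
    constructor
    · rw [ae_restrict_iff' measurableSet_Ioc]
      refine Eventually.of_forall fun t ht => ?_
      exact h.int (by linarith [ht.1])
    · have : ∀ᵐ t ∂(volume.restrict (Set.Ioc s s')), (1:ℝ) = ∫ y, ‖Function.uncurry f (t, y)‖ := by
        rw [ae_restrict_iff' measurableSet_Ioc]
        refine Eventually.of_forall fun t ht => ?_
        have ht0 : 0 < t := by linarith [ht.1]
        rw [← h.mass t ht0]
        congr 1; ext x
        simp only [Function.uncurry, hf]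
        rw [Real.norm_eq_abs, abs_of_nonneg (mul_nonneg (w.pν x).le (h.nn t ht0 x))]
      exact (integrable_const (1:ℝ)).congr this
  have e : (fun x => ν x * ∫ t in s..s', u t x) = fun x => ∫ t in Set.Ioc s s', f t x := by
    ext x
    rw [← intervalIntegral.integral_const_mul, intervalIntegral.integral_of_le hss]
  rw [e]
  refine ⟨hhint.integral_prod_right, ?_⟩
  rw [← integral_integral_swap hhint]
  have : ∫ t in Set.Ioc s s', ∫ x, f t x = ∫ t in Set.Ioc s s', (1:ℝ) := by
    apply setIntegral_congr_fun measurableSet_Ioc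
    intro t ht
    exact h.mass t (by linarith [ht.1])
  rw [this]
  simp [hss]

noncomputable def stk (h : ℝ) (u : ℝ → ℝ → ℝ) (t x : ℝ) : ℝ := 1 / h * ∫ s in t..(t + h), u s x

lemma NS.ii {μ : ℝ} {ν κ m : ℝ → ℝ} {u : ℝ → ℝ → ℝ} (h : NS μ ν κ m u) {p q : ℝ} (hp : 0 < p)
    (hq : 0 < q) (x : ℝ) : IntervalIntegrable (fun t => u t x) volume p q := by
  apply ContinuousOn.intervalIntegrable
  intro t ht
  refine (h.sol.ct ?_ x).continuousWithinAt
  have := ht.1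
  exact lt_of_lt_of_le (lt_min hp hq) this

lemma stk_dt {μ : ℝ} {ν κ m : ℝ → ℝ} {u : ℝ → ℝ → ℝ} (hn : NS μ ν κ m u) {h : ℝ}
    (hh : 0 < h) {t : ℝ} (ht : 0 < t) (x : ℝ) :
    HasDerivAt (fun s => stk h u s x) (1 / h * (u (t + h) x - u t x)) t := by
  have hsm : ∀ r, 0 < r → HasDerivAt (fun q => ∫ s in t..q, u s x) (u r x) r := by
    intro r hr
    refine intervalIntegral.integral_hasDerivAt_right (hn.ii ht hr x) ?_ (hn.sol.ct hr x)
    have hco : ContinuousOn (fun s => u s x) (Set.Ioi 0) := fun s hs =>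
      (hn.sol.ct hs x).continuousWithinAt
    exact hco.stronglyMeasurableAtFilter isOpen_Ioi r hr
  have d1 := hsm t ht
  have d2 : HasDerivAt (fun r => ∫ s in t..(r + h), u s x) (u (t + h) x) t :=
    HasDerivAt.comp_add_const t h (hsm (t + h) (by linarith))
  have d3 := (d2.sub d1).const_mul (1 / h)
  refine d3.congr_of_eventuallyEq ?_
  filter_upwards [lt_mem_nhds ht] with r hr
  simp only [stk, Pi.sub_apply]
  rw [intervalIntegral.integral_interval_sub_left (hn.ii ht (by linarith) x) (hn.ii ht hr x)]

lemma NS.stk {μ : ℝ} {ν κ m : ℝ → ℝ} (w : WT μ ν κ m) {u : ℝ → ℝ → ℝ} (hn : NS μ ν κ m u) {h : ℝ}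
    (hh : 0 < h) : NS μ ν κ m (stk h u) := by
  have hjc := hn.jc w
  refine ⟨?_, ?_, ?_⟩
  · have := fun t (ht : 0 < t) => lemIE w.cκ w.pκ w.cm w.pm hn.sol hjc (t1 := t) (t2 := t + h) ht
      (by linarith)
    choose! V' hV using this
    refine ⟨fun t x => 1 / h * (u (t + h) x - u t x), fun t x => 1 / h * V' t x, fun t ht x =>
      ⟨stk_dt hn hh ht x, (hV t ht x).1.const_mul (1 / h), ?_⟩⟩
    have := (hV t ht x).2.const_mul (1 / h)
    refine (this.congr_deriv (by ring)).congr_of_eventuallyEq (Eventually.of_forall fun z => ?_)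
    simp only; ring
  · intro t ht x
    refine mul_nonneg (by positivity) (intervalIntegral.integral_nonneg (by linarith) ?_)
    intro s hs
    exact hn.nn s (by linarith [hs.1]) x
  · intro t ht
    have := (hn.mass_int w ht (show t ≤ t + h by linarith)).2
    have e : (fun x => ν x * _root_.stk h u t x) = fun x => 1 / h * (ν x * ∫ s in t..(t + h), u s x) := by
      ext x; simp only [_root_.stk]; ring
    rw [e, integral_const_mul, this]
    field_simp; ring

lemma small_pt {f : ℝ → ℝ} (cf : Continuous f) (hi : Integrable f) {A α β : ℝ} (hA : ∫ x, |f x| ≤ A)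
    (hab : α < β) : ∃ p ∈ Set.Ioo α β, |f p| ≤ A / (β - α) := by
  have cF : ∀ x, HasDerivAt (fun x => ∫ z in α..x, |f z|) (|f x|) x := fun x =>
    intervalIntegral.integral_hasDerivAt_right (cf.abs.intervalIntegrable _ _)
      (cf.abs.stronglyMeasurableAtFilter _ _) cf.abs.continuousAt
  obtain ⟨p, hp, e⟩ := exists_hasDerivAt_eq_slope (fun x => ∫ z in α..x, |f z|) (fun x => |f x|) hab
    (fun x _ => (cF x).continuousAt.continuousWithinAt) (fun x _ => cF x)
  refine ⟨p, hp, ?_⟩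
  rw [e]
  apply div_le_div_of_nonneg_right _ (by linarith)
  simp only [intervalIntegral.integral_same, sub_zero]
  rw [intervalIntegral.integral_of_le hab.le]
  exact (setIntegral_le_integral hi.abs (Eventually.of_forall fun x => abs_nonneg _)).trans hA

lemma ii_le {f : ℝ → ℝ} (hi : Integrable f) {A : ℝ} (hA : ∫ x, |f x| ≤ A) (x y : ℝ) :
    |∫ z in x..y, f z| ≤ A := by
  rw [← Real.norm_eq_abs]
  refine (intervalIntegral.norm_integral_le_integral_norm_uIoc).trans ?_
  exact (setIntegral_le_integral hi.abs (Eventually.of_forall fun x => abs_nonneg _)).trans hA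

structure Cx (μ W : ℝ) (ν a T' : ℝ → ℝ) : Prop where
  hμ : 1 ≤ μ
  hW : 0 ≤ W
  cν : Continuous ν
  ca : Continuous a
  ν1 : ∀ x, 1 / μ ≤ ν x
  ν2 : ∀ x, ν x ≤ μ
  a1 : ∀ x, 1 / μ ≤ a x
  a2 : ∀ x, a x ≤ μ
  dT : ∀ x, HasDerivAt (fun y => a y * ν y * T' y) (W * T' x - W * ν x) x
  T1 : ∀ x, 1 / μ ^ 5 ≤ T' x
  T2 : ∀ x, T' x ≤ μ ^ 5

structure DF (ν a : ℝ → ℝ) (W A1 A2 : ℝ) (f f' g : ℝ → ℝ) : Prop where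
  cg : Continuous g
  d1 : ∀ x, HasDerivAt f (f' x) x
  d2 : ∀ x, HasDerivAt (fun y => ν y * a y * f' y) (ν x * g x + W * f' x) x
  i1 : Integrable f
  i2 : Integrable (fun x => ν x * g x)
  m1 : ∫ x, |f x| ≤ A1
  m2 : ∫ x, |ν x * g x| ≤ A2

section
variable {μ W : ℝ} {ν a T' : ℝ → ℝ}

lemma Cx.pμ (h : Cx μ W ν a T') : 0 < μ := by linarith [h.hμ]
lemma Cx.pν (h : Cx μ W ν a T') (x : ℝ) : 0 < ν x := lt_of_lt_of_le (one_div_pos.2 h.pμ) (h.ν1 x)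
lemma Cx.pa (h : Cx μ W ν a T') (x : ℝ) : 0 < a x := lt_of_lt_of_le (one_div_pos.2 h.pμ) (h.a1 x)
lemma Cx.pT (h : Cx μ W ν a T') (x : ℝ) : 0 < T' x :=
  lt_of_lt_of_le (one_div_pos.2 (pow_pos h.pμ 5)) (h.T1 x)
lemma Cx.pb (h : Cx μ W ν a T') (x : ℝ) : 0 < ν x * a x := mul_pos (h.pν x) (h.pa x)
lemma Cx.b2 (h : Cx μ W ν a T') (x : ℝ) : ν x * a x ≤ μ ^ 2 := by
  rw [pow_two]; exact mul_le_mul (h.ν2 x) (h.a2 x) (h.pa x).le h.pμ.le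
lemma Cx.ν1' (h : Cx μ W ν a T') (x : ℝ) : 1 ≤ μ * ν x := by
  have := h.ν1 x
  rwa [div_le_iff₀' h.pμ] at this
lemma Cx.a1' (h : Cx μ W ν a T') (x : ℝ) : 1 ≤ μ * a x := by
  have := h.a1 x
  rwa [div_le_iff₀' h.pμ] at this
lemma Cx.T1' (h : Cx μ W ν a T') (x : ℝ) : 1 ≤ μ ^ 5 * T' x := by
  have := h.T1 x
  rwa [div_le_iff₀' (pow_pos h.pμ 5)] at this
lemma Cx.b1 (h : Cx μ W ν a T') (x : ℝ) : 1 ≤ μ ^ 2 * (ν x * a x) := by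
  have := one_le_mul_of_one_le_of_one_le (h.ν1' x) (h.a1' x)
  linarith [show μ * ν x * (μ * a x) = μ ^ 2 * (ν x * a x) by ring]
lemma Cx.cb (h : Cx μ W ν a T') : Continuous (fun x => ν x * a x) := h.cν.mul h.ca

lemma Cx.cT (h : Cx μ W ν a T') : Continuous T' := by
  have c : Continuous (fun y => a y * ν y * T' y) :=
    continuous_iff_continuousAt.2 fun x => (h.dT x).continuousAt
  have := c.div (h.ca.mul h.cν) (fun x => (mul_pos (h.pa x) (h.pν x)).ne')
  refine this.congr fun x => ?_
  have h1 := (h.pa x).ne'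
  have h2 := (h.pν x).ne'
  show a x * ν x * T' x / (a x * ν x) = _
  field_simp

lemma DF.cf {A1 A2 : ℝ} {f f' g : ℝ → ℝ} (d : DF ν a W A1 A2 f f' g) : Continuous f :=
  continuous_iff_continuousAt.2 fun x => (d.d1 x).continuousAt

lemma DF.cf' (h : Cx μ W ν a T') {A1 A2 : ℝ} {f f' g : ℝ → ℝ} (d : DF ν a W A1 A2 f f' g) :
    Continuous f' := by
  have c : Continuous (fun y => ν y * a y * f' y) :=
    continuous_iff_continuousAt.2 fun x => (d.d2 x).continuousAt
  have := c.div h.cb (fun x => (h.pb x).ne')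
  refine this.congr fun x => ?_
  have h1 := (h.pa x).ne'
  have h2 := (h.pν x).ne'
  show ν x * a x * f' x / (ν x * a x) = _
  field_simp

lemma DF.dj {A1 A2 : ℝ} {f f' g : ℝ → ℝ} (d : DF ν a W A1 A2 f f' g) (x : ℝ) :
    HasDerivAt (fun y => ν y * a y * f' y - W * f y) (ν x * g x) x :=
  ((d.d2 x).sub ((d.d1 x).const_mul W)).congr_deriv (by ring)

/-- Uniform bounds. -/
lemma DF.bdd (h : Cx μ W ν a T') (A1 A2 : ℝ) : ∃ K, 0 ≤ K ∧ ∀ f f' g : ℝ → ℝ,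
    DF ν a W A1 A2 f f' g → ∀ x, |f x| ≤ K ∧ |f' x| ≤ K ∧ |ν x * a x * f' x - W * f x| ≤ K := by
  set J := 3 * μ ^ 2 * (6 * A1 + W * μ ^ 2 * A1) + A2 with hJ
  set M := A1 + W * μ ^ 2 * A1 + μ ^ 2 * J with hM
  refine ⟨|J| + |M| + |μ ^ 2 * (J + W * M)|, by positivity, ?_⟩
  intro f f' g d
  have hμ := h.hμ
  have hW := h.hW
  have cf := d.cf
  have cΨ : Continuous (fun x => W * f x / (ν x * a x)) :=
    (continuous_const.mul cf).div h.cb fun x => (h.pb x).ne'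
  have hle : ∀ x, |W * f x / (ν x * a x)| ≤ W * μ ^ 2 * |f x| := by
    intro x
    rw [abs_div, abs_mul, abs_of_nonneg hW, abs_of_pos (h.pb x), div_le_iff₀ (h.pb x)]
    have h1 := h.b1 x
    have h2 : 0 ≤ W * |f x| := by positivity
    nlinarith [mul_le_mul_of_nonneg_left h1 h2]
  have iΨ : Integrable (fun x => W * f x / (ν x * a x)) := by
    refine (d.i1.abs.const_mul (W * μ ^ 2)).mono' cΨ.aestronglyMeasurable ?_
    exact Eventually.of_forall hle
  have mΨ : ∫ x, |W * f x / (ν x * a x)| ≤ W * μ ^ 2 * A1 := by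
    calc _ ≤ ∫ x, W * μ ^ 2 * |f x| :=
          integral_mono iΨ.abs (d.i1.abs.const_mul (W * μ ^ 2)) hle
      _ ≤ _ := by
          rw [integral_const_mul]
          exact mul_le_mul_of_nonneg_left d.m1 (by positivity)
  have dΦ : ∀ x, HasDerivAt (fun x => f x - ∫ z in (0:ℝ)..x, W * f z / (ν z * a z))
      ((ν x * a x * f' x - W * f x) / (ν x * a x)) x := by
    intro x
    have h1 : HasDerivAt (fun x => ∫ z in (0:ℝ)..x, W * f z / (ν z * a z))
      (W * f x / (ν x * a x)) x := intervalIntegral.integral_hasDerivAt_right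
        (cΨ.intervalIntegrable _ _) (cΨ.stronglyMeasurableAtFilter _ _) cΨ.continuousAt
    refine ((d.d1 x).sub h1).congr_deriv ?_
    have h2 := (h.pa x).ne'
    have h3 := (h.pν x).ne'
    field_simp
  have hΦ : ∀ x y, x < y → ∃ ξ ∈ Set.Ioo x y, (ν ξ * a ξ * f' ξ - W * f ξ) / (ν ξ * a ξ) * (y - x)
      = f y - f x - ∫ z in x..y, W * f z / (ν z * a z) := by
    intro x y hxy
    obtain ⟨ξ, hξ, e⟩ := exists_hasDerivAt_eq_slope _ _ hxy
      (fun z _ => (dΦ z).continuousAt.continuousWithinAt) (fun z _ => dΦ z)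
    refine ⟨ξ, hξ, ?_⟩
    rw [e, div_mul_cancel₀ _ (by linarith)]
    rw [← intervalIntegral.integral_interval_sub_left (cΨ.intervalIntegrable 0 y)
      (cΨ.intervalIntegrable 0 x)]
    ring
  have hA1 : 0 ≤ A1 := (integral_nonneg fun x => abs_nonneg _).trans d.m1
  have hdb : ∀ z w : ℝ, |z / (ν w * a w)| ≤ μ ^ 2 * |z| := by
    intro z w
    rw [abs_div, abs_of_pos (h.pb w), div_le_iff₀ (h.pb w)]
    nlinarith [mul_le_mul_of_nonneg_left (h.b1 w) (abs_nonneg z)]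
  obtain ⟨p, hp, fp⟩ := small_pt cf d.i1 d.m1 (show (0:ℝ) < 1 / 3 by norm_num)
  obtain ⟨q, hq, fq⟩ := small_pt cf d.i1 d.m1 (show (2 / 3:ℝ) < 1 by norm_num)
  norm_num at fp fq
  obtain ⟨ξ, hξ, e⟩ := hΦ p q (by linarith [hp.2, hq.1])
  have hjξ : |ν ξ * a ξ * f' ξ - W * f ξ| ≤ 3 * μ ^ 2 * (6 * A1 + W * μ ^ 2 * A1) := by
    have h1 := ii_le iΨ mΨ p q
    set j := ν ξ * a ξ * f' ξ - W * f ξ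
    set I := ∫ z in p..q, W * f z / (ν z * a z)
    have h2 : |j / (ν ξ * a ξ) * (q - p)| ≤ 6 * A1 + W * μ ^ 2 * A1 := by
      rw [e]
      have := abs_sub (f q - f p) I
      have := abs_sub (f q) (f p)
      linarith
    have hqp : 1 / 3 ≤ q - p := by linarith [hp.2, hq.1]
    rw [abs_mul, abs_of_pos (by linarith : 0 < q - p), abs_div, abs_of_pos (h.pb ξ)] at h2
    have h3 : |j| / (ν ξ * a ξ) * (1 / 3) ≤ 6 * A1 + W * μ ^ 2 * A1 :=
      (mul_le_mul_of_nonneg_left hqp (div_nonneg (abs_nonneg _) (h.pb ξ).le)).trans h2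
    have h4 : |j| / (ν ξ * a ξ) ≤ 3 * (6 * A1 + W * μ ^ 2 * A1) := by linarith
    rw [div_le_iff₀ (h.pb ξ)] at h4
    have h5 := h.b2 ξ
    nlinarith [mul_le_mul_of_nonneg_left h5 (by positivity : 0 ≤ 3 * (6 * A1 + W * μ ^ 2 * A1))]
  have hj : ∀ x, |ν x * a x * f' x - W * f x| ≤ J := by
    intro x
    have h1 := ii_le d.i2 d.m2 ξ x
    rw [intervalIntegral.integral_eq_sub_of_hasDerivAt (fun z _ => d.dj z)
      ((h.cν.mul d.cg).intervalIntegrable _ _)] at h1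
    have h2 := abs_sub_abs_le_abs_sub (ν x * a x * f' x - W * f x) (ν ξ * a ξ * f' ξ - W * f ξ)
    rw [hJ]; linarith
  have hf : ∀ x, |f x| ≤ M := by
    intro x
    obtain ⟨p, hp, fp⟩ := small_pt cf d.i1 d.m1 (show x < x + 1 by linarith)
    have e1 : x + 1 - x = 1 := by ring
    rw [e1, div_one] at fp
    obtain ⟨ξ, hξ, e⟩ := hΦ x p hp.1
    have h1 := ii_le iΨ mΨ x p
    have h2 := hj ξ
    have h3 := hdb (ν ξ * a ξ * f' ξ - W * f ξ) ξ
    set j := ν ξ * a ξ * f' ξ - W * f ξ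
    set I := ∫ z in x..p, W * f z / (ν z * a z)
    have h4 : |j / (ν ξ * a ξ) * (p - x)| ≤ μ ^ 2 * J := by
      rw [abs_mul, abs_of_pos (by linarith [hp.1] : 0 < p - x)]
      calc _ ≤ |j / (ν ξ * a ξ)| * 1 :=
            mul_le_mul_of_nonneg_left (by linarith [hp.2]) (abs_nonneg _)
        _ ≤ μ ^ 2 * |j| := by linarith
        _ ≤ _ := mul_le_mul_of_nonneg_left h2 (by positivity)
    have h5 : f x = f p - I - j / (ν ξ * a ξ) * (p - x) := by linarith
    rw [h5, hM]
    have h6 := abs_sub (f p - I) (j / (ν ξ * a ξ) * (p - x))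
    have h7 := abs_sub (f p) I
    linarith
  intro x
  have hx := hj x
  have hfx := hf x
  have h1 : |f' x| ≤ μ ^ 2 * (J + W * M) := by
    have h2 := hdb (ν x * a x * f' x) x
    rw [mul_div_cancel_left₀ _ (h.pb x).ne'] at h2
    refine h2.trans (mul_le_mul_of_nonneg_left ?_ (by positivity))
    have h3 := abs_add_le (ν x * a x * f' x - W * f x) (W * f x)
    rw [sub_add_cancel, abs_mul W, abs_of_nonneg hW] at h3
    nlinarith
  have k1 := le_abs_self J
  have k2 := le_abs_self M
  have k3 := le_abs_self (μ ^ 2 * (J + W * M))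
  have k4 := abs_nonneg J
  have k5 := abs_nonneg M
  have k6 := abs_nonneg (μ ^ 2 * (J + W * M))
  exact ⟨by linarith, by linarith, by linarith⟩

end

section
variable {μ W : ℝ} {ν a T' : ℝ → ℝ}

/-- integrability by domination with squares -/
lemma int_mul_of_sq {f g : ℝ → ℝ} (cf : Continuous f) (cg : Continuous g)
    (hf : Integrable (fun x => f x ^ 2)) (hg : Integrable (fun x => g x ^ 2)) :
    Integrable (fun x => f x * g x) := by
  refine (hf.add hg).mono' (cf.mul cg).aestronglyMeasurable (Eventually.of_forall fun x => ?_)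
  rw [Real.norm_eq_abs, abs_le]
  simp only [Pi.add_apply]
  constructor <;> nlinarith [sq_nonneg (f x + g x), sq_nonneg (f x - g x), sq_nonneg (f x), sq_nonneg (g x)]

lemma int_bmul {f φ : ℝ → ℝ} {B : ℝ} (hf : Integrable f) (cφ : Continuous φ) (hb : ∀ x, |φ x| ≤ B) :
    Integrable (fun x => φ x * f x) :=
  hf.bdd_mul cφ.aestronglyMeasurable (Eventually.of_forall hb)

lemma int_sq_of_bdd {f : ℝ → ℝ} {B : ℝ} (cf : Continuous f) (hf : Integrable f) (hb : ∀ x, |f x| ≤ B) :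
    Integrable (fun x => f x ^ 2) := by
  refine (int_bmul hf cf hb).congr (Eventually.of_forall fun x => ?_)
  simp only; ring

variable {A1 A2 : ℝ} {f f' g : ℝ → ℝ}

lemma DF.ig (h : Cx μ W ν a T') (d : DF ν a W A1 A2 f f' g) : Integrable g := by
  have c : Continuous (fun x => (ν x)⁻¹) := h.cν.inv₀ fun x => (h.pν x).ne'
  have hb : ∀ x, |(ν x)⁻¹| ≤ μ := by
    intro x
    rw [abs_inv, abs_of_pos (h.pν x), inv_le_comm₀ (h.pν x) h.pμ, ← one_div]
    exact h.ν1 x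
  refine (int_bmul d.i2 c hb).congr (Eventually.of_forall fun x => ?_)
  have := (h.pν x).ne'
  simp only; field_simp

lemma DF.if2 (h : Cx μ W ν a T') (d : DF ν a W A1 A2 f f' g) : Integrable (fun x => f x ^ 2) := by
  obtain ⟨K, _, hK⟩ := DF.bdd h A1 A2
  exact int_sq_of_bdd d.cf d.i1 fun x => (hK f f' g d x).1

lemma DF.if'2 (h : Cx μ W ν a T') (d : DF ν a W A1 A2 f f' g) : Integrable (fun x => f' x ^ 2) := by
  obtain ⟨K, K0, hK⟩ := DF.bdd h A1 A2
  replace hK := hK f f' g d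
  have cf := d.cf
  have cf' := d.cf' h
  have cj : Continuous (fun y => ν y * a y * f' y - W * f y) :=
    continuous_iff_continuousAt.2 fun x => (d.dj x).continuousAt
  have if2 := d.if2 h
  have ifg : Integrable (fun x => f x * (ν x * g x)) := int_bmul d.i2 cf fun x => (hK x).1
  set I := 2 * μ ^ 2 * (2 * K * K + ∫ x, |f x * (ν x * g x)|) + W ^ 2 * μ ^ 4 * ∫ x, f x ^ 2 with hI
  refine integrable_of_intervalIntegral_norm_bounded (l := atTop) (a := fun n : ℕ => -(n:ℝ))
    (b := fun n : ℕ => (n:ℝ)) I ?_ ?_ tendsto_natCast_atTop_atTop ?_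
  · intro i
    exact ((cf'.pow 2).integrableOn_Icc).mono_set Set.Ioc_subset_Icc_self
  · exact tendsto_neg_atTop_atBot.comp tendsto_natCast_atTop_atTop
  · refine Eventually.of_forall fun n => ?_
    have hn : -(n:ℝ) ≤ n := by linarith [Nat.cast_nonneg (α := ℝ) n]
    have hpt : ∀ x, ‖f' x ^ 2‖ ≤ 2 * μ ^ 2 * (f' x * (ν x * a x * f' x - W * f x)) + W ^ 2 * μ ^ 4 * f x ^ 2 := by
      intro x
      rw [Real.norm_eq_abs, abs_of_nonneg (sq_nonneg _)]
      have h1 := h.b1 x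
      have h2 := mul_le_mul_of_nonneg_right h1 (sq_nonneg (f' x))
      nlinarith [sq_nonneg (f' x - W * μ ^ 2 * f x)]
    have c1 : Continuous (fun x => 2 * μ ^ 2 * (f' x * (ν x * a x * f' x - W * f x))) :=
      continuous_const.mul (cf'.mul cj)
    have c2 : Continuous (fun x => W ^ 2 * μ ^ 4 * f x ^ 2) := continuous_const.mul (cf.pow 2)
    have hd : ∀ x, HasDerivAt (fun x => f x * (ν x * a x * f' x - W * f x))
        (f' x * (ν x * a x * f' x - W * f x) + f x * (ν x * g x)) x := fun x => (d.d1 x).mul (d.dj x)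
    have c3 : Continuous (fun x => f' x * (ν x * a x * f' x - W * f x)) := cf'.mul cj
    have c4 : Continuous (fun x => f x * (ν x * g x)) := cf.mul (h.cν.mul d.cg)
    have hft := intervalIntegral.integral_eq_sub_of_hasDerivAt (a := -(n:ℝ)) (b := n)
      (fun x _ => hd x) ((c3.add c4).intervalIntegrable _ _)
    rw [intervalIntegral.integral_add (c3.intervalIntegrable _ _) (c4.intervalIntegrable _ _)] at hft
    have h4 := ii_le ifg le_rfl (-(n:ℝ)) n
    have hbd : ∀ x, |f x * (ν x * a x * f' x - W * f x)| ≤ K * K := by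
      intro x
      rw [abs_mul]
      exact mul_le_mul (hK x).1 (hK x).2.2 (abs_nonneg _) K0
    have h5 := abs_le.1 (hbd n)
    have h6 := abs_le.1 (hbd (-n))
    have h7 := abs_le.1 h4
    calc ∫ x in (-(n:ℝ))..n, ‖f' x ^ 2‖
        ≤ ∫ x in (-(n:ℝ))..n, (2 * μ ^ 2 * (f' x * (ν x * a x * f' x - W * f x)) + W ^ 2 * μ ^ 4 * f x ^ 2) :=
          intervalIntegral.integral_mono_on hn ((cf'.pow 2).norm.intervalIntegrable _ _)
            ((c1.add c2).intervalIntegrable _ _) fun x _ => hpt x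
      _ = 2 * μ ^ 2 * (∫ x in (-(n:ℝ))..n, (f' x * (ν x * a x * f' x - W * f x)))
          + W ^ 2 * μ ^ 4 * ∫ x in (-(n:ℝ))..n, f x ^ 2 := by
          rw [intervalIntegral.integral_add (c1.intervalIntegrable _ _) (c2.intervalIntegrable _ _),
            intervalIntegral.integral_const_mul, intervalIntegral.integral_const_mul]
      _ ≤ I := by
          have h8 : ∫ x in (-(n:ℝ))..n, f x ^ 2 ≤ ∫ x, f x ^ 2 := by
            rw [intervalIntegral.integral_of_le hn]
            exact setIntegral_le_integral if2 (Eventually.of_forall fun x => sq_nonneg _)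
          rw [hI]
          gcongr
          linarith

lemma DF.iff' (h : Cx μ W ν a T') (d : DF ν a W A1 A2 f f' g) : Integrable (fun x => f x * f' x) :=
  int_mul_of_sq d.cf (d.cf' h) (d.if2 h) (d.if'2 h)

lemma DF.ff'0 (h : Cx μ W ν a T') (d : DF ν a W A1 A2 f f' g) : ∫ x, f x * f' x = 0 := by
  have h1 : ∀ x, HasDerivAt (fun x => f x ^ 2) (2 * (f x * f' x)) x := fun x =>
    ((d.d1 x).pow 2).congr_deriv (by simp; ring)
  have := integral_eq_zero_of_hasDerivAt_of_integrable h1 ((d.iff' h).const_mul 2) (d.if2 h)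
  rw [integral_const_mul] at this
  linarith

lemma DF.energy (h : Cx μ W ν a T') (d : DF ν a W A1 A2 f f' g) :
    Integrable (fun x => ν x * a x * f' x ^ 2) ∧ Integrable (fun x => ν x * (f x * g x)) ∧
    ∫ x, ν x * a x * f' x ^ 2 = - ∫ x, ν x * (f x * g x) := by
  obtain ⟨K, K0, hK⟩ := DF.bdd h A1 A2
  replace hK := hK f f' g d
  have hbb : ∀ x, |ν x * a x| ≤ μ ^ 2 := fun x => by
    rw [abs_of_pos (h.pb x)]; exact h.b2 x
  have i1 : Integrable (fun x => ν x * a x * f' x ^ 2) := int_bmul (d.if'2 h) h.cb hbb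
  have i2 : Integrable (fun x => ν x * (f x * g x)) := by
    refine (int_bmul d.i2 d.cf fun x => (hK x).1).congr (Eventually.of_forall fun x => ?_)
    simp only; ring
  have i3 : Integrable (fun x => W * (f x * f' x)) := (d.iff' h).const_mul W
  have i4 : Integrable (fun x => f x * (ν x * a x * f' x)) := by
    refine (int_bmul (d.iff' h) h.cb hbb).congr (Eventually.of_forall fun x => ?_)
    simp only; ring
  have hd : ∀ x, HasDerivAt (fun x => f x * (ν x * a x * f' x))
      (ν x * a x * f' x ^ 2 + ν x * (f x * g x) + W * (f x * f' x)) x := fun x =>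
    ((d.d1 x).mul (d.d2 x)).congr_deriv (by ring)
  have i12 : Integrable (fun x => ν x * a x * f' x ^ 2 + ν x * (f x * g x)) := i1.add i2
  have := integral_eq_zero_of_hasDerivAt_of_integrable hd (i12.add i3) i4
  rw [integral_add i12 i3, integral_add i1 i2, integral_const_mul, d.ff'0 h] at this
  exact ⟨i1, i2, by linarith⟩

lemma DF.dr (h : Cx μ W ν a T') (d : DF ν a W A1 A2 f f' g) (x : ℝ) :
    HasDerivAt (fun y => f' y / T' y) ((g x + W * (f' x / T' x)) / (a x * T' x)) x := by
  have h1 := (h.pa x).ne'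
  have h2 := (h.pν x).ne'
  have h3 := (h.pT x).ne'
  have := (d.d2 x).div (h.dT x) (mul_ne_zero (mul_ne_zero h1 h2) h3)
  refine (this.congr_deriv ?_).congr_of_eventuallyEq (Eventually.of_forall fun y => ?_)
  · field_simp; ring
  · have h1 := (h.pa y).ne'
    have h2 := (h.pν y).ne'
    have h3 := (h.pT y).ne'
    simp only [Pi.div_apply]; field_simp

lemma Cx.cr (h : Cx μ W ν a T') {φ : ℝ → ℝ} (c : Continuous φ) : Continuous (fun x => φ x / T' x) :=
  c.div h.cT fun x => (h.pT x).ne'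

lemma Cx.br (h : Cx μ W ν a T') (z x : ℝ) : |z / T' x| ≤ μ ^ 5 * |z| := by
  rw [abs_div, abs_of_pos (h.pT x), div_le_iff₀ (h.pT x)]
  nlinarith [mul_le_mul_of_nonneg_left (h.T1' x) (abs_nonneg z)]

lemma Cx.bq (h : Cx μ W ν a T') (z x : ℝ) : |z / (a x * T' x)| ≤ μ ^ 6 * |z| := by
  have hp := mul_pos (h.pa x) (h.pT x)
  rw [abs_div, abs_of_pos hp, div_le_iff₀ hp]
  have := one_le_mul_of_one_le_of_one_le (h.a1' x) (h.T1' x)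
  nlinarith [mul_le_mul_of_nonneg_left this (abs_nonneg z)]

/-- Bound and integrability of r', and positivity. -/
lemma DF.rpos (h : Cx μ W ν a T') {B : ℝ} (hB : ∀ x, |g x| ≤ B) (d : DF ν a W A1 A2 f f' g) :
    Integrable (fun x => ((g x + W * (f' x / T' x)) / (a x * T' x)) * g x) ∧
    0 ≤ ∫ x, ((g x + W * (f' x / T' x)) / (a x * T' x)) * g x := by
  have cg := d.cg
  have cr := h.cr (d.cf' h)
  have ig2 := int_sq_of_bdd d.cg (d.ig h) hB
  have ir2 : Integrable (fun x => (f' x / T' x) ^ 2) := by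
    refine ((d.if'2 h).const_mul ((μ ^ 5) ^ 2)).mono' (cr.pow 2).aestronglyMeasurable
      (Eventually.of_forall fun x => ?_)
    rw [Real.norm_eq_abs, abs_pow, ← sq_abs (f' x), ← mul_pow]
    exact pow_le_pow_left₀ (abs_nonneg _) (h.br _ _) 2
  have cw : Continuous (fun x => g x + W * (f' x / T' x)) := cg.add (continuous_const.mul cr)
  have cr' : Continuous (fun x => (g x + W * (f' x / T' x)) / (a x * T' x)) :=
    cw.div (h.ca.mul h.cT) fun x => (mul_pos (h.pa x) (h.pT x)).ne'
  have iw2 : Integrable (fun x => (g x + W * (f' x / T' x)) ^ 2) := by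
    have := (ig2.add ((int_mul_of_sq cg cr ig2 ir2).const_mul (2 * W))).add (ir2.const_mul (W ^ 2))
    refine this.congr (Eventually.of_forall fun x => ?_)
    simp only [Pi.add_apply]; ring
  have ir'2 : Integrable (fun x => ((g x + W * (f' x / T' x)) / (a x * T' x)) ^ 2) := by
    refine (iw2.const_mul ((μ ^ 6) ^ 2)).mono' (cr'.pow 2).aestronglyMeasurable
      (Eventually.of_forall fun x => ?_)
    rw [Real.norm_eq_abs, abs_pow, ← sq_abs (g x + W * (f' x / T' x)), ← mul_pow]
    exact pow_le_pow_left₀ (abs_nonneg _) (h.bq _ _) 2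
  set r := fun x => f' x / T' x with hr
  set r' := fun x => (g x + W * (f' x / T' x)) / (a x * T' x) with hr'
  have irr : Integrable (fun x => r x * r' x) := int_mul_of_sq cr cr' ir2 ir'2
  have i0 : Integrable (fun x => r' x * g x) := int_mul_of_sq cr' cg ir'2 ig2
  refine ⟨i0, ?_⟩
  have h1 : ∀ x, HasDerivAt (fun x => r x ^ 2) (2 * (r x * r' x)) x := fun x =>
    ((d.dr h x).pow 2).congr_deriv (by simp [hr, hr']; ring)
  have h0 := integral_eq_zero_of_hasDerivAt_of_integrable h1 (irr.const_mul 2) ir2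
  rw [integral_const_mul] at h0
  have h2 : 0 ≤ ∫ x, (r' x * g x + W * (r x * r' x)) := by
    apply integral_nonneg
    intro x
    have hp := mul_pos (h.pa x) (h.pT x)
    have : r' x * g x + W * (r x * r' x) = (a x * T' x) * (r' x) ^ 2 := by
      have h1 := (h.pa x).ne'
      have h3 := (h.pT x).ne'
      simp only [hr, hr']; field_simp
    simp only [Pi.zero_apply]
    rw [this]; positivity
  have i5 : Integrable (fun x => W * (r x * r' x)) := irr.const_mul W
  rw [integral_add i0 i5, integral_const_mul] at h2
  have : ∫ x, r x * r' x = 0 := by linarith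
  rw [this] at h2
  simpa using h2

/-- integration by parts against a difference -/
lemma DF.ibp (h : Cx μ W ν a T') {B : ℝ} (hB : ∀ x, |g x| ≤ B) (d : DF ν a W A1 A2 f f' g)
    {D D' : ℝ → ℝ} (hD : ∀ x, HasDerivAt D (D' x) x) (iD : Integrable D)
    (cD' : Continuous D') (iD'2 : Integrable (fun x => D' x ^ 2)) :
    Integrable (fun x => f' x / T' x * D' x) ∧
    Integrable (fun x => ((g x + W * (f' x / T' x)) / (a x * T' x)) * D x) ∧
    ∫ x, f' x / T' x * D' x = - ∫ x, ((g x + W * (f' x / T' x)) / (a x * T' x)) * D x := by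
  obtain ⟨K, K0, hK⟩ := DF.bdd h A1 A2
  replace hK := hK f f' g d
  have cr := h.cr (d.cf' h)
  have cw : Continuous (fun x => g x + W * (f' x / T' x)) := d.cg.add (continuous_const.mul cr)
  have cr' : Continuous (fun x => (g x + W * (f' x / T' x)) / (a x * T' x)) :=
    cw.div (h.ca.mul h.cT) fun x => (mul_pos (h.pa x) (h.pT x)).ne'
  have br : ∀ x, |f' x / T' x| ≤ μ ^ 5 * K := fun x =>
    (h.br _ _).trans (mul_le_mul_of_nonneg_left (hK x).2.1 (pow_nonneg h.pμ.le 5))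
  have br' : ∀ x, |(g x + W * (f' x / T' x)) / (a x * T' x)| ≤ μ ^ 6 * (B + W * (μ ^ 5 * K)) := fun x => by
    refine (h.bq _ _).trans (mul_le_mul_of_nonneg_left ?_ (pow_nonneg h.pμ.le 6))
    refine (abs_add_le _ _).trans (add_le_add (hB x) ?_)
    rw [abs_mul, abs_of_nonneg h.hW]
    exact mul_le_mul_of_nonneg_left (br x) h.hW
  have ir2 : Integrable (fun x => (f' x / T' x) ^ 2) := by
    refine ((d.if'2 h).const_mul ((μ ^ 5) ^ 2)).mono' (cr.pow 2).aestronglyMeasurable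
      (Eventually.of_forall fun x => ?_)
    rw [Real.norm_eq_abs, abs_pow, ← sq_abs (f' x), ← mul_pow]
    exact pow_le_pow_left₀ (abs_nonneg _) (h.br _ _) 2
  have i1 : Integrable (fun x => f' x / T' x * D' x) := int_mul_of_sq cr cD' ir2 iD'2
  have i2 : Integrable (fun x => ((g x + W * (f' x / T' x)) / (a x * T' x)) * D x) :=
    int_bmul iD cr' br'
  have i3 : Integrable (fun x => f' x / T' x * D x) := int_bmul iD cr br
  refine ⟨i1, i2, ?_⟩
  exact integral_mul_deriv_eq_deriv_mul_of_integrable (fun x _ => d.dr h x) (fun x _ => hD x) i1 i2 i3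

lemma DF.r'bdd (h : Cx μ W ν a T') (A1 A2 B : ℝ) : ∃ L, 0 ≤ L ∧ ∀ f f' g : ℝ → ℝ,
    DF ν a W A1 A2 f f' g → (∀ x, |g x| ≤ B) →
    ∀ x, |(g x + W * (f' x / T' x)) / (a x * T' x)| ≤ L := by
  obtain ⟨K, K0, hK⟩ := DF.bdd h A1 A2
  refine ⟨|μ ^ 6 * (B + W * (μ ^ 5 * K))|, abs_nonneg _, fun f f' g d hB x => ?_⟩
  replace hK := hK f f' g d
  refine le_trans ?_ (le_abs_self _)
  refine (h.bq _ _).trans (mul_le_mul_of_nonneg_left ?_ (pow_nonneg h.pμ.le 6))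
  refine (abs_add_le _ _).trans (add_le_add (hB x) ?_)
  rw [abs_mul, abs_of_nonneg h.hW]
  exact mul_le_mul_of_nonneg_left ((h.br _ _).trans
    (mul_le_mul_of_nonneg_left (hK x).2.1 (pow_nonneg h.pμ.le 5))) h.hW

end

lemma sq_le_int {f f' : ℝ → ℝ} (hd : ∀ x, HasDerivAt f (f' x) x) (i1 : Integrable (fun x => f x ^ 2))
    (i2 : Integrable (fun x => f x * f' x)) (x : ℝ) : f x ^ 2 ≤ 2 * ∫ z, |f z * f' z| := by
  have h1 : ∀ x, HasDerivAt (fun x => f x ^ 2) (2 * (f x * f' x)) x := fun x =>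
    ((hd x).pow 2).congr_deriv (by simp; ring)
  have i3 := i2.const_mul 2
  have h2 := tendsto_zero_of_hasDerivAt_of_integrableOn_Iic (a := x) (fun y _ => h1 y)
    i3.integrableOn i1.integrableOn
  have h3 := integral_Iic_of_hasDerivAt_of_tendsto' (a := x) (fun y _ => h1 y) i3.integrableOn h2
  rw [sub_zero] at h3
  rw [← h3, ← integral_const_mul]
  have i4 : Integrable (fun z => 2 * |f z * f' z|) := i2.abs.const_mul 2
  calc ∫ y in Set.Iic x, 2 * (f y * f' y) ≤ ∫ y in Set.Iic x, 2 * |f y * f' y| :=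
        setIntegral_mono i3.integrableOn i4.integrableOn fun y => by
          have := le_abs_self (f y * f' y); show 2 * (f y * f' y) ≤ 2 * |f y * f' y|; linarith
    _ ≤ _ := setIntegral_le_integral i4 (Eventually.of_forall fun y => by
          show 0 ≤ 2 * |f y * f' y|; positivity)

lemma nash_sup {f f' : ℝ → ℝ} (cf' : Continuous f') (hd : ∀ x, HasDerivAt f (f' x) x)
    (i1 : Integrable (fun x => f x ^ 2)) (i2 : Integrable (fun x => f' x ^ 2)) (x : ℝ) :
    f x ^ 4 ≤ 4 * (∫ z, f z ^ 2) * ∫ z, f' z ^ 2 := by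
  have cf : Continuous f := continuous_iff_continuousAt.2 fun x => (hd x).continuousAt
  set X := ∫ z, f z ^ 2
  set Y := ∫ z, f' z ^ 2
  have hX : 0 ≤ X := integral_nonneg fun z => sq_nonneg _
  have hY : 0 ≤ Y := integral_nonneg fun z => sq_nonneg _
  have i3 := int_mul_of_sq cf cf' i1 i2
  have hs := sq_le_int hd i1 i3 x
  have key : ∀ l : ℝ, 0 ≤ X * (l * l) + (-(f x ^ 2)) * l + Y := by
    intro l
    rcases le_or_gt l 0 with hl | hl
    · have : 0 ≤ f x ^ 2 := sq_nonneg _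
      nlinarith [mul_nonneg hX (mul_self_nonneg l)]
    · have h1 : l * (2 * ∫ z, |f z * f' z|) ≤ l ^ 2 * X + Y := by
        have i4 : Integrable (fun z => l ^ 2 * f z ^ 2) := i1.const_mul (l ^ 2)
        rw [← mul_assoc, ← integral_const_mul, ← integral_const_mul, ← integral_add i4 i2]
        refine integral_mono (i3.abs.const_mul _) (i4.add i2) fun z => ?_
        show l * 2 * |f z * f' z| ≤ l ^ 2 * f z ^ 2 + f' z ^ 2
        rw [abs_mul, ← sq_abs (f z), ← sq_abs (f' z)]
        nlinarith [sq_nonneg (l * |f z| - |f' z|)]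
      nlinarith [mul_le_mul_of_nonneg_left hs hl.le]
  have := discrim_le_zero key
  unfold discrim at this
  nlinarith

lemma nash {f f' : ℝ → ℝ} {μ : ℝ} (cf' : Continuous f') (hd : ∀ x, HasDerivAt f (f' x) x)
    (i0 : Integrable f) (hf : ∀ x, 0 ≤ f x) (hm : ∫ x, f x ≤ μ)
    (i1 : Integrable (fun x => f x ^ 2)) (i2 : Integrable (fun x => f' x ^ 2)) :
    (∫ z, f z ^ 2) ^ 3 ≤ 4 * μ ^ 4 * ∫ z, f' z ^ 2 := by
  have hs := nash_sup cf' hd i1 i2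
  set X := ∫ z, f z ^ 2 with hXd
  set Y := ∫ z, f' z ^ 2
  have hX : 0 ≤ X := integral_nonneg fun z => sq_nonneg _
  have hY : 0 ≤ Y := integral_nonneg fun z => sq_nonneg _
  have hμ : 0 ≤ μ := (integral_nonneg hf).trans hm
  rcases hX.eq_or_lt with h0 | h0
  · rw [← h0]; simp; positivity
  have hne : 0 ≤ 4 * X * Y := by positivity
  set M := √(√(4 * X * Y)) with hM
  have hM4 : M ^ 4 = 4 * X * Y := by
    have : M ^ 4 = (M ^ 2) ^ 2 := by ring
    rw [this, hM, Real.sq_sqrt (Real.sqrt_nonneg _), Real.sq_sqrt hne]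
  have hM0 : 0 ≤ M := Real.sqrt_nonneg _
  have hfM : ∀ x, f x ≤ M := fun x => by
    have := hs x
    rw [← hM4] at this
    exact le_of_pow_le_pow_left₀ (by norm_num) hM0 this
  have hXM : X ≤ M * μ := by
    calc X ≤ ∫ z, M * f z := integral_mono i1 (i0.const_mul M) fun z => by
            show f z ^ 2 ≤ M * f z
            rw [pow_two]; exact mul_le_mul_of_nonneg_right (hfM z) (hf z)
      _ ≤ _ := by rw [integral_const_mul]; exact mul_le_mul_of_nonneg_left hm hM0
  have h4 := pow_le_pow_left₀ hX hXM 4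
  rw [mul_pow, hM4] at h4
  have : X * X ^ 3 ≤ X * (4 * μ ^ 4 * Y) := by nlinarith
  exact le_of_mul_le_mul_left this h0

lemma cs_diff {f f' : ℝ → ℝ} (cf' : Continuous f') (hd : ∀ x, HasDerivAt f (f' x) x)
    (i2 : Integrable (fun x => f' x ^ 2)) {x y : ℝ} (hxy : x ≤ y) :
    (f y - f x) ^ 2 ≤ (y - x) * ∫ z, f' z ^ 2 := by
  set Y := ∫ z, f' z ^ 2
  have e : ∫ z in x..y, f' z = f y - f x :=
    intervalIntegral.integral_eq_sub_of_hasDerivAt (fun z _ => hd z) (cf'.intervalIntegrable _ _)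
  have h1 : ∫ z in x..y, f' z ^ 2 ≤ Y := by
    rw [intervalIntegral.integral_of_le hxy]
    exact setIntegral_le_integral i2 (Eventually.of_forall fun z => sq_nonneg _)
  have key : ∀ l : ℝ, 0 ≤ (y - x) * (l * l) + (-2 * (f y - f x)) * l + Y := by
    intro l
    have c1 : Continuous (fun z => f' z ^ 2) := cf'.pow 2
    have c2 : Continuous (fun z => (2 * l) * f' z) := continuous_const.mul cf'
    have h2 : 0 ≤ ∫ z in x..y, (f' z ^ 2 - (2 * l) * f' z + l ^ 2) :=
      intervalIntegral.integral_nonneg hxy fun z _ => by nlinarith [sq_nonneg (f' z - l)]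
    have c3 : Continuous (fun z => f' z ^ 2 - (2 * l) * f' z) := c1.sub c2
    rw [intervalIntegral.integral_add (c3.intervalIntegrable _ _)
      (continuous_const.intervalIntegrable _ _),
      intervalIntegral.integral_sub (c1.intervalIntegrable _ _) (c2.intervalIntegrable _ _),
      intervalIntegral.integral_const_mul, e, intervalIntegral.integral_const, smul_eq_mul] at h2
    nlinarith
  have := discrim_le_zero key
  unfold discrim at this
  nlinarith

lemma anti_of_quad {φ : ℝ → ℝ} {C s t : ℝ} (hst : s ≤ t)
    (h : ∀ p q, s ≤ p → p ≤ q → q ≤ t → φ q - φ p ≤ C * (q - p) ^ 2) : φ t ≤ φ s := by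
  have key : ∀ n : ℕ, 0 < n → φ t - φ s ≤ C * (t - s) ^ 2 / n := by
    intro n hn
    have hn' : (0:ℝ) < n := by exact_mod_cast hn
    set δ := (t - s) / n with hδ
    have hδ0 : 0 ≤ δ := div_nonneg (by linarith) hn'.le
    have hδn : n * δ = t - s := by rw [hδ]; field_simp
    have hi : ∀ i : ℕ, i ≤ n → φ (s + i * δ) - φ s ≤ i * (C * δ ^ 2) := by
      intro i
      induction i with
      | zero => intro _; simp
      | succ k ih =>
        intro hk
        have h1 := ih (by omega)
        have hk' : ((k + 1 : ℕ) : ℝ) ≤ n := by exact_mod_cast hk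
        have h3 : ((k + 1 : ℕ) : ℝ) * δ ≤ t - s := by
          rw [← hδn]; exact mul_le_mul_of_nonneg_right hk' hδ0
        have h2 := h (s + k * δ) (s + (k + 1 : ℕ) * δ) (by nlinarith [Nat.cast_nonneg (α := ℝ) k, mul_nonneg (Nat.cast_nonneg (α := ℝ) k) hδ0])
          (by push_cast; linarith) (by linarith)
        have e : s + ((k + 1 : ℕ) : ℝ) * δ - (s + k * δ) = δ := by push_cast; ring
        rw [e] at h2
        push_cast at h1 h2 ⊢
        linarith
    have := hi n le_rfl
    rw [hδn, add_sub_cancel] at this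
    refine this.trans (le_of_eq ?_)
    rw [hδ]; field_simp
  have lim : Tendsto (fun n : ℕ => C * (t - s) ^ 2 / n) atTop (𝓝 0) :=
    tendsto_const_div_atTop_nhds_zero_nat _
  have : φ t - φ s ≤ 0 := ge_of_tendsto lim (by
    filter_upwards [eventually_gt_atTop 0] with n hn using key n hn)
  linarith

lemma decay {E : ℝ → ℝ} {C K : ℝ} (hC : 0 < C) (h0 : ∀ s, 0 < s → 0 ≤ E s) (hK : ∀ s, 0 < s → E s ≤ K)
    (h : ∀ s1 s2, 0 < s1 → s1 ≤ s2 → (s2 - s1) * E s2 ^ 3 ≤ C * E s1) {s : ℝ} (hs : 0 < s) :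
    s * E s ^ 2 ≤ 3 * C := by
  set S := (fun r => r * E r ^ 2) '' Set.Ioc 0 s with hS
  have hbd : BddAbove S := by
    refine ⟨s * K ^ 2, ?_⟩
    rintro _ ⟨r, hr, rfl⟩
    have h1 := h0 r hr.1
    have h2 := pow_le_pow_left₀ h1 (hK r hr.1) 2
    exact mul_le_mul hr.2 h2 (sq_nonneg _) hs.le
  have hmem : s * E s ^ 2 ∈ S := ⟨s, ⟨hs, le_rfl⟩, rfl⟩
  refine (le_csSup hbd hmem).trans ?_
  by_contra! hcon
  set Y := sSup S
  have hY : 0 < Y := by linarith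
  obtain ⟨_, ⟨r, hr, rfl⟩, hry⟩ := exists_lt_of_lt_csSup ⟨_, hmem⟩ (show 0.97 * Y < Y by linarith)
  have hr0 := hr.1
  have hy2 : r / 2 * E (r / 2) ^ 2 ≤ Y :=
    le_csSup hbd ⟨r / 2, ⟨by linarith, by linarith [hr.2]⟩, rfl⟩
  have h1 := h (r / 2) r (by linarith) (by linarith)
  have h2 := pow_le_pow_left₀ (by have := h0 r hr0; have : 0 ≤ r - r / 2 := by linarith
                                  positivity) h1 2
  simp only at hry
  have h3 : (r * E r ^ 2) ^ 3 ≤ 8 * C ^ 2 * Y := by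
    have e : (r * E r ^ 2) ^ 3 = 4 * r * ((r - r / 2) * E r ^ 3) ^ 2 := by ring
    rw [e]
    calc _ ≤ 4 * r * (C * E (r / 2)) ^ 2 := by gcongr
      _ = 8 * C ^ 2 * (r / 2 * E (r / 2) ^ 2) := by ring
      _ ≤ _ := by gcongr
  have h4 : (0.97 * Y) ^ 3 < (r * E r ^ 2) ^ 3 := pow_lt_pow_left₀ hry (by positivity) (by norm_num)
  have h5 : (3 * C) ^ 2 < Y ^ 2 := pow_lt_pow_left₀ hcon (by positivity) (by norm_num)
  have h6 : 8 * C ^ 2 * Y ≤ 8 / 9 * Y ^ 2 * Y := by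
    apply mul_le_mul_of_nonneg_right _ hY.le
    nlinarith
  nlinarith [pow_pos hY 3]

noncomputable def ew (W : ℝ) (ν a : ℝ → ℝ) (x : ℝ) : ℝ :=
  Real.exp (-(W * ∫ z in (0:ℝ)..x, 1 / (ν z * a z)))
noncomputable def kw (W : ℝ) (ν a : ℝ → ℝ) (x : ℝ) : ℝ := ew W ν a x * (ν x * a x)
noncomputable def mw (W : ℝ) (ν a : ℝ → ℝ) (x : ℝ) : ℝ := ew W ν a x * ν x

section
variable {μ W : ℝ} {ν a T' : ℝ → ℝ}

lemma ew_pos (x : ℝ) : 0 < ew W ν a x := Real.exp_pos _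

lemma ew_deriv (h : Cx μ W ν a T') (x : ℝ) :
    HasDerivAt (ew W ν a) (-(W / (ν x * a x)) * ew W ν a x) x := by
  have c : Continuous (fun z => 1 / (ν z * a z)) :=
    continuous_const.div h.cb fun x => (h.pb x).ne'
  have h1 : HasDerivAt (fun x => ∫ z in (0:ℝ)..x, 1 / (ν z * a z)) (1 / (ν x * a x)) x :=
    intervalIntegral.integral_hasDerivAt_right (c.intervalIntegrable _ _)
      (c.stronglyMeasurableAtFilter _ _) c.continuousAt
  refine (((h1.const_mul W).neg).exp).congr_deriv ?_
  simp only [ew, Pi.neg_apply]; ring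

lemma ew_cont (h : Cx μ W ν a T') : Continuous (ew W ν a) :=
  continuous_iff_continuousAt.2 fun x => (ew_deriv h x).continuousAt

lemma Cx.wt (h : Cx μ W ν a T') : WT μ ν (kw W ν a) (mw W ν a) :=
  ⟨h.hμ, h.cν, h.ν1, h.ν2, (ew_cont h).mul h.cb, fun x => mul_pos (ew_pos x) (h.pb x),
    (ew_cont h).mul h.cν, fun x => mul_pos (ew_pos x) (h.pν x)⟩

lemma to_w (h : Cx μ W ν a T') {V : ℝ → ℝ} {q x : ℝ} (hd : HasDerivAt (fun z => ν z * a z * V z) q x) :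
    HasDerivAt (fun z => kw W ν a z * V z) (ew W ν a x * (q - W * V x)) x := by
  refine (((ew_deriv h x).mul hd).congr_deriv ?_).congr_of_eventuallyEq
    (Eventually.of_forall fun z => ?_)
  · have h1 := (h.pa x).ne'
    have h2 := (h.pν x).ne'
    field_simp; ring
  · simp only [kw, Pi.mul_apply]; ring

lemma of_w (h : Cx μ W ν a T') {V : ℝ → ℝ} {g x : ℝ}
    (hd : HasDerivAt (fun z => kw W ν a z * V z) (mw W ν a x * g) x) :
    HasDerivAt (fun z => ν z * a z * V z) (ν x * g + W * V x) x := by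
  have hp := (ew_pos (W := W) (ν := ν) (a := a) x).ne'
  refine ((hd.div (ew_deriv h x) hp).congr_deriv ?_).congr_of_eventuallyEq
    (Eventually.of_forall fun z => ?_)
  · have h1 := (h.pa x).ne'
    have h2 := (h.pν x).ne'
    simp only [kw, mw]; field_simp; ring
  · have hp := (ew_pos (W := W) (ν := ν) (a := a) z).ne'
    simp only [kw, Pi.div_apply]; field_simp

lemma NS.intu (h : Cx μ W ν a T') {u : ℝ → ℝ → ℝ} (hn : NS μ ν (kw W ν a) (mw W ν a) u) {t : ℝ}
    (ht : 0 < t) : Integrable (u t) ∧ ∫ x, |u t x| ≤ μ := by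
  have hle : ∀ x, |u t x| ≤ μ * (ν x * u t x) := fun x => by
    rw [abs_of_nonneg (hn.nn t ht x)]; exact h.wt.le_mul x (hn.nn t ht x)
  have i := (hn.int ht).const_mul μ
  have i2 : Integrable (u t) := i.mono' (hn.sol.cx ht).aestronglyMeasurable (Eventually.of_forall hle)
  refine ⟨i2, (integral_mono i2.abs i hle).trans ?_⟩
  rw [integral_const_mul, hn.mass t ht, mul_one]

lemma stkDF (h : Cx μ W ν a T') {u : ℝ → ℝ → ℝ} (hn : NS μ ν (kw W ν a) (mw W ν a) u) {η : ℝ}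
    (hη : 0 < η) : ∃ V : ℝ → ℝ → ℝ, ∀ t, 0 < t →
      DF ν a W μ (2 / η) (stk η u t) (V t) (fun x => 1 / η * (u (t + η) x - u t x)) := by
  have hs := hn.stk h.wt hη
  obtain ⟨ut, ux, H⟩ := hs.sol
  refine ⟨ux, fun t ht => ?_⟩
  have ht' : 0 < t + η := by linarith
  have i : Integrable (fun x => ν x * (1 / η * (u (t + η) x - u t x))) := by
    refine (((hn.int ht').sub (hn.int ht)).const_mul (1 / η)).congr (Eventually.of_forall fun x => ?_)
    simp only [Pi.sub_apply]; ring
  refine ⟨continuous_const.mul ((hn.sol.cx ht').sub (hn.sol.cx ht)), fun x => (H t ht x).2.1,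
    fun x => ?_, (hs.intu h ht).1, i, (hs.intu h ht).2, ?_⟩
  · have e := (stk_dt hn hη ht x).unique (H t ht x).1
    rw [e]
    exact of_w h (H t ht x).2.2
  · have i3 : Integrable (fun x => 1 / η * (ν x * u (t + η) x + ν x * u t x)) :=
      ((hn.int ht').add (hn.int ht)).const_mul _
    calc _ ≤ ∫ x, 1 / η * (ν x * u (t + η) x + ν x * u t x) := by
          refine integral_mono i.abs i3 fun x => ?_
          show |ν x * (1 / η * (u (t + η) x - u t x))| ≤ 1 / η * (ν x * u (t + η) x + ν x * u t x)
          have h1 := h.pν x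
          have h2 := hn.nn t ht x
          have h3 := hn.nn _ ht' x
          have e : ν x * (1 / η * (u (t + η) x - u t x)) = 1 / η * ν x * (u (t + η) x - u t x) := by ring
          have e2 : 1 / η * (ν x * u (t + η) x + ν x * u t x) = 1 / η * ν x * (u (t + η) x + u t x) := by ring
          rw [e, e2, abs_mul, abs_of_pos (by positivity : 0 < 1 / η * ν x)]
          refine mul_le_mul_of_nonneg_left ?_ (by positivity)
          rw [abs_le]; constructor <;> linarith
      _ = 2 / η := by
          rw [integral_const_mul, integral_add (hn.int ht') (hn.int ht), hn.mass t ht, hn.mass _ ht']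
          ring

/-- increments of Steklov averages -/
lemma stk_inc {κ m : ℝ → ℝ} {u : ℝ → ℝ → ℝ} (hn : NS μ ν κ m u) {η : ℝ}
    (hη : 0 < η) {t1 s t2 : ℝ} (h1 : 0 < t1) (h2 : t1 ≤ s) (h3 : s ≤ t2) (x : ℝ) :
    |stk η u s x - stk η u t2 x| ≤
      1 / η * ((∫ r in (t1 + η)..(t2 + η), u r x) + ∫ r in t1..t2, u r x) := by
  have hs : 0 < s := by linarith
  have ht2 : 0 < t2 := by linarith
  have e : stk η u s x - stk η u t2 x =
      1 / η * ((∫ r in s..t2, u r x) - ∫ r in (s + η)..(t2 + η), u r x) := by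
    simp only [stk]
    have k1 := intervalIntegral.integral_add_adjacent_intervals
      (hn.ii hs ht2 x) (hn.ii ht2 (show 0 < t2 + η by linarith) x)
    have k2 := intervalIntegral.integral_add_adjacent_intervals
      (hn.ii hs (show 0 < s + η by linarith) x)
      (hn.ii (show 0 < s + η by linarith) (show 0 < t2 + η by linarith) x)
    rw [← mul_sub]; congr 1; linarith
  have mono : ∀ p, 0 < t1 + p → (∫ r in (s + p)..(t2 + p), u r x) ≤ ∫ r in (t1 + p)..(t2 + p), u r x
      ∧ 0 ≤ ∫ r in (s + p)..(t2 + p), u r x := by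
    intro p hp
    constructor
    · have k := intervalIntegral.integral_add_adjacent_intervals
        (hn.ii hp (show 0 < s + p by linarith) x)
        (hn.ii (show 0 < s + p by linarith) (show 0 < t2 + p by linarith) x)
      have : 0 ≤ ∫ r in (t1 + p)..(s + p), u r x :=
        intervalIntegral.integral_nonneg (by linarith) fun r hr => hn.nn r (by linarith [hr.1]) x
      linarith
    · exact intervalIntegral.integral_nonneg (by linarith) fun r hr => hn.nn r (by linarith [hr.1]) x
  have m0 := mono 0 (by linarith)
  have m1 := mono η (by linarith)
  simp only [add_zero] at m0
  rw [e, abs_mul, abs_of_pos (by positivity : 0 < 1 / η)]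
  refine mul_le_mul_of_nonneg_left ?_ (by positivity)
  rw [abs_le]; constructor <;> linarith [m0.1, m0.2, m1.1, m1.2]

lemma rem_bd (h : Cx μ W ν a T') {u : ℝ → ℝ → ℝ} (hn : NS μ ν (kw W ν a) (mw W ν a) u) {η : ℝ}
    (hη : 0 < η) {t1 t2 : ℝ} (h1 : 0 < t1) (h2 : t1 ≤ t2) :
    Integrable (fun x => stk η (stk η u) t2 x - stk η (stk η u) t1 x
      - (t2 - t1) * (1 / η * (stk η u (t2 + η) x - stk η u t2 x))) ∧
    ∫ x, |stk η (stk η u) t2 x - stk η (stk η u) t1 x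
      - (t2 - t1) * (1 / η * (stk η u (t2 + η) x - stk η u t2 x))| ≤ 4 * μ / η ^ 2 * (t2 - t1) ^ 2 := by
  have hU := hn.stk h.wt hη
  have hF := hU.stk h.wt hη
  have ht2 : 0 < t2 := by linarith
  set Q : ℝ → ℝ := fun x => ν x * (∫ r in (t1 + η + η)..(t2 + η + η), u r x)
    + 2 * (ν x * ∫ r in (t1 + η)..(t2 + η), u r x) + ν x * ∫ r in t1..t2, u r x with hQ
  obtain ⟨q1, e1⟩ := hn.mass_int h.wt h1 h2
  obtain ⟨q2, e2⟩ := hn.mass_int h.wt (show 0 < t1 + η by linarith) (show t1 + η ≤ t2 + η by linarith)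
  obtain ⟨q3, e3⟩ := hn.mass_int h.wt (show 0 < t1 + η + η by linarith)
    (show t1 + η + η ≤ t2 + η + η by linarith)
  have q22 : Integrable (fun x => 2 * (ν x * ∫ r in (t1 + η)..(t2 + η), u r x)) := q2.const_mul 2
  have q32 : Integrable (fun x => ν x * (∫ r in (t1 + η + η)..(t2 + η + η), u r x)
    + 2 * (ν x * ∫ r in (t1 + η)..(t2 + η), u r x)) := q3.add q22
  have iQ : Integrable Q := q32.add q1
  have eQ : ∫ x, Q x = 4 * (t2 - t1) := by
    rw [hQ, integral_add q32 q1, integral_add q3 q22, integral_const_mul, e1, e2, e3]; ring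
  have hpt : ∀ x, |stk η (stk η u) t2 x - stk η (stk η u) t1 x
      - (t2 - t1) * (1 / η * (stk η u (t2 + η) x - stk η u t2 x))| ≤ (t2 - t1) / η ^ 2 * μ * Q x := by
    intro x
    have nQ : ∀ p, 0 < t1 + p → 0 ≤ ∫ r in (t1 + p)..(t2 + p), u r x := fun p hp =>
      intervalIntegral.integral_nonneg (by linarith) fun r hr => hn.nn r (by linarith [hr.1]) x
    have n0 := nQ 0 (by linarith)
    have n1 := nQ η (by linarith)
    have n2 := nQ (η + η) (by linarith)
    simp only [add_zero, ← add_assoc] at n0 n2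
    rcases h2.eq_or_lt with rfl | hlt
    · simp
    obtain ⟨ξ, hξ, e⟩ := exists_hasDerivAt_eq_slope (fun s => stk η (stk η u) s x)
      (fun s => 1 / η * (stk η u (s + η) x - stk η u s x)) hlt
      (fun s hs => (stk_dt hU hη (by linarith [hs.1]) x).continuousAt.continuousWithinAt)
      (fun s hs => stk_dt hU hη (by linarith [hs.1]) x)
    rw [eq_div_iff (by linarith)] at e
    have k1 := stk_inc hn hη h1 hξ.1.le hξ.2.le x
    have k2 := stk_inc hn hη (show 0 < t1 + η by linarith) (show t1 + η ≤ ξ + η by linarith [hξ.1])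
      (show ξ + η ≤ t2 + η by linarith [hξ.2]) x
    rw [← e]
    set I0 := ∫ r in t1..t2, u r x
    set I1 := ∫ r in (t1 + η)..(t2 + η), u r x
    set I2 := ∫ r in (t1 + η + η)..(t2 + η + η), u r x
    have hS : I2 + 2 * I1 + I0 ≤ μ * Q x := by
      have e5 : Q x = ν x * (I2 + 2 * I1 + I0) := by simp only [hQ]; ring
      rw [e5]; exact h.wt.le_mul x (by positivity)
    have e4 : 1 / η * (stk η u (ξ + η) x - stk η u ξ x) * (t2 - t1) -
        (t2 - t1) * (1 / η * (stk η u (t2 + η) x - stk η u t2 x)) =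
        (t2 - t1) * (1 / η) * ((stk η u (ξ + η) x - stk η u (t2 + η) x) - (stk η u ξ x - stk η u t2 x)) := by
      ring
    have hdt : 0 < t2 - t1 := by linarith
    rw [e4, abs_mul, abs_of_pos (by positivity : 0 < (t2 - t1) * (1 / η))]
    have k3 := abs_sub (stk η u (ξ + η) x - stk η u (t2 + η) x) (stk η u ξ x - stk η u t2 x)
    have e6 : (t2 - t1) / η ^ 2 * μ * Q x = (t2 - t1) * (1 / η) * (1 / η * (μ * Q x)) := by
      field_simp
    rw [e6]
    refine mul_le_mul_of_nonneg_left ?_ (by positivity)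
    have k4 : 1 / η * (I2 + 2 * I1 + I0) ≤ 1 / η * (μ * Q x) :=
      mul_le_mul_of_nonneg_left hS (by positivity)
    have k5 : 1 / η * (I2 + 2 * I1 + I0) = 1 / η * (I2 + I1) + 1 / η * (I1 + I0) := by ring
    linarith
  have cR : Continuous (fun x => stk η (stk η u) t2 x - stk η (stk η u) t1 x
      - (t2 - t1) * (1 / η * (stk η u (t2 + η) x - stk η u t2 x))) :=
    ((hF.sol.cx ht2).sub (hF.sol.cx h1)).sub (continuous_const.mul (continuous_const.mul
      ((hU.sol.cx (by linarith)).sub (hU.sol.cx ht2))))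
  have iB := iQ.const_mul ((t2 - t1) / η ^ 2 * μ)
  have iR := iB.mono' cR.aestronglyMeasurable (Eventually.of_forall hpt)
  refine ⟨iR, (integral_mono iR.abs iB hpt).trans (le_of_eq ?_)⟩
  rw [integral_const_mul, eQ]
  field_simp

end

section
variable {μ W : ℝ} {ν a T' : ℝ → ℝ}

lemma energy (h : Cx μ W ν a T') {u : ℝ → ℝ → ℝ} (hn : NS μ ν (kw W ν a) (mw W ν a) u) {η : ℝ}
    (hη : 0 < η) : ∃ V : ℝ → ℝ → ℝ, ∃ K : ℝ,
      (∀ t, 0 < t → DF ν a W μ (2 / η) (stk η (stk η u) t) (V t)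
        (fun x => 1 / η * (stk η u (t + η) x - stk η u t x))) ∧
      (∀ t, 0 < t → ∫ x, ν x * stk η (stk η u) t x ^ 2 ≤ K) ∧
      ∀ s1 s2, 0 < s1 → s1 ≤ s2 → 2 * (s2 - s1) * (∫ x, V s2 x ^ 2 / T' x) ≤
        μ ^ 7 * ((∫ x, ν x * stk η (stk η u) s1 x ^ 2) - ∫ x, ν x * stk η (stk η u) s2 x ^ 2) := by
  have hU := hn.stk h.wt hη
  have hF := hU.stk h.wt hη
  obtain ⟨K, K0, hK⟩ := DF.bdd h μ (2 / η)
  obtain ⟨V1, hV1⟩ := stkDF h hn hη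
  obtain ⟨V, hV⟩ := stkDF h hU hη
  set U := stk η u with hUd
  set F := stk η U with hFd
  have bU : ∀ t, 0 < t → ∀ x, |U t x| ≤ K := fun t ht x => (hK _ _ _ (hV1 t ht) x).1
  have bF : ∀ t, 0 < t → ∀ x, |F t x| ≤ K := fun t ht x => (hK _ _ _ (hV t ht) x).1
  set g : ℝ → ℝ → ℝ := fun t x => 1 / η * (U (t + η) x - U t x) with hg
  set B := 1 / η * (K + K) with hB
  have bg : ∀ t, 0 < t → ∀ x, |g t x| ≤ B := fun t ht x => by
    simp only [hg, hB]
    rw [abs_mul, abs_of_pos (by positivity : 0 < 1 / η)]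
    refine mul_le_mul_of_nonneg_left ?_ (by positivity)
    exact (abs_sub _ _).trans (add_le_add (bU _ (by linarith) x) (bU t ht x))
  obtain ⟨L, L0, hL⟩ := DF.r'bdd h μ (2 / η) B
  set C := 4 * μ / η ^ 2 with hC
  set G : ℝ → ℝ := fun t => ∫ x, V t x ^ 2 / T' x with hG
  set E : ℝ → ℝ := fun t => ∫ x, ν x * F t x ^ 2 with hE
  have iV2 : ∀ t, 0 < t → Integrable (fun x => V t x ^ 2) := fun t ht => (hV t ht).if'2 h
  have iG : ∀ t, 0 < t → Integrable (fun x => V t x ^ 2 / T' x) := fun t ht => by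
    refine ((iV2 t ht).const_mul (μ ^ 5)).mono'
      (h.cr (((hV t ht).cf' h).pow 2)).aestronglyMeasurable (Eventually.of_forall fun x => ?_)
    have := h.br (V t x ^ 2) x
    rwa [abs_of_nonneg (sq_nonneg (V t x))] at this
  have bν : ∀ x, |ν x| ≤ μ := fun x => by rw [abs_of_pos (h.pν x)]; exact h.ν2 x
  have iE : ∀ t, 0 < t → Integrable (fun x => ν x * F t x ^ 2) := fun t ht =>
    int_bmul ((hV t ht).if2 h) h.cν bν
  -- G antitone
  have Ganti : ∀ t1 t2, 0 < t1 → t1 ≤ t2 → G t2 ≤ G t1 := by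
    intro s1 s2 hs1 hs12
    refine anti_of_quad (C := 2 * (L * C)) hs12 fun t1 t2 h1 h12 h2 => ?_
    have ht1 : 0 < t1 := by linarith
    have ht2 : 0 < t2 := by linarith
    obtain ⟨iR, mR⟩ := rem_bd h hn hη ht1 h12
    have d := hV t2 ht2
    have d1 := hV t1 ht1
    have hD : ∀ x, HasDerivAt (fun x => F t2 x - F t1 x) (V t2 x - V t1 x) x := fun x =>
      (d.d1 x).sub (d1.d1 x)
    have cD' : Continuous (fun x => V t2 x - V t1 x) := (d.cf' h).sub (d1.cf' h)
    have iD'2 : Integrable (fun x => (V t2 x - V t1 x) ^ 2) := by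
      refine (((iV2 t2 ht2).const_mul 2).add ((iV2 t1 ht1).const_mul 2)).mono'
        (cD'.pow 2).aestronglyMeasurable (Eventually.of_forall fun x => ?_)
      rw [Real.norm_eq_abs, abs_of_nonneg (sq_nonneg _)]
      simp only [Pi.add_apply]
      nlinarith [sq_nonneg (V t2 x + V t1 x)]
    have iD : Integrable (fun x => F t2 x - F t1 x) := d.i1.sub d1.i1
    obtain ⟨j1, j2, j3⟩ := d.ibp h (bg t2 ht2) hD iD cD' iD'2
    obtain ⟨k1, k2⟩ := d.rpos h (bg t2 ht2)
    have rb := hL _ _ _ d (bg t2 ht2)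
    set r' : ℝ → ℝ := fun x => (g t2 x + W * (V t2 x / T' x)) / (a x * T' x) with hr'
    have cr' : Continuous r' := by
      have cr := h.cr (d.cf' h)
      have cw : Continuous (fun x => g t2 x + W * (V t2 x / T' x)) := d.cg.add (continuous_const.mul cr)
      exact cw.div (h.ca.mul h.cT) fun x => (mul_pos (h.pa x) (h.pT x)).ne'
    have irR := int_bmul iR cr' rb
    have step1 : G t2 - G t1 ≤ 2 * ∫ x, V t2 x / T' x * (V t2 x - V t1 x) := by
      simp only [hG]
      rw [← integral_sub (iG t2 ht2) (iG t1 ht1), ← integral_const_mul]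
      refine integral_mono ((iG t2 ht2).sub (iG t1 ht1)) (j1.const_mul 2) fun x => ?_
      show V t2 x ^ 2 / T' x - V t1 x ^ 2 / T' x ≤ 2 * (V t2 x / T' x * (V t2 x - V t1 x))
      have hT := h.pT x
      rw [← sub_div, div_mul_eq_mul_div, ← mul_div_assoc]
      refine div_le_div_of_nonneg_right ?_ hT.le
      nlinarith [sq_nonneg (V t2 x - V t1 x)]
    have step2 : ∫ x, r' x * (F t2 x - F t1 x) = (t2 - t1) * (∫ x, r' x * g t2 x)
        + ∫ x, r' x * (F t2 x - F t1 x - (t2 - t1) * g t2 x) := by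
      have k3 : Integrable (fun x => (t2 - t1) * (r' x * g t2 x)) := k1.const_mul _
      rw [← integral_const_mul, ← integral_add k3 irR]
      congr 1; ext x; ring
    have step3 : |∫ x, r' x * (F t2 x - F t1 x - (t2 - t1) * g t2 x)| ≤ L * (C * (t2 - t1) ^ 2) := by
      refine (abs_integral_le_integral_abs).trans ?_
      calc _ ≤ ∫ x, L * |F t2 x - F t1 x - (t2 - t1) * g t2 x| := by
            refine integral_mono irR.abs (iR.abs.const_mul L) fun x => ?_
            show |r' x * (F t2 x - F t1 x - (t2 - t1) * g t2 x)| ≤ L * |F t2 x - F t1 x - (t2 - t1) * g t2 x|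
            rw [abs_mul]
            exact mul_le_mul_of_nonneg_right (rb x) (abs_nonneg _)
        _ ≤ _ := by
            rw [integral_const_mul]
            exact mul_le_mul_of_nonneg_left mR L0
    rw [j3] at step1
    have k4 : 0 ≤ (t2 - t1) * ∫ x, r' x * g t2 x := mul_nonneg (by linarith) k2
    have := (abs_le.1 step3).1
    change G t2 - G t1 ≤ 2 * -∫ x, r' x * (F t2 x - F t1 x) at step1
    rw [step2] at step1
    linarith
  refine ⟨V, K, hV, ?_, ?_⟩
  · intro t ht
    calc ∫ x, ν x * F t x ^ 2 ≤ ∫ x, K * (ν x * F t x) := by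
          refine integral_mono (iE t ht) ((hF.int ht).const_mul K) fun x => ?_
          show ν x * F t x ^ 2 ≤ K * (ν x * F t x)
          have h1 := (le_abs_self _).trans (bF t ht x)
          have h2 := mul_nonneg (h.pν x).le (hF.nn t ht x)
          nlinarith [mul_le_mul_of_nonneg_right h1 h2]
      _ = K := by rw [integral_const_mul, hF.mass t ht, mul_one]
  · intro s1 s2 hs1 hs12
    have hμ := h.pμ
    have key : μ ^ 7 * E s2 + 2 * G s2 * s2 ≤ μ ^ 7 * E s1 + 2 * G s2 * s1 := by
      refine anti_of_quad (φ := fun s => μ ^ 7 * E s + 2 * G s2 * s)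
        (C := μ ^ 7 * (2 * (K * μ * C))) hs12 fun t1 t2 h1 h12 h2 => ?_
      have ht1 : 0 < t1 := by linarith
      have ht2 : 0 < t2 := by linarith
      obtain ⟨iR, mR⟩ := rem_bd h hn hη ht1 h12
      have d := hV t2 ht2
      have d1 := hV t1 ht1
      obtain ⟨e1, e2, e3⟩ := d.energy h
      have irR : Integrable (fun x => (ν x * F t2 x) * (F t2 x - F t1 x - (t2 - t1) * g t2 x)) := by
        refine int_bmul (B := μ * K) iR (h.cν.mul d.cf) fun x => ?_
        rw [abs_mul]; exact mul_le_mul (bν x) (bF t2 ht2 x) (abs_nonneg _) hμ.le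
      have e2' : Integrable (fun x => 2 * (t2 - t1) * (ν x * (F t2 x * g t2 x))) := e2.const_mul _
      have irR' : Integrable (fun x => 2 * ((ν x * F t2 x) * (F t2 x - F t1 x - (t2 - t1) * g t2 x))) :=
        irR.const_mul 2
      have step1 : E t2 - E t1 ≤ 2 * (t2 - t1) * (∫ x, ν x * (F t2 x * g t2 x))
          + 2 * ∫ x, (ν x * F t2 x) * (F t2 x - F t1 x - (t2 - t1) * g t2 x) := by
        simp only [hE]
        rw [← integral_sub (iE t2 ht2) (iE t1 ht1), ← integral_const_mul, ← integral_const_mul,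
          ← integral_add e2' irR']
        refine integral_mono ((iE t2 ht2).sub (iE t1 ht1)) (e2'.add irR') fun x => ?_
        show ν x * F t2 x ^ 2 - ν x * F t1 x ^ 2 ≤ 2 * (t2 - t1) * (ν x * (F t2 x * g t2 x))
          + 2 * ((ν x * F t2 x) * (F t2 x - F t1 x - (t2 - t1) * g t2 x))
        have := mul_nonneg (h.pν x).le (sq_nonneg (F t2 x - F t1 x))
        nlinarith
      have step3 : |∫ x, (ν x * F t2 x) * (F t2 x - F t1 x - (t2 - t1) * g t2 x)| ≤ (μ * K) * (C * (t2 - t1) ^ 2) := by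
        refine (abs_integral_le_integral_abs).trans ?_
        calc _ ≤ ∫ x, (μ * K) * |F t2 x - F t1 x - (t2 - t1) * g t2 x| := by
              refine integral_mono irR.abs (iR.abs.const_mul _) fun x => ?_
              show |(ν x * F t2 x) * (F t2 x - F t1 x - (t2 - t1) * g t2 x)| ≤ (μ * K) * |F t2 x - F t1 x - (t2 - t1) * g t2 x|
              rw [abs_mul]
              refine mul_le_mul_of_nonneg_right ?_ (abs_nonneg _)
              rw [abs_mul]; exact mul_le_mul (bν x) (bF t2 ht2 x) (abs_nonneg _) hμ.le
          _ ≤ _ := by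
              rw [integral_const_mul]
              exact mul_le_mul_of_nonneg_left mR (by positivity)
      have hGb : G t2 ≤ μ ^ 7 * ∫ x, ν x * a x * V t2 x ^ 2 := by
        rw [← integral_const_mul]
        refine integral_mono (iG t2 ht2) (e1.const_mul _) fun x => ?_
        show V t2 x ^ 2 / T' x ≤ μ ^ 7 * (ν x * a x * V t2 x ^ 2)
        rw [div_le_iff₀ (h.pT x)]
        have := one_le_mul_of_one_le_of_one_le (h.b1 x) (h.T1' x)
        nlinarith [mul_le_mul_of_nonneg_right this (sq_nonneg (V t2 x))]
      have hGG := Ganti t2 s2 ht2 h2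
      have k1 := (abs_le.1 step3).2
      change ∫ x, ν x * a x * V t2 x ^ 2 = - ∫ x, ν x * (F t2 x * g t2 x) at e3
      set I := ∫ x, ν x * a x * V t2 x ^ 2
      have e4 : ∫ x, ν x * (F t2 x * g t2 x) = - I := by linarith
      rw [e4] at step1
      have k2 : E t2 - E t1 ≤ -(2 * (t2 - t1) * I) + 2 * ((μ * K) * (C * (t2 - t1) ^ 2)) := by linarith
      have k3 := mul_le_mul_of_nonneg_left k2 (by positivity : 0 ≤ μ ^ 7)
      have k4 : (t2 - t1) * G s2 ≤ (t2 - t1) * (μ ^ 7 * I) :=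
        mul_le_mul_of_nonneg_left (hGG.trans hGb) (by linarith)
      show μ ^ 7 * E t2 + 2 * G s2 * t2 - (μ ^ 7 * E t1 + 2 * G s2 * t1) ≤ _
      nlinarith
    show 2 * (s2 - s1) * G s2 ≤ μ ^ 7 * (E s1 - E s2)
    linarith

/-- The estimate for double Steklov averages. -/
lemma stk_est (h : Cx μ W ν a T') {u : ℝ → ℝ → ℝ} (hn : NS μ ν (kw W ν a) (mw W ν a) u) {η : ℝ}
    (hη : 0 < η) {t : ℝ} (ht : 0 < t) (x x' : ℝ) :
    (stk η (stk η u) t x - stk η (stk η u) t x') ^ 4 * t ^ 3 ≤ 12 * μ ^ 43 * (x - x') ^ 2 ∧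
    stk η (stk η u) t x ^ 8 * t ^ 4 ≤ 1152 * μ ^ 64 := by
  have hU := hn.stk h.wt hη
  have hF := hU.stk h.wt hη
  obtain ⟨V, K, hV, hK, hEG⟩ := energy h hn hη
  set F := stk η (stk η u) with hFd
  set G : ℝ → ℝ := fun t => ∫ x, V t x ^ 2 / T' x with hG
  set E : ℝ → ℝ := fun t => ∫ x, ν x * F t x ^ 2 with hE
  have hμ := h.pμ
  have hμ1 := h.hμ
  have bν : ∀ x, |ν x| ≤ μ := fun x => by rw [abs_of_pos (h.pν x)]; exact h.ν2 x
  have iV2 : ∀ t, 0 < t → Integrable (fun x => V t x ^ 2) := fun t ht => (hV t ht).if'2 h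
  have iF2 : ∀ t, 0 < t → Integrable (fun x => F t x ^ 2) := fun t ht => (hV t ht).if2 h
  have iE : ∀ t, 0 < t → Integrable (fun x => ν x * F t x ^ 2) := fun t ht =>
    int_bmul (iF2 t ht) h.cν bν
  have iG : ∀ t, 0 < t → Integrable (fun x => V t x ^ 2 / T' x) := fun t ht => by
    refine ((iV2 t ht).const_mul (μ ^ 5)).mono'
      (h.cr (((hV t ht).cf' h).pow 2)).aestronglyMeasurable (Eventually.of_forall fun x => ?_)
    have := h.br (V t x ^ 2) x
    rwa [abs_of_nonneg (sq_nonneg (V t x))] at this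
  have E0 : ∀ t, 0 ≤ E t := fun t => integral_nonneg fun x => mul_nonneg (h.pν x).le (sq_nonneg _)
  have G0 : ∀ t, 0 ≤ G t := fun t => integral_nonneg fun x => div_nonneg (sq_nonneg _) (h.pT x).le
  have XE : ∀ t, 0 < t → ∫ x, F t x ^ 2 ≤ μ * E t := fun t ht => by
    rw [← integral_const_mul]
    exact integral_mono (iF2 t ht) ((iE t ht).const_mul μ) fun x => h.wt.le_mul x (sq_nonneg _)
  have EX : ∀ t, 0 < t → E t ≤ μ * ∫ x, F t x ^ 2 := fun t ht => by
    rw [← integral_const_mul]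
    exact integral_mono (iE t ht) ((iF2 t ht).const_mul μ) fun x =>
      mul_le_mul_of_nonneg_right (h.ν2 x) (sq_nonneg _)
  have YG : ∀ t, 0 < t → ∫ x, V t x ^ 2 ≤ μ ^ 5 * G t := fun t ht => by
    rw [← integral_const_mul]
    refine integral_mono (iV2 t ht) ((iG t ht).const_mul _) fun x => ?_
    show V t x ^ 2 ≤ μ ^ 5 * (V t x ^ 2 / T' x)
    rw [← mul_div_assoc, le_div_iff₀ (h.pT x), mul_comm]
    exact mul_le_mul_of_nonneg_right (h.T2 x) (sq_nonneg _)
  have nsh : ∀ t, 0 < t → E t ^ 3 ≤ 4 * μ ^ 12 * G t := fun t ht => by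
    have h1 := nash ((hV t ht).cf' h) (hV t ht).d1 (hV t ht).i1 (hF.nn t ht)
      (μ := μ) (by
        have := (hV t ht).m1
        refine le_trans (le_of_eq ?_) this
        congr 1; ext x; rw [abs_of_nonneg (hF.nn t ht x)]) (iF2 t ht) (iV2 t ht)
    calc E t ^ 3 ≤ (μ * ∫ x, F t x ^ 2) ^ 3 := pow_le_pow_left₀ (E0 t) (EX t ht) 3
      _ = μ ^ 3 * (∫ x, F t x ^ 2) ^ 3 := by ring
      _ ≤ μ ^ 3 * (4 * μ ^ 4 * (μ ^ 5 * G t)) := by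
          refine mul_le_mul_of_nonneg_left (h1.trans ?_) (by positivity)
          exact mul_le_mul_of_nonneg_left (YG t ht) (by positivity)
      _ = _ := by ring
  have dec : ∀ s, 0 < s → s * E s ^ 2 ≤ 3 * (2 * μ ^ 19) := fun s hs => by
    refine decay (by positivity) (fun s _ => E0 s) hK ?_ hs
    intro s1 s2 h1 h2
    have k1 := hEG s1 s2 h1 h2
    have k2 := mul_le_mul_of_nonneg_left (nsh s2 (by linarith)) (by linarith : 0 ≤ s2 - s1)
    have k3 : 2 * (s2 - s1) * G s2 ≤ μ ^ 7 * E s1 := k1.trans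
      (mul_le_mul_of_nonneg_left (by linarith [E0 s2]) (by positivity))
    have k4 := mul_le_mul_of_nonneg_left k3 (by positivity : 0 ≤ 2 * μ ^ 12)
    calc _ ≤ _ := k2
      _ = 2 * μ ^ 12 * (2 * (s2 - s1) * G s2) := by ring
      _ ≤ _ := k4
      _ = _ := by ring
  have hGt : t ^ 3 * G t ^ 2 ≤ 12 * μ ^ 33 := by
    have k1 := hEG (t / 2) t (by linarith) (by linarith)
    have k3 : t * G t ≤ μ ^ 7 * E (t / 2) := by
      have : μ ^ 7 * (E (t / 2) - E t) ≤ μ ^ 7 * E (t / 2) :=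
        mul_le_mul_of_nonneg_left (by linarith [E0 t]) (by positivity)
      have e : 2 * (t - t / 2) * G t = t * G t := by ring
      rw [← e]; exact k1.trans this
    have k4 := pow_le_pow_left₀ (mul_nonneg ht.le (G0 t)) k3 2
    have k5 := dec (t / 2) (by linarith)
    calc t ^ 3 * G t ^ 2 = t * (t * G t) ^ 2 := by ring
      _ ≤ t * (μ ^ 7 * E (t / 2)) ^ 2 := mul_le_mul_of_nonneg_left k4 ht.le
      _ = 2 * μ ^ 14 * (t / 2 * E (t / 2) ^ 2) := by ring
      _ ≤ 2 * μ ^ 14 * (3 * (2 * μ ^ 19)) := mul_le_mul_of_nonneg_left k5 (by positivity)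
      _ = _ := by ring
  have hY0 : 0 ≤ ∫ z, V t z ^ 2 := integral_nonneg fun z => sq_nonneg _
  have hY := YG t ht
  constructor
  · have main : ∀ x x', x' ≤ x → (F t x - F t x') ^ 4 * t ^ 3 ≤ 12 * μ ^ 43 * (x - x') ^ 2 := by
      intro x x' hx
      have k1 := cs_diff ((hV t ht).cf' h) (hV t ht).d1 (iV2 t ht) hx
      have k2 := k1.trans (mul_le_mul_of_nonneg_left hY (by linarith : 0 ≤ x - x'))
      have k3 := pow_le_pow_left₀ (sq_nonneg _) k2 2
      calc (F t x - F t x') ^ 4 * t ^ 3 = ((F t x - F t x') ^ 2) ^ 2 * t ^ 3 := by ring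
        _ ≤ ((x - x') * (μ ^ 5 * G t)) ^ 2 * t ^ 3 := mul_le_mul_of_nonneg_right k3 (by positivity)
        _ = (x - x') ^ 2 * μ ^ 10 * (t ^ 3 * G t ^ 2) := by ring
        _ ≤ (x - x') ^ 2 * μ ^ 10 * (12 * μ ^ 33) := mul_le_mul_of_nonneg_left hGt (by positivity)
        _ = _ := by ring
    rcases le_total x' x with hx | hx
    · exact main x x' hx
    · have := main x' x hx
      calc _ = (F t x' - F t x) ^ 4 * t ^ 3 := by ring
        _ ≤ _ := this
        _ = _ := by ring
  · have k1 := nash_sup ((hV t ht).cf' h) (hV t ht).d1 (iF2 t ht) (iV2 t ht) x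
    have k2 : F t x ^ 4 ≤ 4 * (μ * E t) * (μ ^ 5 * G t) := by
      refine k1.trans ?_
      refine mul_le_mul (mul_le_mul_of_nonneg_left (XE t ht) (by norm_num)) hY hY0 ?_
      have := E0 t
      positivity
    have k3 := pow_le_pow_left₀ (by positivity) k2 2
    have k4 := mul_le_mul (dec t ht) hGt (by positivity) (by positivity)
    calc F t x ^ 8 * t ^ 4 = (F t x ^ 4) ^ 2 * t ^ 4 := by ring
      _ ≤ (4 * (μ * E t) * (μ ^ 5 * G t)) ^ 2 * t ^ 4 := mul_le_mul_of_nonneg_right k3 (by positivity)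
      _ = 16 * μ ^ 12 * (t * E t ^ 2 * (t ^ 3 * G t ^ 2)) := by ring
      _ ≤ 16 * μ ^ 12 * (3 * (2 * μ ^ 19) * (12 * μ ^ 33)) := mul_le_mul_of_nonneg_left k4 (by positivity)
      _ = _ := by ring

end

section
variable {μ W : ℝ} {ν a T' : ℝ → ℝ}

lemma stk_close {κ m : ℝ → ℝ} {v : ℝ → ℝ → ℝ} (hn : NS μ ν κ m v) {η t x c ε : ℝ} (hη : 0 < η)
    (ht : 0 < t) (hc : ∀ s ∈ Set.Icc t (t + η), |v s x - c| ≤ ε) : |stk η v t x - c| ≤ ε := by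
  have ii := hn.ii ht (show 0 < t + η by linarith) x
  have h1 : ‖∫ s in t..(t + η), (v s x - c)‖ ≤ ε * |t + η - t| := by
    apply intervalIntegral.norm_integral_le_of_norm_le_const
    intro s hs
    rw [Set.uIoc_of_le (by linarith)] at hs
    exact hc s ⟨hs.1.le, hs.2⟩
  rw [intervalIntegral.integral_sub ii (continuous_const.intervalIntegrable _ _),
    intervalIntegral.integral_const, smul_eq_mul, add_sub_cancel_left, abs_of_pos hη,
    Real.norm_eq_abs] at h1
  have e : stk η v t x - c = 1 / η * ((∫ s in t..(t + η), v s x) - η * c) := by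
    simp only [stk]; field_simp
  rw [e, abs_mul, abs_of_pos (by positivity : 0 < 1 / η), one_div, inv_mul_le_iff₀ hη]
  linarith

lemma stk_lim (h : Cx μ W ν a T') {u : ℝ → ℝ → ℝ} (hn : NS μ ν (kw W ν a) (mw W ν a) u) {t : ℝ}
    (ht : 0 < t) (x : ℝ) :
    Tendsto (fun η => stk η (stk η u) t x) (𝓝[>] 0) (𝓝 (u t x)) := by
  rw [Metric.tendsto_nhds]
  intro ε hε
  have hc : ContinuousAt (fun s => u s x) t := hn.sol.ct ht x
  obtain ⟨δ, hδ, H⟩ := Metric.continuousAt_iff.1 hc (ε / 2) (by linarith)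
  have : ∀ᶠ η in 𝓝[>] (0:ℝ), η ∈ Set.Ioo 0 (δ / 2) := Ioo_mem_nhdsGT (by linarith)
  filter_upwards [this] with η hη
  rw [Real.dist_eq]
  refine lt_of_le_of_lt ?_ (show ε / 2 < ε by linarith)
  refine stk_close (hn.stk h.wt hη.1) hη.1 ht fun s hs => ?_
  refine stk_close hn hη.1 (by linarith [hs.1]) fun r hr => ?_
  have := H (x := r) (by rw [Real.dist_eq, abs_lt]; constructor <;> linarith [hs.1, hs.2, hr.1, hr.2, hη.2])
  rw [Real.dist_eq] at this
  exact this.le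

lemma u_est (h : Cx μ W ν a T') {u : ℝ → ℝ → ℝ} (hn : NS μ ν (kw W ν a) (mw W ν a) u)
    {t : ℝ} (ht : 0 < t) (x x' : ℝ) :
    (u t x - u t x') ^ 4 * t ^ 3 ≤ 12 * μ ^ 43 * (x - x') ^ 2 ∧
    u t x ^ 8 * t ^ 4 ≤ 1152 * μ ^ 64 := by
  have l1 := stk_lim h hn ht x
  have l2 := stk_lim h hn ht x'
  have hm : ∀ᶠ η in 𝓝[>] (0:ℝ), 0 < η := self_mem_nhdsWithin
  constructor
  · refine le_of_tendsto (((l1.sub l2).pow 4).mul_const (t ^ 3)) ?_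
    filter_upwards [hm] with η hη using (stk_est h hn hη ht x x').1
  · refine le_of_tendsto ((l1.pow 8).mul_const (t ^ 4)) ?_
    filter_upwards [hm] with η hη using (stk_est h hn hη ht x x').2

end

lemma pos3_deriv (s : ℝ) : HasDerivAt (fun s : ℝ => (max s 0) ^ 3) (3 * (max s 0) ^ 2) s := by
  rcases lt_trichotomy s 0 with hs | rfl | hs
  · have : HasDerivAt (fun _ : ℝ => (0:ℝ)) 0 s := hasDerivAt_const s 0
    refine (this.congr_of_eventuallyEq ?_).congr_deriv (by rw [max_eq_right hs.le]; simp)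
    filter_upwards [gt_mem_nhds hs] with r hr
    rw [max_eq_right hr.le]; simp
  · have h1 : HasDerivAt (fun s : ℝ => s ^ 3) 0 0 := (hasDerivAt_pow 3 (0:ℝ)).congr_deriv (by simp)
    rw [hasDerivAt_iff_isLittleO] at h1 ⊢
    refine (Asymptotics.IsBigO.of_bound 1 (Eventually.of_forall fun r => ?_)).trans_isLittleO h1
    simp only [max_self, Real.norm_eq_abs]
    rcases le_total r 0 with hr | hr
    · rw [max_eq_right hr]; simp
    · rw [max_eq_left hr]; simp
  · refine ((hasDerivAt_pow 3 s).congr_of_eventuallyEq ?_).congr_deriv (by rw [max_eq_left hs.le]; simp)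
    filter_upwards [lt_mem_nhds hs] with r hr
    rw [max_eq_left hr.le]

lemma pos2_deriv (s : ℝ) : HasDerivAt (fun s : ℝ => (max s 0) ^ 2) (2 * (max s 0)) s := by
  rcases lt_trichotomy s 0 with hs | rfl | hs
  · have : HasDerivAt (fun _ : ℝ => (0:ℝ)) 0 s := hasDerivAt_const s 0
    refine (this.congr_of_eventuallyEq ?_).congr_deriv (by rw [max_eq_right hs.le]; simp)
    filter_upwards [gt_mem_nhds hs] with r hr
    rw [max_eq_right hr.le]; simp
  · have h1 : HasDerivAt (fun s : ℝ => s ^ 2) 0 0 := (hasDerivAt_pow 2 (0:ℝ)).congr_deriv (by simp)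
    rw [hasDerivAt_iff_isLittleO] at h1 ⊢
    refine (Asymptotics.IsBigO.of_bound 1 (Eventually.of_forall fun r => ?_)).trans_isLittleO h1
    simp only [max_self, Real.norm_eq_abs]
    rcases le_total r 0 with hr | hr
    · rw [max_eq_right hr]; simp; positivity
    · rw [max_eq_left hr]; simp
  · refine ((hasDerivAt_pow 2 s).congr_of_eventuallyEq ?_).congr_deriv (by rw [max_eq_left hs.le]; simp)
    filter_upwards [lt_mem_nhds hs] with r hr
    rw [max_eq_left hr.le]

lemma bump_ineq {cm cM c R σ w Q : ℝ} (h0 : 0 < cm) (h1 : cm ≤ c) (h2 : c ≤ cM) (hR : 0 < R)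
    (hσ : σ ^ 2 ≤ 1) (hQ : Q = 1 - σ ^ 2) :
    -((30 * cM / R ^ 2 + 6 * |w| / R) ^ 2 / (96 * cm / R ^ 2)) * Q ^ 3 + 6 * Q ^ 2 * σ * w / R ≤
      6 * c / R ^ 2 * (4 * Q * σ ^ 2 - Q ^ 2) := by
  have hQ0 : 0 ≤ Q := by linarith
  set b := 30 * cM / R ^ 2 + 6 * |w| / R with hb
  set k := 24 * cm / R ^ 2 with hk
  have hk0 : 0 < k := by positivity
  have ek : 96 * cm / R ^ 2 = 4 * k := by rw [hk]; ring
  rw [ek]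
  have s1 : 0 ≤ b ^ 2 / (4 * k) * Q ^ 2 - b * Q + k := by
    have : b ^ 2 / (4 * k) * Q ^ 2 - b * Q + k = (b * Q - 2 * k) ^ 2 / (4 * k) := by
      field_simp; ring
    rw [this]; positivity
  have s2 : 6 * σ * w / R ≤ 6 * |w| / R := by
    apply div_le_div_of_nonneg_right _ hR.le
    have : |σ| ≤ 1 := by
      rw [← Real.sqrt_sq_eq_abs]; exact Real.sqrt_le_one.2 hσ
    have h3 : σ * w ≤ |w| := by
      calc σ * w ≤ |σ * w| := le_abs_self _
        _ = |σ| * |w| := abs_mul _ _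
        _ ≤ 1 * |w| := mul_le_mul_of_nonneg_right this (abs_nonneg _)
        _ = _ := one_mul _
    linarith
  have s3 : 30 * c / R ^ 2 ≤ 30 * cM / R ^ 2 := by gcongr
  have s4 : k ≤ 24 * c / R ^ 2 := by rw [hk]; gcongr
  have s5 : (30 * c / R ^ 2 + 6 * σ * w / R) * Q ≤ b * Q :=
    mul_le_mul_of_nonneg_right (by linarith) hQ0
  have s6 : 0 ≤ b ^ 2 / (4 * k) * Q ^ 2 - (30 * c / R ^ 2 + 6 * σ * w / R) * Q + 24 * c / R ^ 2 := by
    linarith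
  have s7 := mul_nonneg hQ0 s6
  have hs : σ ^ 2 = 1 - Q := by linarith
  rw [hs]
  have e : 6 * c / R ^ 2 * (4 * Q * (1 - Q) - Q ^ 2) - (-(b ^ 2 / (4 * k)) * Q ^ 3 + 6 * Q ^ 2 * σ * w / R)
      = Q * (b ^ 2 / (4 * k) * Q ^ 2 - (30 * c / R ^ 2 + 6 * σ * w / R) * Q + 24 * c / R ^ 2) := by
    ring
  linarith

set_option maxHeartbeats 2000000 in
lemma pos_spread {μ : ℝ} {ν κ m : ℝ → ℝ} (wt : WT μ ν κ m) {u : ℝ → ℝ → ℝ} (hn : NS μ ν κ m u)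
    {t0 t1 x0 x1 : ℝ} (ht0 : 0 < t0) (ht1 : t0 < t1) (hu : 0 < u t0 x0) : 0 < u t1 x1 := by
  have hjc := hn.jc wt
  have hsm := scl_strictMono wt.cκ wt.pκ
  have hsc := scl_continuous wt.cκ wt.pκ
  set S := scl κ with hS
  have dS : ∀ x, HasDerivAt S (1 / κ x) x := scl_hasDeriv wt.cκ wt.pκ
  -- initial ball
  have hc0 : Continuous (u t0) := hn.sol.cx ht0
  set δ := u t0 x0 / 2 with hδ
  have hδ0 : 0 < δ := by linarith
  obtain ⟨ρ, hρ, Hρ⟩ := Metric.continuousAt_iff.1 hc0.continuousAt δ hδ0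
  set R := min (min (S (x0 + ρ / 2) - S x0) (S x0 - S (x0 - ρ / 2)))
    (min (S (x1 + ρ / 2) - S x1) (S x1 - S (x1 - ρ / 2))) with hRd
  have hR : 0 < R := by
    refine lt_min (lt_min ?_ ?_) (lt_min ?_ ?_) <;> rw [sub_pos] <;> apply hsm <;> linarith
  have R1 : R ≤ S (x0 + ρ / 2) - S x0 := (min_le_left _ _).trans (min_le_left _ _)
  have R2 : R ≤ S x0 - S (x0 - ρ / 2) := (min_le_left _ _).trans (min_le_right _ _)
  have R3 : R ≤ S (x1 + ρ / 2) - S x1 := (min_le_right _ _).trans (min_le_left _ _)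
  have R4 : R ≤ S x1 - S (x1 - ρ / 2) := (min_le_right _ _).trans (min_le_right _ _)
  clear_value R
  set y1 := min x0 x1 - ρ / 2 with hy1
  set y2 := max x0 x1 + ρ / 2 with hy2
  have hy : y1 < y2 := by
    have := min_le_left x0 x1; have := le_max_left x0 x1; linarith
  set w := (S x1 - S x0) / (t1 - t0) with hw
  have hdt : 0 < t1 - t0 := by linarith
  -- bounds on c
  have cc : Continuous (fun x => 1 / (m x * κ x)) :=
    continuous_const.div (wt.cm.mul wt.cκ) fun x => (mul_pos (wt.pm x) (wt.pκ x)).ne'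
  obtain ⟨zm, _, hzm⟩ := isCompact_Icc.exists_isMinOn (Set.nonempty_Icc.2 hy.le) cc.continuousOn
  obtain ⟨zM, _, hzM⟩ := isCompact_Icc.exists_isMaxOn (Set.nonempty_Icc.2 hy.le) cc.continuousOn
  set cm := 1 / (m zm * κ zm) with hcm
  set cM := 1 / (m zM * κ zM) with hcM
  have hcm0 : 0 < cm := one_div_pos.2 (mul_pos (wt.pm zm) (wt.pκ zm))
  set lam := (30 * cM / R ^ 2 + 6 * |w| / R) ^ 2 / (96 * cm / R ^ 2) with hlam
  set σ : ℝ → ℝ → ℝ := fun t x => (S x - S x0 - w * (t - t0)) / R with hσ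
  set Q : ℝ → ℝ → ℝ := fun t x => max (1 - σ t x ^ 2) 0 with hQ
  set B : ℝ → ℝ → ℝ := fun t x => δ * Real.exp (-lam * (t - t0)) * Q t x ^ 3 with hB
  have cσ : Continuous (Function.uncurry σ) := by
    simp only [hσ, Function.uncurry]
    have : Continuous (fun q : ℝ × ℝ => S q.2) := hsc.comp continuous_snd
    fun_prop
  have cB : Continuous (Function.uncurry B) := by
    have h1 : Continuous (fun q : ℝ × ℝ => σ q.1 q.2) := cσ
    simp only [hB, hQ, Function.uncurry]
    fun_prop
  have hQ1 : ∀ t x, Q t x ≤ 1 := fun t x => max_le (by nlinarith [sq_nonneg (σ t x)]) zero_le_one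
  have hQ0 : ∀ t x, 0 ≤ Q t x := fun t x => le_max_right _ _
  -- lateral
  have hxi : ∀ t ∈ Set.Ioo t0 t1, ∃ θ ∈ Set.Icc (0:ℝ) 1, S x0 + w * (t - t0) = (1 - θ) * S x0 + θ * S x1 := by
    intro t ht
    refine ⟨(t - t0) / (t1 - t0), ⟨div_nonneg (by linarith [ht.1]) hdt.le, ?_⟩, ?_⟩
    · rw [div_le_one hdt]; linarith [ht.2]
    · rw [hw]; field_simp; ring
  have Qz : ∀ t x, R ≤ |S x - S x0 - w * (t - t0)| → Q t x = 0 := by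
    intro t x hx
    simp only [hQ, hσ]
    rw [max_eq_right]
    rw [div_pow, sub_nonpos, le_div_iff₀ (by positivity), one_mul]
    rw [← sq_abs (S x - S x0 - w * (t - t0))]
    exact pow_le_pow_left₀ hR.le hx 2
  have lat1 : ∀ t ∈ Set.Ioo t0 t1, Q t y1 = 0 := by
    intro t ht
    obtain ⟨θ, hθ, e⟩ := hxi t ht
    apply Qz
    have k1 : S y1 ≤ S (x0 - ρ / 2) := hsm.monotone (by have := min_le_left x0 x1; linarith)
    have k2 : S y1 ≤ S (x1 - ρ / 2) := hsm.monotone (by have := min_le_right x0 x1; linarith)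
    rw [le_abs]; right
    nlinarith [hθ.1, hθ.2, mul_nonneg hθ.1 (by linarith : 0 ≤ S x1 - R - S y1),
      mul_nonneg (by linarith [hθ.2] : 0 ≤ 1 - θ) (by linarith : 0 ≤ S x0 - R - S y1)]
  have lat2 : ∀ t ∈ Set.Ioo t0 t1, Q t y2 = 0 := by
    intro t ht
    obtain ⟨θ, hθ, e⟩ := hxi t ht
    apply Qz
    have k1 : S (x0 + ρ / 2) ≤ S y2 := hsm.monotone (by have := le_max_left x0 x1; linarith)
    have k2 : S (x1 + ρ / 2) ≤ S y2 := hsm.monotone (by have := le_max_right x0 x1; linarith)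
    rw [le_abs]; left
    nlinarith [hθ.1, hθ.2, mul_nonneg hθ.1 (by linarith : 0 ≤ S y2 - S x1 - R),
      mul_nonneg (by linarith [hθ.2] : 0 ≤ 1 - θ) (by linarith : 0 ≤ S y2 - S x0 - R)]
  -- initial
  have ini : ∀ z, B t0 z ≤ u t0 z := by
    intro z
    by_cases hz : R ≤ |S z - S x0 - w * (t0 - t0)|
    · simp only [hB]; rw [Qz t0 z hz]; simp; exact hn.nn t0 ht0 z
    · push Not at hz
      rw [sub_self, mul_zero, sub_zero, abs_lt] at hz
      have k1 : z < x0 + ρ / 2 := hsm.lt_iff_lt.1 (by linarith : S z < S (x0 + ρ / 2))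
      have k2 : x0 - ρ / 2 < z := hsm.lt_iff_lt.1 (by linarith : S (x0 - ρ / 2) < S z)
      have k3 := Hρ (x := z) (by rw [Real.dist_eq, abs_lt]; constructor <;> linarith)
      rw [Real.dist_eq, abs_lt] at k3
      have k4 : B t0 z ≤ δ := by
        simp only [hB]
        rw [sub_self, mul_zero, Real.exp_zero, mul_one]
        have := pow_le_one₀ (n := 3) (hQ0 t0 z) (hQ1 t0 z)
        nlinarith
      linarith [k3.1]
  set d : ℝ → ℝ → ℝ := fun t x => B t x - u t x with hd
  have cd : ContinuousOn (Function.uncurry d) (Set.Ioo t0 t1 ×ˢ Set.Icc y1 y2) := by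
    intro q hq
    exact (cB.continuousAt.sub (hjc q.1 (by linarith [hq.1.1]) q.2)).continuousWithinAt
  have cBt : ∀ t, Continuous (B t) := fun t => cB.comp (by fun_prop : Continuous fun x : ℝ => (t, x))
  have h0 : Tendsto (fun t => ∫ z in y1..y2, max (d t z) 0) (𝓝[>] t0) (𝓝 0) := by
    have hpos : ∀ᶠ t in 𝓝[>] t0, 0 < t := by
      filter_upwards [self_mem_nhdsWithin] with t (ht : t0 < t); linarith
    have cdd : ∀ t, Continuous (fun z => |B t z - B t0 z|) := fun t => ((cBt t).sub (cBt t0)).abs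
    have cuu : ∀ t, 0 < t → Continuous (fun z => |u t z - u t0 z|) := fun t ht =>
      ((hn.sol.cx ht).sub hc0).abs
    refine init_of_le hy (b := fun t z => |B t z - B t0 z| + |u t z - u t0 z|)
      (g := fun t => (∫ z in y1..y2, |B t z - B t0 z|) + ∫ z in y1..y2, |u t z - u t0 z|) ?_ ?_ ?_ ?_ ?_
    · filter_upwards [hpos] with t ht
      exact ((cBt t).sub (hn.sol.cx ht)).continuousOn
    · filter_upwards [hpos] with t ht
      exact ((cdd t).add (cuu t ht)).continuousOn
    · filter_upwards [hpos] with t ht z _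
      have k1 := le_abs_self (B t z - B t0 z)
      have k2 := neg_abs_le (u t z - u t0 z)
      have k3 := ini z
      refine max_le ?_ (by positivity)
      simp only [hd]; linarith
    · filter_upwards [hpos] with t ht
      rw [intervalIntegral.integral_add ((cdd t).intervalIntegrable _ _)
        ((cuu t ht).intervalIntegrable _ _)]
    · have l1 : Tendsto (fun t => ∫ z in y1..y2, |B t z - B t0 z|) (𝓝[>] t0) (𝓝 0) := by
        have : Continuous (fun t => ∫ z in y1..y2, |B t z - B t0 z|) := by
          apply intervalIntegral.continuous_parametric_intervalIntegral_of_continuous'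
          exact (cB.sub ((cBt t0).comp continuous_snd)).abs
        have k := (this.tendsto t0).mono_left (nhdsWithin_le_nhds (s := Set.Ioi t0))
        simpa using k
      have l2 := (hn.lc wt t0 ht0 y1 y2 hy).mono_left (nhdsWithin_le_nhds (s := Set.Ioi t0))
      simpa using l1.add l2
  have hL : ∀ s ∈ Set.Ioo t0 t1, ∀ x ∈ Set.Ioo y1 y2, LSubAt κ m d s x := by
    intro s hs x hx
    have hs0 : 0 < s := by linarith [hs.1]
    obtain ⟨ut, ux, H⟩ := hn.sol
    have dσx : ∀ z, HasDerivAt (σ s) (1 / κ z / R) z := fun z =>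
      (((dS z).sub_const (S x0)).sub_const (w * (s - t0))).div_const R
    have dσt : HasDerivAt (fun t => σ t x) (-w / R) s := by
      have h1 : HasDerivAt (fun t : ℝ => w * (t - t0)) w s :=
        (((hasDerivAt_id s).sub_const t0).const_mul w).congr_deriv (by simp)
      exact ((h1.const_sub (S x - S x0)).div_const R)
    have dqx : ∀ z, HasDerivAt (fun z => 1 - σ s z ^ 2) (-(2 * σ s z * (1 / κ z / R))) z := fun z =>
      (((dσx z).pow 2).const_sub 1).congr_deriv (by simp)
    have dqt : HasDerivAt (fun t => 1 - σ t x ^ 2) (-(2 * σ s x * (-w / R))) s :=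
      ((dσt.pow 2).const_sub 1).congr_deriv (by simp)
    have dQ3x : ∀ z, HasDerivAt (fun z => Q s z ^ 3) (3 * Q s z ^ 2 * (-(2 * σ s z * (1 / κ z / R)))) z :=
      fun z => HasDerivAt.comp (h₂ := fun r : ℝ => (max r 0) ^ 3) (h := fun z => 1 - σ s z ^ 2) z (pos3_deriv _) (dqx z)
    have dQ2x : HasDerivAt (fun z => Q s z ^ 2) (2 * Q s x * (-(2 * σ s x * (1 / κ x / R)))) x :=
      HasDerivAt.comp (h₂ := fun r : ℝ => (max r 0) ^ 2) (h := fun z => 1 - σ s z ^ 2) x (pos2_deriv _) (dqx x)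
    have dQ3t : HasDerivAt (fun t => Q t x ^ 3) (3 * Q s x ^ 2 * (-(2 * σ s x * (-w / R)))) s :=
      HasDerivAt.comp (h₂ := fun r : ℝ => (max r 0) ^ 3) (h := fun t => 1 - σ t x ^ 2) s (pos3_deriv _) dqt
    set ex := Real.exp (-lam * (s - t0)) with hex
    have dex : HasDerivAt (fun t => δ * Real.exp (-lam * (t - t0))) (δ * (ex * (-lam))) s := by
      have h1 : HasDerivAt (fun t : ℝ => -lam * (t - t0)) (-lam) s :=
        (((hasDerivAt_id s).sub_const t0).const_mul (-lam)).congr_deriv (by simp)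
      exact h1.exp.const_mul δ
    have hκx := wt.pκ x
    have hmx := wt.pm x
    refine ⟨δ * (ex * (-lam)) * Q s x ^ 3 + δ * ex * (3 * Q s x ^ 2 * (-(2 * σ s x * (-w / R)))) - ut s x,
      fun z => δ * ex * (3 * Q s z ^ 2 * (-(2 * σ s z * (1 / κ z / R)))) - ux s z,
      δ * ex * (6 / (R ^ 2 * κ x) * (4 * Q s x * σ s x ^ 2 - Q s x ^ 2)) - m x * ut s x, ?_, ?_, ?_, ?_⟩
    · exact (dex.mul dQ3t).sub (H s hs0 x).1
    · exact Eventually.of_forall fun z => ((dQ3x z).const_mul (δ * ex)).sub (H s hs0 z).2.1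
    · have h1 := ((dQ2x.mul (dσx x)).const_mul (δ * ex * (-6 / R))).sub (H s hs0 x).2.2
      refine (h1.congr_deriv ?_).congr_of_eventuallyEq (Eventually.of_forall fun z => ?_)
      · field_simp; ring
      · have hκz := (wt.pκ z).ne'
        simp only [Pi.mul_apply, Pi.sub_apply]; field_simp; ring
    · have key : -lam * Q s x ^ 3 + 6 * Q s x ^ 2 * σ s x * w / R ≤
          6 * (1 / (m x * κ x)) / R ^ 2 * (4 * Q s x * σ s x ^ 2 - Q s x ^ 2) := by
        by_cases hq : 1 - σ s x ^ 2 ≤ 0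
        · have : Q s x = 0 := max_eq_right hq
          rw [this]; simp
        · push Not at hq
          exact bump_ineq hcm0 (hzm (Set.Ioo_subset_Icc_self hx)) (hzM (Set.Ioo_subset_Icc_self hx)) hR
            (by linarith) (max_eq_left hq.le)
      have hde : 0 < δ * ex * m x := by positivity
      have k := mul_le_mul_of_nonneg_left key hde.le
      have e1 : δ * ex * m x * (6 * (1 / (m x * κ x)) / R ^ 2 * (4 * Q s x * σ s x ^ 2 - Q s x ^ 2))
          = δ * ex * (6 / (R ^ 2 * κ x) * (4 * Q s x * σ s x ^ 2 - Q s x ^ 2)) := by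
        field_simp
      rw [e1] at k
      have e2 : m x * (δ * (ex * (-lam)) * Q s x ^ 3 + δ * ex * (3 * Q s x ^ 2 * (-(2 * σ s x * (-w / R)))) - ut s x)
        = δ * ex * m x * (-lam * Q s x ^ 3 + 6 * Q s x ^ 2 * σ s x * w / R) - m x * ut s x := by ring
      rw [e2]; linarith
  have hfin : ∀ t ∈ Set.Ioo t0 t1, B t x1 ≤ u t x1 := by
    intro t ht
    have hx1 : x1 ∈ Set.Icc y1 y2 := ⟨by have := min_le_right x0 x1; linarith,
      by have := le_max_right x0 x1; linarith⟩
    have := lemC wt.cκ wt.pκ wt.cm wt.pm hy cd hL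
      (fun s hs => by
        simp only [hd, hB]; rw [lat1 s hs]; have := hn.nn s (by linarith [hs.1]) y1; simp; exact this)
      (fun s hs => by
        simp only [hd, hB]; rw [lat2 s hs]; have := hn.nn s (by linarith [hs.1]) y2; simp; exact this)
      h0 ht hx1
    simp only [hd] at this; linarith
  have hB1 : B t1 x1 ≤ u t1 x1 := by
    have c1 : Tendsto (fun t => B t x1) (𝓝[<] t1) (𝓝 (B t1 x1)) :=
      ((cB.comp (by fun_prop : Continuous fun t : ℝ => (t, x1))).tendsto t1).mono_left nhdsWithin_le_nhds
    have c2 : Tendsto (fun t => u t x1) (𝓝[<] t1) (𝓝 (u t1 x1)) :=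
      Tendsto.mono_left (hn.sol.ct (by linarith) x1) nhdsWithin_le_nhds
    refine le_of_tendsto_of_tendsto c1 c2 ?_
    filter_upwards [Ioo_mem_nhdsLT ht1] with t ht using hfin t ht
  refine lt_of_lt_of_le ?_ hB1
  have : Q t1 x1 = 1 := by
    simp only [hQ, hσ, hw]
    rw [div_mul_cancel₀ _ hdt.ne']; simp
  simp only [hB]; rw [this]; positivity

lemma NS.pos {μ : ℝ} {ν κ m : ℝ → ℝ} (wt : WT μ ν κ m) {u : ℝ → ℝ → ℝ} (hn : NS μ ν κ m u)
    {t : ℝ} (ht : 0 < t) (x : ℝ) : 0 < u t x := by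
  have ht2 : 0 < t / 2 := by linarith
  have : ∃ x0, 0 < u (t / 2) x0 := by
    by_contra! hcon
    have h1 := hn.mass _ ht2
    have : (fun x => ν x * u (t / 2) x) = fun _ => 0 := by
      ext x; rw [le_antisymm (hcon x) (hn.nn _ ht2 x), mul_zero]
    rw [this] at h1; simp at h1
  obtain ⟨x0, hx0⟩ := this
  exact pos_spread wt hn ht2 (by linarith) hx0

lemma fund_ns {μ W : ℝ} {ν a T' : ℝ → ℝ} (h : Cx μ W ν a T') {P : ℝ → ℝ → ℝ → ℝ}
    (hP : IsFundSol ν a W P) (y : ℝ) : NS μ ν (kw W ν a) (mw W ν a) (fun t x => P t x y) := by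
  obtain ⟨h1, h2, h3, -, -⟩ := hP
  refine ⟨?_, h2 y, h3 y⟩
  obtain ⟨ut, ux, q, H⟩ := h1 y
  refine ⟨ut, ux, fun t ht x => ?_⟩
  obtain ⟨a1, a2, a3, a4⟩ := H t ht x
  refine ⟨a1, a2, (to_w h a3).congr_deriv ?_⟩
  have : q t x - W * ux t x = ν x * ut t x := by linarith
  rw [this]; simp only [mw]; ring

lemma fund_meas {μ W : ℝ} {ν a T' : ℝ → ℝ} (h : Cx μ W ν a T') {P : ℝ → ℝ → ℝ → ℝ}
    (hP : IsFundSol ν a W P) {t : ℝ} (ht : 0 < t) (x : ℝ) :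
    AEStronglyMeasurable (fun z => P t x z) volume := by
  have pos : ∀ s, 0 < s → ∀ x y, 0 < P s x y := fun s hs x y => (fund_ns h hP y).pos h.wt hs x
  have hck := hP.2.2.2.2 1 t one_pos ht x 0
  have hhint : Integrable (fun z => ν z * P t x z * P 1 z 0) := by
    by_contra hc
    rw [integral_undef hc] at hck
    exact (pos (t + 1) (by linarith) x 0).ne' hck
  have c1 : Continuous (fun z => P 1 z 0) := (fund_ns h hP 0).sol.cx one_pos
  have c2 : Continuous (fun z => (ν z * P 1 z 0)⁻¹) :=
    (h.cν.mul c1).inv₀ fun z => (mul_pos (h.pν z) (pos 1 one_pos z 0)).ne'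
  have := hhint.1.mul c2.aestronglyMeasurable
  refine this.congr (Eventually.of_forall fun z => ?_)
  have k1 := (h.pν z).ne'
  have k2 := (pos 1 one_pos z 0).ne'
  simp only [Pi.mul_apply]
  field_simp

lemma fund_int {μ W : ℝ} {ν a T' : ℝ → ℝ} (h : Cx μ W ν a T') {P : ℝ → ℝ → ℝ → ℝ}
    (hP : IsFundSol ν a W P) {t : ℝ} (ht : 0 < t) (x : ℝ) {p₀ : ℝ → ℝ} (hp : Integrable p₀) :
    Integrable (fun y => ν y * P t x y * p₀ y) := by
  refine Integrable.bdd_mul (c := μ * (1 + 1152 * μ ^ 64 / t ^ 4)) hp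
    (h.cν.aestronglyMeasurable.mul (fund_meas h hP ht x)) (Eventually.of_forall fun y => ?_)
  have e := (u_est h (fund_ns h hP y) ht x x).2
  have hn := hP.2.1 y t ht x
  have hν := h.pν y
  have t4 : 0 < t ^ 4 := by positivity
  rw [Real.norm_of_nonneg (mul_nonneg hν.le hn)]
  have e2 : P t x y ^ 8 ≤ 1152 * μ ^ 64 / t ^ 4 := by rw [le_div_iff₀ t4]; exact e
  have e3 : P t x y ≤ 1 + 1152 * μ ^ 64 / t ^ 4 := by
    rcases le_or_gt (P t x y) 1 with h1 | h1
    · have : 0 ≤ 1152 * μ ^ 64 / t ^ 4 := le_trans (by positivity) e2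
      linarith
    · have := le_self_pow₀ h1.le (n := 8) (by norm_num)
      linarith
  exact mul_le_mul (h.ν2 y) e3 hn (by linarith [h.hμ])

lemma fund_holder {μ W : ℝ} {ν a T' : ℝ → ℝ} (h : Cx μ W ν a T') {P : ℝ → ℝ → ℝ → ℝ}
    (hP : IsFundSol ν a W P) {t : ℝ} (ht : 0 < t) (x x' y : ℝ) :
    |P t x y - P t x' y| ≤ 12 * μ ^ 43 / t ^ (3 / 4 : ℝ) * |x - x'| ^ (1 / 2 : ℝ) := by
  have e := (u_est h (fund_ns h hP y) ht x x').1
  set D := t ^ (3 / 4 : ℝ) with hD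
  set r := |x - x'| ^ (1 / 2 : ℝ) with hr
  have D0 : 0 < D := Real.rpow_pos_of_pos ht _
  have r0 : 0 ≤ r := Real.rpow_nonneg (abs_nonneg _) _
  have D4 : D ^ 4 = t ^ 3 := by
    rw [hD, ← Real.rpow_natCast, ← Real.rpow_mul ht.le, ← Real.rpow_natCast]; norm_num
  have r4 : r ^ 4 = (x - x') ^ 2 := by
    rw [hr, ← Real.rpow_natCast, ← Real.rpow_mul (abs_nonneg _), ← sq_abs, ← Real.rpow_natCast]
    norm_num
  have hμ1 : (1 : ℝ) ≤ μ ^ 43 := one_le_pow₀ h.hμ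
  have hC : (1 : ℝ) ≤ 12 * μ ^ 43 := by linarith
  have hC4 := le_self_pow₀ hC (n := 4) (by norm_num)
  rw [div_mul_eq_mul_div, le_div_iff₀ D0]
  refine le_of_pow_le_pow_left₀ (n := 4) (by norm_num) (by positivity) ?_
  rw [mul_pow, mul_pow _ r, D4, r4]
  have : |P t x y - P t x' y| ^ 4 = (P t x y - P t x' y) ^ 4 := by
    rw [(by norm_num : (4 : ℕ) = 2 * 2), pow_mul, sq_abs, ← pow_mul]
  rw [this]
  exact e.trans (mul_le_mul_of_nonneg_right hC4 (sq_nonneg _))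

/-- Theorem 1.3, inequality (1.11): for every `μ ≥ 1` there are `C > 0` and
`β ∈ (0,1)` such that the solution `p(t,x) = ∫ ν(y)P(t,x,y)p₀(y)dy` with
`p₀ ∈ L¹ ∩ L∞` satisfies
`|p(t,x) − p(t,x')| ≤ (C/t^((1+β)/2))·‖p₀‖_{L¹}·|x − x'|^β` for all `t > 0`, `x, x'`. -/
theorem spatial_holder_estimate (μ : ℝ) (hμ : 1 ≤ μ) :
    ∃ C : ℝ, 0 < C ∧ ∃ β ∈ Set.Ioo (0 : ℝ) 1,
      ∀ ν a : ℝ → ℝ, Continuous ν → Continuous a →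
      Elliptic μ ν → Elliptic μ a →
      ∀ W : ℝ, 0 ≤ W →
      ∀ T : ℝ → ℝ, IsCorrector μ ν a W T →
      ∀ P : ℝ → ℝ → ℝ → ℝ, IsFundSol ν a W P →
      ∀ p₀ : ℝ → ℝ, Integrable p₀ → (∃ B : ℝ, ∀ x, |p₀ x| ≤ B) →
      ∀ t : ℝ, 0 < t → ∀ x x' : ℝ,
        |(∫ y : ℝ, ν y * P t x y * p₀ y) - ∫ y : ℝ, ν y * P t x' y * p₀ y| ≤
          C / t ^ ((1 + β) / 2) * (∫ y : ℝ, |p₀ y|) * |x - x'| ^ β := by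
  have hμ0 : 0 < μ := by linarith
  refine ⟨μ * (12 * μ ^ 43), by positivity, 1 / 2, ⟨by norm_num, by norm_num⟩, ?_⟩
  intro ν a cν ca eν ea W hW T hT P hP p₀ hp _ t ht x x'
  obtain ⟨-, T', -, dT, bT⟩ := hT
  have h : Cx μ W ν a T' := ⟨hμ, hW, cν, ca, fun x => (eν x).1, fun x => (eν x).2,
    fun x => (ea x).1, fun x => (ea x).2, dT, fun x => (bT x).1, fun x => (bT x).2⟩
  have hexp : ((1 : ℝ) + 1 / 2) / 2 = 3 / 4 := by norm_num
  rw [hexp, ← integral_sub (fund_int h hP ht x hp) (fund_int h hP ht x' hp)]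
  set K := 12 * μ ^ 43 / t ^ (3 / 4 : ℝ) * |x - x'| ^ (1 / 2 : ℝ) with hK
  have e : μ * (12 * μ ^ 43) / t ^ (3 / 4 : ℝ) * (∫ y : ℝ, |p₀ y|) * |x - x'| ^ (1 / 2 : ℝ)
      = ∫ y : ℝ, μ * K * |p₀ y| := by
    rw [integral_const_mul, hK]; ring
  rw [e, ← Real.norm_eq_abs]
  refine norm_integral_le_of_norm_le (hp.abs.const_mul _) (Eventually.of_forall fun y => ?_)
  have k1 := fund_holder h hP ht x x' y
  have e2 : ν y * P t x y * p₀ y - ν y * P t x' y * p₀ y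
      = ν y * (P t x y - P t x' y) * p₀ y := by ring
  rw [e2, Real.norm_eq_abs, abs_mul, abs_mul, abs_of_pos (h.pν y)]
  exact mul_le_mul_of_nonneg_right
    (mul_le_mul (h.ν2 y) k1 (abs_nonneg _) hμ0.le) (abs_nonneg _)
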